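/- The cyclotomic Hecke algebra H_n(v_1,…,v_m;q) is a semisimple k-algebra if and only if the elements q^i v_j − v_k are nonzero in k for all integers i with |i| < n and all 1 ≤ j ≠ k ≤ m, and the elements 1 + q + ⋯ + q^i are nonzero in k for all 1 ≤ i < n. -/

import Mathlib

noncomputable section
open scoped Classical
open scoped Fin.NatCast

namespace Cyclo

/-- The defining relations of the cyclotomic Hecke algebra of type `G(m,1,n)`.
Generator `i : Fin n` corresponds to `a_{i+1}` of the paper. -/
inductive Rel (k : Type) [Field k] (m n : ℕ) (v : Fin m → k) (q : k) :
    FreeAlgebra k (Fin n) → FreeAlgebra k (Fin n) → Prop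
  | cyclo (i : Fin n) (hi : i.1 = 0) :
      Rel k m n v q
        ((List.ofFn fun j : Fin m =>
          (FreeAlgebra.ι k i - algebraMap k (FreeAlgebra k (Fin n)) (v j))).prod) 0
  | quad (i : Fin n) (hi : 1 ≤ i.1) :
      Rel k m n v q
        ((FreeAlgebra.ι k i - algebraMap k (FreeAlgebra k (Fin n)) q) * (FreeAlgebra.ι k i + 1)) 0
  | braid0 (i j : Fin n) (hi : i.1 = 0) (hj : j.1 = 1) :
      Rel k m n v q
        (FreeAlgebra.ι k i * FreeAlgebra.ι k j * FreeAlgebra.ι k i * FreeAlgebra.ι k j)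
        (FreeAlgebra.ι k j * FreeAlgebra.ι k i * FreeAlgebra.ι k j * FreeAlgebra.ι k i)
  | comm (i j : Fin n) (h : i.1 + 2 ≤ j.1) :
      Rel k m n v q (FreeAlgebra.ι k i * FreeAlgebra.ι k j)
        (FreeAlgebra.ι k j * FreeAlgebra.ι k i)
  | braid (i j : Fin n) (hi : 1 ≤ i.1) (hj : j.1 = i.1 + 1) :
      Rel k m n v q
        (FreeAlgebra.ι k j * FreeAlgebra.ι k i * FreeAlgebra.ι k j)
        (FreeAlgebra.ι k i * FreeAlgebra.ι k j * FreeAlgebra.ι k i)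

/-- The cyclotomic Hecke algebra `H_n(v_1,…,v_m;q)` of type `G(m,1,n)`. -/
def CH (k : Type) [Field k] (m n : ℕ) (v : Fin m → k) (q : k) : Type :=
  RingQuot (Rel k m n v q)

instance (k : Type) [Field k] (m n : ℕ) (v : Fin m → k) (q : k) : Ring (CH k m n v q) :=
  inferInstanceAs (Ring (RingQuot (Rel k m n v q)))

instance (k : Type) [Field k] (m n : ℕ) (v : Fin m → k) (q : k) : Algebra k (CH k m n v q) :=
  inferInstanceAs (Algebra k (RingQuot (Rel k m n v q)))

variable (k : Type) [Field k] (m n : ℕ) (v : Fin m → k) (q : k)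

/-- `gen k m n v q t` is the generator `a_{t+1}` (so `gen 0 = a_1`, …, `gen (n-1) = a_n`). -/
def gen [NeZero n] (t : ℕ) : CH k m n v q :=
  RingQuot.mkAlgHom k (Rel k m n v q) (FreeAlgebra.ι k ((t : Fin n)))

/-- `murphyAux k m n v q t` is the Murphy element `L_{t+1}`. -/
def murphyAux [NeZero n] : ℕ → CH k m n v q
  | 0 => gen k m n v q 0
  | t + 1 => q⁻¹ • (gen k m n v q (t + 1) * murphyAux t * gen k m n v q (t + 1))

/-- The Murphy element `L_{i+1}`, for `i : Fin n`. -/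
def murphy [NeZero n] (i : Fin n) : CH k m n v q := murphyAux k m n v q i.1

/-- The product of adjacent transpositions encoded by a list of `0`-based indices:
`t` encodes the transposition `(t, t+1)` (in `0`-based labels), i.e. `s_{t+1}` of the paper. -/
def swapProd [NeZero n] (l : List ℕ) : Equiv.Perm (Fin n) :=
  (l.map fun t => Equiv.swap ((t : Fin n)) (((t + 1 : ℕ) : Fin n))).prod

/-- The corresponding product of generators of the Hecke algebra: the index `t`
(encoding `s_{t+1}`) contributes the generator `a_{t+2} = gen (t+1)`. -/
def genProd [NeZero n] (l : List ℕ) : CH k m n v q :=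
  (l.map fun t => gen k m n v q (t + 1)).prod

/-- `l` is a reduced word for the permutation `w`. -/
def IsReducedWord [NeZero n] (l : List ℕ) (w : Equiv.Perm (Fin n)) : Prop :=
  (∀ t ∈ l, t + 1 < n) ∧ swapProd n l = w ∧
    ∀ l' : List ℕ, (∀ t ∈ l', t + 1 < n) → swapProd n l' = w → l.length ≤ l'.length

/-- `aw` assigns to each permutation `w` the element `a_w` computed from a(ny) reduced word. -/
def IsAW [NeZero n] (aw : Equiv.Perm (Fin n) → CH k m n v q) : Prop :=
  ∀ (w : Equiv.Perm (Fin n)) (l : List ℕ), IsReducedWord n l w → aw w = genProd k m n v q l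



/-- An `m`-multipartition of `n`:  `part c` is the partition `λ^{(c+1)}`
(so `c = m-1` corresponds to the component `λ^{(m)}` of the paper), given by its
(weakly decreasing) list of row lengths `part c 0, part c 1, …`. -/
structure Multipartition (m n : ℕ) where
  part : Fin m → ℕ → ℕ
  mono : ∀ c i, part c (i + 1) ≤ part c i
  bound : ∀ c i, n ≤ i → part c i = 0
  total : (∑ c : Fin m, ∑ i ∈ Finset.range n, part c i) = n

namespace Multipartition

variable {m n : ℕ}

/-- The size `|λ^{(c+1)}|` of a component. -/
def compSize (Λ : Multipartition m n) (c : Fin m) : ℕ :=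
  ∑ i ∈ Finset.range n, Λ.part c i

/-- `|λ^{(1)}| + ⋯ + |λ^{(kk)}|`. -/
def compSizeUpto (Λ : Multipartition m n) (kk : ℕ) : ℕ :=
  ∑ c ∈ Finset.range kk, (if h : c < m then Λ.compSize ⟨c, h⟩ else 0)

/-- The statistic `Σ_{j>k}|λ^{(j)}| + Σ_{j=1}^{l} λ^{(k)}_j` of the dominance order,
where the component `k` (`1`-based) is `c.1 + 1`. -/
def domStat (Λ : Multipartition m n) (c : Fin m) (l : ℕ) : ℕ :=
  (∑ c' ∈ Finset.univ.filter (fun c' : Fin m => c.1 < c'.1), Λ.compSize c') +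
    ∑ j ∈ Finset.range l, Λ.part c j

/-- The dominance order `Λ ⊵ M`. -/
def Dominates (Λ M : Multipartition m n) : Prop :=
  ∀ (c : Fin m) (l : ℕ), M.domStat c l ≤ Λ.domStat c l

/-- Strict dominance `Λ ▷ M`. -/
def StrictDom (Λ M : Multipartition m n) : Prop :=
  Λ.Dominates M ∧ Λ ≠ M

/-- The (0-based) entry of the canonical tableau `t^Λ` in the box in row `i`, column `j`
of component `c`: the boxes are filled row by row, starting with the rows of `λ^{(m)}`,
then those of `λ^{(m-1)}`, and so on. -/
def canonEntry (Λ : Multipartition m n) (c : Fin m) (i j : ℕ) : ℕ :=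
  (∑ c' ∈ Finset.univ.filter (fun c' : Fin m => c.1 < c'.1), Λ.compSize c') +
    (∑ i' ∈ Finset.range i, Λ.part c i') + j

end Multipartition

/-- A standard tableau of shape `Λ`, with (0-based) entries `0, …, n-1`:
`entry c i j` is the entry in the box in row `i`, column `j` of component `c`
(and is normalised to `0` outside the boxes of `Λ`). -/
structure StdTableau {m n : ℕ} (Λ : Multipartition m n) where
  entry : Fin m → ℕ → ℕ → ℕ
  lt_n : ∀ c i j, j < Λ.part c i → entry c i j < n
  inj : ∀ c i j c' i' j', j < Λ.part c i → j' < Λ.part c' i' →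
    entry c i j = entry c' i' j' → (c, i, j) = (c', i', j')
  surj : ∀ x, x < n → ∃ c i j, j < Λ.part c i ∧ entry c i j = x
  row : ∀ c i j, j + 1 < Λ.part c i → entry c i j < entry c i (j + 1)
  col : ∀ c i j, j < Λ.part c (i + 1) → entry c i j < entry c (i + 1) j
  outside : ∀ c i j, ¬ j < Λ.part c i → entry c i j = 0

variable (k : Type) [Field k] (m n : ℕ)

/-- `d` assigns to each standard tableau `T` of each shape `Λ` the permutation `d(T)`
sending, box by box, the entry of the canonical tableau `t^Λ` to the entry of `T`. -/
def IsD [NeZero n] (d : ∀ Λ : Multipartition m n, StdTableau Λ → Equiv.Perm (Fin n)) : Prop :=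
  ∀ (Λ : Multipartition m n) (T : StdTableau Λ) (c : Fin m) (i j : ℕ), j < Λ.part c i →
    d Λ T ((Λ.canonEntry c i j : ℕ) : Fin n) = ((T.entry c i j : ℕ) : Fin n)

/-- Membership in the row stabiliser `S_Λ` of the canonical tableau `t^Λ`. -/
def InRowStab [NeZero n] (Λ : Multipartition m n) (w : Equiv.Perm (Fin n)) : Prop :=
  ∀ (c : Fin m) (i j : ℕ), j < Λ.part c i →
    ∃ j', j' < Λ.part c i ∧
      w ((Λ.canonEntry c i j : ℕ) : Fin n) = ((Λ.canonEntry c i j' : ℕ) : Fin n)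


variable (k : Type) [Field k] (m n : ℕ) (v : Fin m → k) (q : k)

open Multipartition

/-- The element `x_Λ = Σ_{w ∈ S_Λ} a_w`, where `aw` computes the elements `a_w`. -/
def xlam [NeZero n] (aw : Equiv.Perm (Fin n) → CH k m n v q) (Λ : Multipartition m n) :
    CH k m n v q :=
  ∑ w : Equiv.Perm (Fin n), if InRowStab m n Λ w then aw w else 0

/-- `a_kk = n − |λ^{(1)}| − ⋯ − |λ^{(kk)}|`. -/
def aVal (Λ : Multipartition m n) (kk : ℕ) : ℕ := n - Λ.compSizeUpto kk

/-- The element `u_a = ∏_{kk} (L_1 − v_kk)(L_2 − v_kk)⋯(L_{a_kk} − v_kk)`. -/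
def ua [NeZero n] (Λ : Multipartition m n) : CH k m n v q :=
  (List.ofFn fun kk : Fin m =>
    (List.ofFn fun ii : Fin n =>
      if ii.1 < aVal m n Λ (kk.1 + 1) then
        murphy k m n v q ii - algebraMap k (CH k m n v q) (v kk)
      else 1).prod).prod

/-- The element `m_Λ = x_Λ u_a`. -/
def mlam [NeZero n] (aw : Equiv.Perm (Fin n) → CH k m n v q) (Λ : Multipartition m n) :
    CH k m n v q :=
  xlam k m n v q aw Λ * ua k m n v q Λ

/-- The element `m_{st} = a_{d(s)}^* ⬝ m_Λ ⬝ a_{d(t)}`;  here `aw` computes the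
elements `a_w`, `σ` is the `*` anti-involution and `d` computes the permutations `d(t)`. -/
def mst [NeZero n] (aw : Equiv.Perm (Fin n) → CH k m n v q) (σ : CH k m n v q →ₗ[k] CH k m n v q)
    (d : ∀ Λ : Multipartition m n, StdTableau Λ → Equiv.Perm (Fin n))
    {Λ : Multipartition m n} (s t : StdTableau Λ) : CH k m n v q :=
  σ (aw (d Λ s)) * mlam k m n v q aw Λ * aw (d Λ t)

/-- `σ` is the `*` anti-involution: the `k`-linear anti-automorphism fixing the generators. -/
def IsStar [NeZero n] (σ : CH k m n v q →ₗ[k] CH k m n v q) : Prop :=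
  σ 1 = 1 ∧ (∀ x y, σ (x * y) = σ y * σ x) ∧ ∀ t, t < n → σ (gen k m n v q t) = gen k m n v q t

/-- The set of elements `m_{uv}`, for `u, v` standard tableaux of a common shape `M ▷ Λ`. -/
def IsetSet [NeZero n] (aw : Equiv.Perm (Fin n) → CH k m n v q)
    (σ : CH k m n v q →ₗ[k] CH k m n v q)
    (d : ∀ Λ : Multipartition m n, StdTableau Λ → Equiv.Perm (Fin n))
    (Λ : Multipartition m n) : Set (CH k m n v q) :=
  {x | ∃ (M : Multipartition m n) (_ : M.StrictDom Λ) (u v' : StdTableau M),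
    x = mst k m n v q aw σ d u v'}

/-- `I_Λ`, the `k`-span of the `m_{uv}` with shape strictly dominating `Λ`. -/
def Ilam [NeZero n] (aw : Equiv.Perm (Fin n) → CH k m n v q)
    (σ : CH k m n v q →ₗ[k] CH k m n v q)
    (d : ∀ Λ : Multipartition m n, StdTableau Λ → Equiv.Perm (Fin n))
    (Λ : Multipartition m n) : Submodule k (CH k m n v q) :=
  Submodule.span k (IsetSet k m n v q aw σ d Λ)

/-- The image `z_Λ h` of `m_Λ h` in the quotient `H_n / I_Λ`. -/
def zh [NeZero n] (aw : Equiv.Perm (Fin n) → CH k m n v q)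
    (σ : CH k m n v q →ₗ[k] CH k m n v q)
    (d : ∀ Λ : Multipartition m n, StdTableau Λ → Equiv.Perm (Fin n))
    (Λ : Multipartition m n) (h : CH k m n v q) :
    CH k m n v q ⧸ Ilam k m n v q aw σ d Λ :=
  Submodule.Quotient.mk (mlam k m n v q aw Λ * h)

/-- The Specht module `S^Λ = z_Λ ⬝ (H_n/I_Λ)`, as a `k`-submodule of `H_n / I_Λ`. -/
def Specht [NeZero n] (aw : Equiv.Perm (Fin n) → CH k m n v q)
    (σ : CH k m n v q →ₗ[k] CH k m n v q)
    (d : ∀ Λ : Multipartition m n, StdTableau Λ → Equiv.Perm (Fin n))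
    (Λ : Multipartition m n) :
    Submodule k (CH k m n v q ⧸ Ilam k m n v q aw σ d Λ) :=
  Submodule.span k (Set.range (zh k m n v q aw σ d Λ))

/-- The generator `z_Λ h` as an element of the Specht module. -/
def zhS [NeZero n] (aw : Equiv.Perm (Fin n) → CH k m n v q)
    (σ : CH k m n v q →ₗ[k] CH k m n v q)
    (d : ∀ Λ : Multipartition m n, StdTableau Λ → Equiv.Perm (Fin n))
    (Λ : Multipartition m n) (h : CH k m n v q) :
    Specht k m n v q aw σ d Λ :=
  ⟨zh k m n v q aw σ d Λ h, Submodule.subset_span ⟨h, rfl⟩⟩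


end Cyclo


namespace CycloProof

/-- Relations of the affine-type part of the cyclotomic Hecke algebra. -/
structure HD {K A : Type} [Field K] [Ring A] [Algebra K A] (q : K) (n : ℕ) (a : A) (T : ℕ → A) :
    Prop where
  quad : ∀ i, i + 1 < n → T i * T i = (q - 1) • T i + q • (1 : A)
  braid0 : 1 < n → a * T 0 * a * T 0 = T 0 * a * T 0 * a
  commA : ∀ i, 1 ≤ i → i + 1 < n → Commute a (T i)
  comm : ∀ i j, i + 2 ≤ j → j + 1 < n → Commute (T i) (T j)
  braid : ∀ i, i + 2 < n → T (i + 1) * T i * T (i + 1) = T i * T (i + 1) * T i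

variable {K A : Type} [Field K] [Ring A] [Algebra K A] {q : K} {n : ℕ} {a : A} {T : ℕ → A}

/-- The subalgebra generated by the first generators. -/
def Hsub (K : Type) {A : Type} [Field K] [Ring A] [Algebra K A] (a : A) (T : ℕ → A) (i : ℕ) :
    Subalgebra K A :=
  Algebra.adjoin K {x | (1 ≤ i ∧ x = a) ∨ ∃ j, j + 1 < i ∧ x = T j}

lemma Hsub_mono {i j : ℕ} (h : i ≤ j) : Hsub K a T i ≤ Hsub K a T j := by
  apply Algebra.adjoin_mono
  rintro x (⟨h1, rfl⟩ | ⟨l, hl, rfl⟩)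
  · exact Or.inl ⟨h1.trans h, rfl⟩
  · exact Or.inr ⟨l, by omega, rfl⟩

lemma a_mem {i : ℕ} (h : 1 ≤ i) : a ∈ Hsub K a T i := Algebra.subset_adjoin (Or.inl ⟨h, rfl⟩)

lemma T_mem {i j : ℕ} (h : j + 1 < i) : T j ∈ Hsub K a T i :=
  Algebra.subset_adjoin (Or.inr ⟨j, h, rfl⟩)

lemma commute_Hsub {i : ℕ} {x : A} (ha : 1 ≤ i → Commute x a) (hT : ∀ j, j + 1 < i → Commute x (T j))
    {h : A} (hh : h ∈ Hsub K a T i) : Commute x h := by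
  unfold Hsub at hh
  induction hh using Algebra.adjoin_induction with
  | mem y hy =>
    rcases hy with ⟨h1, rfl⟩ | ⟨l, hl, rfl⟩
    · exact ha h1
    · exact hT _ hl
  | algebraMap r => exact (Algebra.commutes r x).symm
  | add y z _ _ h1 h2 => exact h1.add_right h2
  | mul y z _ _ h1 h2 => exact h1.mul_right h2

/-- Jucys–Murphy type sequence. -/
def JM (c : K) (R : ℕ → A) (x : A) : ℕ → A
  | 0 => x
  | i + 1 => c • (R i * JM c R x i * R i)

section jm
variable {c : K} {R : ℕ → A} {x : A}

lemma JM_comm_high (hR : ∀ i j, i + 2 ≤ j → j + 1 < n → Commute (R i) (T j))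
    (hx : ∀ j, 1 ≤ j → j + 1 < n → Commute x (T j)) (i j : ℕ) (hij : i < j) (hj : j + 1 < n) :
    Commute (JM c R x i) (T j) := by
  induction i with
  | zero => exact hx j hij hj
  | succ i ih =>
    have h1 := hR i j hij hj
    exact ((h1.mul_left (ih (by omega))).mul_left h1).smul_left c

lemma JM_comm_low (hR : ∀ i j, i + 2 ≤ j → j + 1 < n → Commute (R i) (T j))
    (hR' : ∀ i j, i + 2 ≤ j → j + 1 < n → Commute (T i) (R j))
    (hx : ∀ j, 1 ≤ j → j + 1 < n → Commute x (T j))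
    (hb1 : ∀ i, i + 2 < n → T i * (R (i + 1) * R i) = R (i + 1) * R i * T (i + 1))
    (hb2 : ∀ i, i + 2 < n → R i * R (i + 1) * T i = T (i + 1) * (R i * R (i + 1)))
    (i j : ℕ) (hij : j + 2 ≤ i) (hi : i < n) :
    Commute (JM c R x i) (T j) := by
  induction i, hij using Nat.le_induction with
  | base =>
    have h0 : Commute (JM c R x j) (T (j + 1)) :=
      JM_comm_high hR hx j (j + 1) (by omega) (by omega)
    simp only [JM, mul_smul_comm, smul_mul_assoc]
    refine Commute.smul_left (Commute.smul_left ?_ _) _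
    have e : R (j + 1) * (R j * JM c R x j * R j) * R (j + 1)
      = (R (j + 1) * R j) * JM c R x j * (R j * R (j + 1)) := by noncomm_ring
    rw [e]
    show _ * _ = _ * _
    rw [mul_assoc, hb2 j (by omega), ← mul_assoc (T j), ← mul_assoc (T j), hb1 j (by omega)]
    rw [mul_assoc _ (T (j + 1)) (JM c R x j), ← h0.eq]
    noncomm_ring
  | succ i hij ih =>
    have h1 := (hR' j i hij (by omega)).symm
    exact ((h1.mul_left (ih (by omega))).mul_left h1).smul_left c

lemma JM_comm_a (hx : Commute x a)
    (hRa : ∀ j, 1 ≤ j → j + 1 < n → Commute (R j) a)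
    (h1 : 1 < n → Commute (JM c R x 1) a) (i : ℕ) (hi : i < n) :
    Commute (JM c R x i) a := by
  induction i with
  | zero => exact hx
  | succ i ih =>
    rcases Nat.eq_zero_or_pos i with rfl | hpos
    · exact h1 (by omega)
    · have h2 := hRa i hpos (by omega)
      exact ((h2.mul_left (ih (by omega))).mul_left h2).smul_left c

end jm

/-- Inverse of `T i`. -/
def Si (q : K) (T : ℕ → A) (i : ℕ) : A := q⁻¹ • (T i - (q - 1) • (1 : A))

namespace HD
variable (H : HD q n a T) (hq : q ≠ 0)
include H hq

lemma T_Si {i : ℕ} (hi : i + 1 < n) : T i * Si q T i = 1 := by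
  rw [Si, mul_smul_comm, mul_sub, H.quad i hi, mul_smul_comm, mul_one, add_sub_cancel_left,
    smul_smul, inv_mul_cancel₀ hq, one_smul]

lemma Si_T {i : ℕ} (hi : i + 1 < n) : Si q T i * T i = 1 := by
  rw [Si, smul_mul_assoc, sub_mul, H.quad i hi, smul_mul_assoc, one_mul, add_sub_cancel_left,
    smul_smul, inv_mul_cancel₀ hq, one_smul]

omit H in
lemma T_eq (i : ℕ) : T i = q • Si q T i + (q - 1) • (1 : A) := by
  rw [Si, smul_smul, mul_inv_cancel₀ hq, one_smul]; abel

omit H hq in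
lemma Si_comm {x : A} {i : ℕ} (h : Commute x (T i)) : Commute x (Si q T i) := by
  unfold Si
  exact (h.sub_right ((Commute.one_right x).smul_right _)).smul_right _

lemma hb1T (i : ℕ) (hi : i + 2 < n) :
    T i * (T (i + 1) * T i) = T (i + 1) * T i * T (i + 1) := by
  rw [H.braid i hi]; noncomm_ring

lemma hb2T (i : ℕ) (hi : i + 2 < n) :
    T i * T (i + 1) * T i = T (i + 1) * (T i * T (i + 1)) := by
  rw [← H.braid i hi]; noncomm_ring

lemma hb1S (i : ℕ) (hi : i + 2 < n) :
    T i * (Si q T (i + 1) * Si q T i) = Si q T (i + 1) * Si q T i * T (i + 1) := by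
  have h1 := H.T_Si hq (i := i) (by omega)
  have h2 := H.Si_T hq (i := i) (by omega)
  have h3 := H.T_Si hq (i := i + 1) (by omega)
  have h4 := H.Si_T hq (i := i + 1) (by omega)
  have hb := H.braid i hi
  calc T i * (Si q T (i + 1) * Si q T i)
      = (Si q T (i + 1) * Si q T i) * (T i * T (i + 1)) * T i * (Si q T (i + 1) * Si q T i) := by
        have : Si q T (i + 1) * Si q T i * (T i * T (i + 1)) = 1 := by
          rw [mul_assoc, ← mul_assoc (Si q T i), h2, one_mul, h4]
        rw [this, one_mul]
    _ = (Si q T (i + 1) * Si q T i) * (T i * T (i + 1) * T i) * (Si q T (i + 1) * Si q T i) := by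
        noncomm_ring
    _ = (Si q T (i + 1) * Si q T i) * (T (i + 1) * T i * T (i + 1)) *
          (Si q T (i + 1) * Si q T i) := by rw [hb]
    _ = (Si q T (i + 1) * Si q T i) * T (i + 1) * (T i * (T (i + 1) * Si q T (i + 1)) * Si q T i) := by
        noncomm_ring
    _ = _ := by rw [h3, mul_one, h1, mul_one]

lemma hb2S (i : ℕ) (hi : i + 2 < n) :
    Si q T i * Si q T (i + 1) * T i = T (i + 1) * (Si q T i * Si q T (i + 1)) := by
  have h1 := H.T_Si hq (i := i) (by omega)
  have h2 := H.Si_T hq (i := i) (by omega)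
  have h3 := H.T_Si hq (i := i + 1) (by omega)
  have h4 := H.Si_T hq (i := i + 1) (by omega)
  have hb := H.braid i hi
  calc Si q T i * Si q T (i + 1) * T i
      = (Si q T i * Si q T (i + 1)) * (T i * ((T (i + 1) * (T i * Si q T i)) * Si q T (i + 1))) := by
        rw [h1, mul_one, h3, mul_one]
    _ = (Si q T i * Si q T (i + 1)) * (T i * T (i + 1) * T i) * (Si q T i * Si q T (i + 1)) := by
        noncomm_ring
    _ = (Si q T i * Si q T (i + 1)) * (T (i + 1) * T i * T (i + 1)) *
          (Si q T i * Si q T (i + 1)) := by rw [hb]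
    _ = (Si q T i * ((Si q T (i + 1) * T (i + 1)) * T i)) * T (i + 1) *
          (Si q T i * Si q T (i + 1)) := by noncomm_ring
    _ = _ := by rw [h4, one_mul, h2, one_mul]

end HD

/-- The Murphy elements. -/
abbrev LL (q : K) (a : A) (T : ℕ → A) : ℕ → A := JM q⁻¹ T a
/-- The dual Murphy elements. -/
abbrev ZZ (q : K) (z : A) (T : ℕ → A) : ℕ → A := JM q (Si q T) z

namespace HD
variable (H : HD q n a T) (hq : q ≠ 0)
include H

lemma L_high {i j : ℕ} (hij : i < j) (hj : j + 1 < n) : Commute (LL q a T i) (T j) :=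
  JM_comm_high H.comm H.commA i j hij hj

include hq
lemma L_low {i j : ℕ} (hij : j + 2 ≤ i) (hj : i < n) : Commute (LL q a T i) (T j) :=
  JM_comm_low H.comm H.comm H.commA (H.hb1T hq) (H.hb2T hq) i j hij hj

omit hq in
lemma L_a {i : ℕ} (hi : i < n) : Commute (LL q a T i) a := by
  refine JM_comm_a (Commute.refl a) (fun j hj hj' => (H.commA j hj hj').symm) (fun h => ?_) i hi
  simp only [JM]
  refine Commute.smul_left ?_ _
  have := H.braid0 h
  show _ * _ = _ * _
  rw [← this]; noncomm_ring

omit hq in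
lemma LT_aux {i : ℕ} (hq : q ≠ 0) (hi : i + 1 < n) :
    LL q a T i * T i = T i * LL q a T (i + 1) - (q - 1) • LL q a T (i + 1) := by
  have h := H.quad i hi
  have : T i * LL q a T (i + 1) = q⁻¹ • (T i * T i * (LL q a T i * T i)) := by
    simp only [JM]; rw [mul_smul_comm]; congr 1; noncomm_ring
  rw [this, h]
  simp only [JM, add_mul, smul_mul_assoc, smul_add, smul_smul, one_mul, ← mul_assoc]
  rw [inv_mul_cancel₀ hq, one_smul, mul_comm q⁻¹]; abel

omit hq in
lemma LT_aux2 {i : ℕ} (hq : q ≠ 0) (hi : i + 1 < n) :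
    LL q a T (i + 1) * T i = T i * LL q a T i + (q - 1) • LL q a T (i + 1) := by
  have h := H.quad i hi
  have : LL q a T (i + 1) * T i = q⁻¹ • (T i * LL q a T i * (T i * T i)) := by
    simp only [JM]; rw [smul_mul_assoc]; congr 1; noncomm_ring
  rw [this, h]
  simp only [JM, mul_add, mul_smul_comm, smul_add, smul_smul, mul_one, ← mul_assoc]
  rw [inv_mul_cancel₀ hq, one_smul, mul_comm q⁻¹]; abel

section Z
variable {z : A} (hz1 : z * a = 0) (hz2 : a * z = 0)
  (hzc : ∀ y, Commute a y → Commute z y)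
include hzc

lemma Z_high {i j : ℕ} (hij : i < j) (hj : j + 1 < n) : Commute (ZZ q z T i) (T j) :=
  JM_comm_high (fun i j h h' => (Si_comm (H.comm i j h h').symm).symm)
    (fun j hj hj' => hzc _ (H.commA j hj hj')) i j hij hj

lemma Z_low {i j : ℕ} (hij : j + 2 ≤ i) (hj : i < n) : Commute (ZZ q z T i) (T j) :=
  JM_comm_low (fun i j h h' => (Si_comm (H.comm i j h h').symm).symm)
    (fun i j h h' => (Si_comm (H.comm i j h h')))
    (fun j hj hj' => hzc _ (H.commA j hj hj')) (H.hb1S hq) (H.hb2S hq) i j hij hj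

include hz1 hz2
lemma Z_a {i : ℕ} (hi : i < n) : Commute (ZZ q z T i) a := by
  refine JM_comm_a (hzc a (Commute.refl a)) (fun j hj hj' => (Si_comm (H.commA j hj hj')).symm)
    (fun h => ?_) i hi
  simp only [JM]
  refine Commute.smul_left ?_ _
  have hTS := H.T_Si hq (i := 0) h
  have hST := H.Si_T hq (i := 0) h
  have hB : Commute a (T 0 * a * T 0) := by
    have := H.braid0 h
    show _ * _ = _ * _
    rw [← this]; noncomm_ring
  have hB2 := (hzc _ hB).eq
  -- S z T a = a T z S
  have e : Si q T 0 * z * T 0 * a = a * T 0 * z * Si q T 0 := by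
    calc Si q T 0 * z * T 0 * a = Si q T 0 * z * T 0 * a * (T 0 * Si q T 0) := by rw [hTS, mul_one]
      _ = Si q T 0 * (z * (T 0 * a * T 0)) * Si q T 0 := by noncomm_ring
      _ = (Si q T 0 * T 0) * a * T 0 * z * Si q T 0 := by rw [hB2]; noncomm_ring
      _ = _ := by rw [hST, one_mul]
  have l : Si q T 0 * z * T 0 * a = q • (Si q T 0 * z * Si q T 0 * a) := by
    conv_lhs => rw [T_eq (T := T) hq 0]
    rw [mul_add, add_mul, mul_smul_comm, smul_mul_assoc, mul_smul_comm, smul_mul_assoc, mul_one,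
      mul_assoc (Si q T 0) z a, hz1, mul_zero, smul_zero, add_zero]
  have r : a * T 0 * z * Si q T 0 = q • (a * (Si q T 0 * z * Si q T 0)) := by
    conv_lhs => rw [T_eq (T := T) hq 0]
    rw [mul_add, add_mul, add_mul, mul_smul_comm, smul_mul_assoc, mul_smul_comm, smul_mul_assoc,
      mul_one, smul_mul_assoc,smul_mul_assoc, hz2, zero_mul, smul_zero, add_zero]
    congr 1; noncomm_ring
  rw [l, r] at e
  have := congrArg (fun y => q⁻¹ • y) e
  show _ * _ = _ * _
  simpa [smul_smul, hq] using this

end Z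

lemma ZT_aux {z : A} {i : ℕ} (hi : i + 1 < n) :
    ZZ q z T i * T i = T i * ZZ q z T (i + 1) + (q - 1) • ZZ q z T i := by
  have h := H.T_Si hq hi
  have : T i * ZZ q z T (i + 1) = q • (T i * Si q T i * (ZZ q z T i * Si q T i)) := by
    simp only [JM]; rw [mul_smul_comm]; congr 1; noncomm_ring
  rw [this, h, one_mul]
  conv_lhs => rw [T_eq (T := T) hq i]
  rw [mul_add, mul_smul_comm, mul_smul_comm, mul_one]

lemma ZT_aux2 {z : A} {i : ℕ} (hi : i + 1 < n) :
    ZZ q z T (i + 1) * T i = T i * ZZ q z T i - (q - 1) • ZZ q z T i := by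
  have h := H.Si_T hq hi
  have : ZZ q z T (i + 1) * T i = q • (Si q T i * ZZ q z T i * (Si q T i * T i)) := by
    simp only [JM]; rw [smul_mul_assoc]; congr 1; noncomm_ring
  rw [this, h, mul_one]
  conv_rhs => rw [T_eq (T := T) hq i]
  rw [add_mul, smul_mul_assoc, smul_mul_assoc, one_mul]; abel

end HD
end CycloProof


namespace CycloProof
section comb
variable {m : ℕ}

/-- Labels: a colour and a content. -/
abbrev Lab (m : ℕ) := Fin m × ℤ

/-- The label `x` is addable to `s`. -/
def Alw (s : List (Lab m)) (x : Lab m) : Prop :=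
  s.count (x.1, x.2 - 1) = s.count x + (if 0 < x.2 then 1 else 0) ∧
  s.count (x.1, x.2 + 1) = s.count x + (if x.2 < 0 then 1 else 0)

/-- Valid sequences (standard tableaux). -/
def Vld : List (Lab m) → Prop
  | [] => True
  | b :: s => Alw s b ∧ Vld s

lemma cnt_cons (j : Fin m) (c : ℤ) (b : Lab m) (s : List (Lab m)) :
    (b :: s).count (j, c) = s.count (j, c) + if b.1 = j ∧ b.2 = c then 1 else 0 := by
  rw [List.count_cons]
  congr 1
  obtain ⟨b1, b2⟩ := b
  simp [Prod.ext_iff]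

lemma shape {s : List (Lab m)} (hs : Vld s) (j : Fin m) (c : ℤ) :
    (0 ≤ c → s.count (j, c + 1) ≤ s.count (j, c) ∧ s.count (j, c) ≤ s.count (j, c + 1) + 1) ∧
    (c ≤ 0 → s.count (j, c - 1) ≤ s.count (j, c) ∧ s.count (j, c) ≤ s.count (j, c - 1) + 1) := by
  induction s generalizing c with
  | nil => simp
  | cons b s ih =>
    obtain ⟨⟨h1, h2⟩, h3⟩ := hs
    have ih' := ih h3 c
    simp only [cnt_cons]
    obtain ⟨j', d⟩ := b
    simp only at h1 h2 ⊢
    by_cases hj : j' = j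
    · subst hj
      simp only [true_and]
      by_cases e1 : d = c
      · subst e1
        split_ifs at * <;> omega
      · by_cases e2 : d = c + 1
        · subst e2
          simp only [add_sub_cancel_right] at h1
          split_ifs at * <;> omega
        · by_cases e3 : d = c - 1
          · subst e3
            simp only [sub_add_cancel] at h2
            split_ifs at * <;> omega
          · simp only [e1, e2, e3, if_false, add_zero]
            exact ih'
    · simp only [hj, false_and, if_false, add_zero]
      exact ih'

lemma not_both {s : List (Lab m)} {j : Fin m} {c : ℤ} (h : Alw s (j, c)) (h' : Alw s (j, c + 1)) :
    False := by
  obtain ⟨h1, h2⟩ := h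
  obtain ⟨h3, h4⟩ := h'
  simp only [add_sub_cancel_right] at *
  split_ifs at * <;> omega

/-- adjacency of labels -/
def Adj (x y : Lab m) : Prop := x.1 = y.1 ∧ (x.2 = y.2 + 1 ∨ y.2 = x.2 + 1)

lemma Adj.symm {x y : Lab m} (h : Adj x y) : Adj y x := ⟨h.1.symm, h.2.symm⟩

lemma not_adj {s : List (Lab m)} {x y : Lab m} (h : Alw s x) (h' : Alw s y) : ¬ Adj x y := by
  rintro ⟨h1, h2⟩
  obtain ⟨j, c⟩ := x
  obtain ⟨j', c'⟩ := y
  simp only at h1 h2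
  subst h1
  rcases h2 with rfl | rfl
  · exact not_both h' h
  · exact not_both h h'

lemma Alw_cons {s : List (Lab m)} {x y : Lab m} (h : Alw s x) (h' : Alw s y) (hne : x ≠ y) :
    Alw (x :: s) y := by
  have hadj := not_adj h h'
  obtain ⟨j, c⟩ := x
  obtain ⟨j', c'⟩ := y
  obtain ⟨h3, h4⟩ := h'
  have e0 : ¬ (j = j' ∧ c = c') := fun e => hne (by rw [e.1, e.2])
  have e1 : ¬ (j = j' ∧ c = c' - 1) := fun e => hadj ⟨e.1, Or.inr (by simp [e.2])⟩
  have e2 : ¬ (j = j' ∧ c = c' + 1) := fun e => hadj ⟨e.1, Or.inl (by simp [e.2])⟩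
  simp only [Alw, cnt_cons, e0, e1, e2, if_false, add_zero] at *
  exact ⟨h3, h4⟩

lemma Vld.of_append {u s : List (Lab m)} (h : Vld (u ++ s)) : Vld s := by
  induction u with
  | nil => exact h
  | cons b u ih => exact ih h.2

lemma split_last {s : List (Lab m)} {b : Lab m} (h : b ∈ s) :
    ∃ seg rest, s = seg ++ b :: rest ∧ b ∉ seg := by
  induction s with
  | nil => simp at h
  | cons x s ih =>
    by_cases e : x = b
    · exact ⟨[], s, by simp [e], by simp⟩
    · have : b ∈ s := by
        rcases List.mem_cons.1 h with h | h
        · exact absurd h.symm e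
        · exact h
      obtain ⟨seg, rest, h1, h2⟩ := ih this
      exact ⟨x :: seg, rest, by simp [h1], by simp [h2, Ne.symm e]⟩

lemma notAlw_split {s : List (Lab m)} {c b : Lab m} (hs : Vld s) (hc : Alw s c) (hbc : Adj b c)
    (hb : ¬ Alw (c :: s) b) :
    ∃ seg rest, s = seg ++ b :: rest ∧ ∀ d ∈ seg, d ≠ b ∧ ¬ Adj d b := by
  obtain ⟨j, c⟩ := c
  obtain ⟨j', b⟩ := b
  obtain ⟨e, hbc⟩ := hbc
  simp only at e hbc
  subst e
  have key : s.count (j', b - 1) + 1 = s.count (j', b) + (if 0 < b then 1 else 0) ∧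
      s.count (j', b + 1) + 1 = s.count (j', b) + (if b < 0 then 1 else 0) := by
    obtain ⟨h1, h2⟩ := hc
    have sh := shape hs j' b
    have sh1 := shape hs j' (b + 1)
    have sh2 := shape hs j' (b - 1)
    simp only [add_sub_cancel_right, sub_add_cancel] at sh1 sh2
    simp only [Alw, cnt_cons, true_and] at hb h1 h2
    rcases hbc with rfl | rfl
    · simp only [add_sub_cancel_right] at *
      split_ifs at * <;> omega
    · simp only [add_sub_cancel_right] at *
      split_ifs at * <;> omega
  have hmem : ((j', b) : Lab m) ∈ s := by
    rw [← List.count_pos_iff]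
    split_ifs at key <;> omega
  obtain ⟨seg, rest, h1, h2⟩ := split_last hmem
  refine ⟨seg, rest, h1, fun d hd => ⟨fun e => h2 (e ▸ hd), ?_⟩⟩
  subst h1
  have hv := (Vld.of_append hs).1
  obtain ⟨h3, h4⟩ := hv
  simp only [List.count_append, cnt_cons, true_and] at key h3 h4
  have z0 : seg.count (j', b) = 0 := List.count_eq_zero.2 h2
  have z1 : seg.count (j', b - 1) = 0 := by
    split_ifs at * <;> omega
  have z2 : seg.count (j', b + 1) = 0 := by
    split_ifs at * <;> omega
  rw [List.count_eq_zero] at z1 z2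
  rintro ⟨e, f⟩
  obtain ⟨jd, dd⟩ := d
  simp only at e f
  subst e
  rcases f with rfl | rfl
  · exact z2 hd
  · simp only [add_sub_cancel_right] at z1
    exact z1 hd

/-- number of labels of a colour -/
def ccnt (s : List (Lab m)) (j : Fin m) : ℕ := s.countP (fun x => decide (x.1 = j))

lemma ccnt_cons (b : Lab m) (s : List (Lab m)) (j : Fin m) :
    ccnt (b :: s) j = ccnt s j + if b.1 = j then 1 else 0 := by
  simp [ccnt, List.countP_cons]

lemma ccnt_le (s : List (Lab m)) (j : Fin m) : ccnt s j ≤ s.length := List.countP_le_length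

lemma ccnt_add_le (s : List (Lab m)) {j j' : Fin m} (h : j ≠ j') :
    ccnt s j + ccnt s j' ≤ s.length := by
  induction s with
  | nil => simp [ccnt]
  | cons b s ih =>
    rw [ccnt_cons, ccnt_cons, List.length_cons]
    by_cases h1 : b.1 = j
    · have : b.1 ≠ j' := fun e => h (h1.symm.trans e)
      simp only [h1, if_true, h, if_false]; omega
    · simp only [h1, if_false]; split_ifs <;> omega

lemma bounds {s : List (Lab m)} (hs : Vld s) (j : Fin m) :
    ∃ lo hi : ℤ, lo ≤ 0 ∧ 0 ≤ hi ∧ hi ≤ ccnt s j ∧ - lo ≤ ccnt s j ∧ hi - lo ≤ ccnt s j + 1 ∧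
      ∀ c : ℤ, 0 < s.count (j, c) → lo < c ∧ c < hi := by
  induction s with
  | nil => exact ⟨0, 0, by simp [ccnt]⟩
  | cons b s ih =>
    obtain ⟨lo, hi, h1, h2, h3, h4, h5, h6⟩ := ih hs.2
    obtain ⟨⟨a1, a2⟩, hv⟩ := hs
    obtain ⟨jb, x⟩ := b
    simp only [ccnt_cons, cnt_cons]
    by_cases hj : jb = j
    · subst hj
      simp only [if_true, true_and] at *
      have k1 := h6 (x - 1)
      have k2 := h6 (x + 1)
      refine ⟨min lo (x - 1), max hi (x + 1), by omega, by omega, ?_, ?_, ?_, ?_⟩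
      · push_cast; split_ifs at * <;> omega
      · push_cast; split_ifs at * <;> omega
      · push_cast; split_ifs at * <;> omega
      · intro c hc
        by_cases e : x = c
        · subst e; omega
        · have := h6 c (by simpa [e] using hc)
          omega
    · simp only [hj, if_false, false_and, add_zero]
      exact ⟨lo, hi, h1, h2, h3, h4, h5, h6⟩

/-- the label is in the range attached to `s` -/
def InR (s : List (Lab m)) (x : Lab m) : Prop := x ∈ s ∨ Alw s x

lemma InR_bounds {s : List (Lab m)} (hs : Vld s) (j : Fin m) :
    ∃ lo hi : ℤ, hi ≤ ccnt s j ∧ - lo ≤ ccnt s j ∧ hi - lo ≤ ccnt s j + 1 ∧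
      ∀ c : ℤ, InR s (j, c) → lo ≤ c ∧ c ≤ hi := by
  obtain ⟨lo, hi, h1, h2, h3, h4, h5, h6⟩ := bounds hs j
  refine ⟨lo, hi, h3, h4, h5, fun c hc => ?_⟩
  rcases hc with hc | ⟨a1, a2⟩
  · have := h6 c (List.count_pos_iff.2 hc); omega
  · have k1 := h6 (c - 1)
    have k2 := h6 (c + 1)
    simp only at a1 a2
    split_ifs at * <;> omega

lemma InR_same {s : List (Lab m)} (hs : Vld s) {x y : Lab m} (hx : InR s x) (hy : InR s y)
    (h : x.1 = y.1) : (x.2 - y.2).natAbs ≤ s.length + 1 := by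
  obtain ⟨lo, hi, h1, h2, h3, h4⟩ := InR_bounds hs x.1
  have b1 := h4 x.2 hx
  have b2 := h4 y.2 (by rw [h]; exact hy)
  have := ccnt_le s x.1
  omega

lemma InR_diff {s : List (Lab m)} (hs : Vld s) {x y : Lab m} (hx : InR s x) (hy : InR s y)
    (h : x.1 ≠ y.1) : (x.2 - y.2).natAbs ≤ s.length := by
  obtain ⟨lo, hi, h1, h2, h3, h4⟩ := InR_bounds hs x.1
  obtain ⟨lo', hi', h1', h2', h3', h4'⟩ := InR_bounds hs y.1
  have b1 := h4 x.2 hx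
  have b2 := h4' y.2 hy
  have := ccnt_add_le s h
  omega

lemma InR_abs {s : List (Lab m)} (hs : Vld s) {x : Lab m} (hx : InR s x) :
    x.2.natAbs ≤ s.length := by
  obtain ⟨lo, hi, h1, h2, h3, h4⟩ := InR_bounds hs x.1
  have b1 := h4 x.2 hx
  have := ccnt_le s x.1
  omega

end comb
end CycloProof


namespace CycloProof
open Finset

/-- residue -/
def rho {K : Type} [Field K] {m : ℕ} (q : K) (v : Fin m → K) (b : Lab m) : K := v b.1 * q ^ b.2
open Classical in
/-- dual residue -/
noncomputable def zeta {K : Type} [Field K] {m : ℕ} (q : K) (v : Fin m → K) (b : Lab m) : K :=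
  if v b.1 = 0 then q ^ (-b.2) else 0

/-- All the data of a semisimple-parameter situation, `q ≠ 1`. -/
structure Dat (K A : Type) [Field K] [Ring A] [Algebra K A] (m n : ℕ) where
  q : K
  v : Fin m → K
  a : A
  T : ℕ → A
  z : A
  H : HD q n a T
  hq : q ≠ 0
  hn : 1 ≤ n
  hbr : ∀ d : ℕ, 1 ≤ d → d ≤ n → q ^ d ≠ 1
  hsep : ∀ i : ℤ, i.natAbs < n → ∀ j j' : Fin m, j ≠ j' → q ^ i * v j ≠ v j'
  hz1 : z * a = 0
  hz2 : a * z = 0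
  hz : z ∈ Algebra.adjoin K {a}
  dec0 : ∀ x : A, ∃ r : Fin m → A, (∑ j, r j * x) = x ∧ ∀ j, r j ∈ Algebra.adjoin K {a} ∧
    a * (r j * x) = v j • (r j * x) ∧ z * (r j * x) = zeta q v (j, 0) • (r j * x)

/-- Independence of simultaneous eigenvectors. -/
lemma indep {K A : Type} [Field K] [Ring A] [Algebra K A] {ι : Type} [DecidableEq ι]
    (F : Finset ι) (w : A) (y : ι → A)
    (h : w + ∑ t ∈ F, y t = 0)
    (hs : ∀ t ∈ F, ∃ X : A, ∃ f : ι → K, ∃ fw : K, X * w = fw • w ∧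
      (∀ u ∈ F, X * y u = f u • y u) ∧ f t ≠ fw) : w = 0 := by
  induction F using Finset.induction_on generalizing w y with
  | empty => simpa using h
  | insert t F ht ih =>
    obtain ⟨X, f, fw, h1, h2, h3⟩ := hs t (mem_insert_self _ _)
    have key : (fw - f t) • w + ∑ u ∈ F, (f u - f t) • y u = 0 := by
      have e1 : X * (w + ∑ u ∈ insert t F, y u) = 0 := by rw [h, mul_zero]
      have e2 : f t • (w + ∑ u ∈ insert t F, y u) = 0 := by rw [h, smul_zero]
      have e3 := congrArg₂ (· - ·) e1 e2
      simp only [sub_zero] at e3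
      rw [mul_add, h1, mul_sum, sum_congr rfl h2, smul_add, smul_sum, sum_insert ht,
        sum_insert ht] at e3
      rw [← e3]
      simp only [sub_smul, sum_sub_distrib]
      abel
    have := ih ((fw - f t) • w) (fun u => (f u - f t) • y u) key (by
      intro u hu
      obtain ⟨X', f', fw', g1, g2, g3⟩ := hs u (mem_insert_of_mem hu)
      refine ⟨X', f', fw', ?_, ?_, g3⟩
      · rw [mul_smul_comm, g1, smul_comm]
      · intro u' hu'
        rw [mul_smul_comm, g2 u' (mem_insert_of_mem hu'), smul_comm])
    exact (smul_eq_zero.1 this).resolve_left (sub_ne_zero.2 h3.symm)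

namespace Dat
variable {K A : Type} [Field K] [Ring A] [Algebra K A] {m n : ℕ} (D : Dat K A m n)

/-- Murphy element -/
abbrev L (i : ℕ) : A := LL D.q D.a D.T i
/-- dual Murphy element -/
abbrev Z (i : ℕ) : A := ZZ D.q D.z D.T i
/-- subalgebra -/
abbrev Hs (i : ℕ) : Subalgebra K A := Hsub K D.a D.T i
/-- residue -/
abbrev ρ (b : Lab m) : K := rho D.q D.v b
/-- dual residue -/
noncomputable abbrev ζ (b : Lab m) : K := zeta D.q D.v b

lemma adj_le {i : ℕ} (hi : 1 ≤ i) : Algebra.adjoin K {D.a} ≤ D.Hs i := by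
  rw [Algebra.adjoin_le_iff]
  rintro x rfl
  exact a_mem hi

lemma hzc (y : A) (h : Commute D.a y) : Commute D.z y := by
  have := D.hz
  generalize D.z = z at this ⊢
  induction this using Algebra.adjoin_induction with
  | mem x hx => rw [Set.mem_singleton_iff.1 hx]; exact h
  | algebraMap r => exact Algebra.commutes r y
  | add x y _ _ h1 h2 => exact h1.add_left h2
  | mul x y _ _ h1 h2 => exact h1.mul_left h2

lemma L_mem (i : ℕ) : D.L i ∈ D.Hs (i + 1) := by
  induction i with
  | zero => exact a_mem le_rfl
  | succ i ih =>
    have h1 : D.T i ∈ D.Hs (i + 2) := T_mem (by omega)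
    exact Subalgebra.smul_mem _ (mul_mem (mul_mem h1 (Hsub_mono (by omega) ih)) h1) _

lemma Z_mem (i : ℕ) : D.Z i ∈ D.Hs (i + 1) := by
  induction i with
  | zero => exact D.adj_le le_rfl D.hz
  | succ i ih =>
    have h1 : Si D.q D.T i ∈ D.Hs (i + 2) := by
      have h1 : D.T i ∈ D.Hs (i + 2) := T_mem (by omega)
      exact Subalgebra.smul_mem _ (sub_mem h1 (Subalgebra.smul_mem _ (one_mem _) _)) _
    exact Subalgebra.smul_mem _ (mul_mem (mul_mem h1 (Hsub_mono (by omega) ih)) h1) _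

lemma L_comm {i : ℕ} (hi : i < n) {h : A} (hh : h ∈ D.Hs i) : Commute (D.L i) h :=
  commute_Hsub (fun _ => D.H.L_a hi) (fun j hj => D.H.L_low D.hq (by omega) hi) hh

lemma Z_comm {i : ℕ} (hi : i < n) {h : A} (hh : h ∈ D.Hs i) : Commute (D.Z i) h :=
  commute_Hsub (fun _ => D.H.Z_a D.hq D.hz1 D.hz2 D.hzc hi)
    (fun j hj => D.H.Z_low D.hq D.hzc (by omega) hi) hh

/-! values -/

lemma zpow_ne {d : ℤ} (h : d ≠ 0) (h' : d.natAbs ≤ n) : D.q ^ d ≠ 1 := by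
  intro e
  have h1 : D.q ^ (d.natAbs) = 1 := by
    rcases Int.natAbs_eq d with h2 | h2
    · rw [h2, zpow_natCast] at e; exact e
    · rw [h2, zpow_neg, zpow_natCast, inv_eq_one] at e; exact e
  exact D.hbr _ (by omega) h' h1

lemma q1 : D.q ≠ 1 := by
  have := D.hbr 1 le_rfl D.hn
  simpa using this

lemma q2 (h : 2 ≤ n) : 1 + D.q ≠ 0 := by
  intro e
  apply D.hbr 2 (by norm_num) h
  linear_combination (D.q - 1) * e

lemma ρ_shift (j : Fin m) (c : ℤ) : D.ρ (j, c + 1) = D.q * D.ρ (j, c) := by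
  simp only [rho, zpow_add_one₀ D.hq]; ring

lemma ζ_shift (j : Fin m) (c : ℤ) : D.q * D.ζ (j, c + 1) = D.ζ (j, c) := by
  simp only [zeta]
  split_ifs
  · rw [neg_add, zpow_add₀ D.hq, zpow_neg_one, mul_comm, mul_assoc, inv_mul_cancel₀ D.hq, mul_one]
  · simp

lemma ζ_shift' (j : Fin m) (c : ℤ) : D.ζ (j, c + 1) = D.q⁻¹ * D.ζ (j, c) := by
  rw [← D.ζ_shift j c, ← mul_assoc, inv_mul_cancel₀ D.hq, one_mul]

lemma val_inj {x y : Lab m} (h1 : D.ρ x = D.ρ y) (h2 : D.ζ x = D.ζ y)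
    (hs : x.1 = y.1 → (x.2 - y.2).natAbs ≤ n) (hd : x.1 ≠ y.1 → (x.2 - y.2).natAbs < n) :
    x = y := by
  obtain ⟨j, c⟩ := x
  obtain ⟨j', c'⟩ := y
  simp only at hs hd
  by_cases hj : j = j'
  · subst hj
    by_contra hne
    have hc : c - c' ≠ 0 := fun e => hne (by rw [sub_eq_zero.1 e])
    have := D.zpow_ne hc (hs rfl)
    rw [zpow_sub₀ D.hq] at this
    simp only [rho, zeta] at h1 h2
    have p1 := zpow_ne_zero c D.hq
    have p2 := zpow_ne_zero c' D.hq
    by_cases hv : D.v j = 0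
    · simp only [hv, if_true, zpow_neg] at h2
      apply this
      rw [inv_inj.1 h2, div_self p2]
    · have := mul_left_cancel₀ hv h1
      simp [this, p2] at *
  · exfalso
    have hd := hd hj
    simp only [rho, zeta] at h1 h2
    have p1 := zpow_ne_zero c D.hq
    have p2 := zpow_ne_zero c' D.hq
    refine D.hsep (c - c') hd j j' hj ?_
    rw [zpow_sub₀ D.hq, div_mul_eq_mul_div, mul_comm, h1, mul_div_assoc, div_self p2, mul_one]

lemma sep {s : List (Lab m)} (hs : Vld s) (hl : s.length + 1 ≤ n) {x y : Lab m} (hx : InR s x)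
    (hy : InR s y) (hne : x ≠ y) : D.ρ x ≠ D.ρ y ∨ D.ζ x ≠ D.ζ y := by
  by_contra hcon
  push Not at hcon
  refine hne (D.val_inj hcon.1 hcon.2 (fun e => ?_) (fun e => ?_))
  · have := InR_same hs hx hy e; omega
  · have := InR_diff hs hx hy e; omega

lemma sep_adj {x y : Lab m} (h : Adj x y) : D.ρ x ≠ D.ρ y ∨ D.ζ x ≠ D.ζ y := by
  by_contra hcon
  push Not at hcon
  have := D.hn
  have := D.val_inj hcon.1 hcon.2 (fun e => ?_) (fun e => absurd h.1 e)
  · subst this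
    have := h.2; omega
  · have := h.2; omega

/-- the coefficient relation: `c` at position `i`, `b` at position `i+1`. -/
def IsAl (b c : Lab m) (α : K) : Prop :=
  α * (D.ρ b - D.ρ c) = (D.q - 1) * D.ρ b ∧ α * (D.ζ c - D.ζ b) = (D.q - 1) * D.ζ c

lemma al_exists {b c : Lab m} (h : D.ρ b ≠ D.ρ c ∨ D.ζ b ≠ D.ζ c) : ∃ α, D.IsAl b c α := by
  unfold IsAl
  by_cases hb : D.v b.1 = 0 <;> by_cases hc : D.v c.1 = 0 <;>
    simp only [rho, zeta, hb, hc, if_true, if_false, zero_mul, sub_zero, zero_sub] at *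
  · have h' : D.q ^ (-c.2) - D.q ^ (-b.2) ≠ 0 := sub_ne_zero.2 (by simpa [eq_comm] using h)
    exact ⟨(D.q - 1) * D.q ^ (-c.2) / (D.q ^ (-c.2) - D.q ^ (-b.2)), by simp, by field_simp⟩
  · exact ⟨0, by simp⟩
  · exact ⟨D.q - 1, by simp⟩
  · have h' : D.v b.1 * D.q ^ b.2 - D.v c.1 * D.q ^ c.2 ≠ 0 := sub_ne_zero.2 (by simpa using h)
    exact ⟨(D.q - 1) * (D.v b.1 * D.q ^ b.2) / (D.v b.1 * D.q ^ b.2 - D.v c.1 * D.q ^ c.2),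
      by field_simp, by simp⟩

lemma kappa_ne {s : List (Lab m)} (hs : Vld s) (hl : s.length + 2 ≤ n) {b c : Lab m}
    (hb : InR s b) (hc : InR s c) (hne : b ≠ c) (hadj : ¬ Adj b c) {α : K} (h : D.IsAl b c α) :
    (D.q - α) * (1 + α) ≠ 0 := by
  obtain ⟨h1, h2⟩ := h
  have hs1 := fun e => InR_same hs hb hc e
  have hs2 := fun e => InR_diff hs hb hc e
  obtain ⟨j, b⟩ := b
  obtain ⟨j', c⟩ := c
  simp only at hs1 hs2
  apply mul_ne_zero
  · intro e
    have e' : α = D.q := by linear_combination -e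
    subst e'
    have e1 : D.ρ (j, b) = D.ρ (j', c + 1) := by rw [ρ_shift]; linear_combination h1
    have e2 : D.ζ (j, b) = D.ζ (j', c + 1) := by
      apply mul_left_cancel₀ D.hq
      rw [ζ_shift]; linear_combination -h2
    have := D.val_inj e1 e2 (fun e => by have := hs1 e; simp only; omega)
      (fun e => by have := hs2 e; simp only; omega)
    rw [Prod.mk.injEq] at this
    exact hadj ⟨this.1, Or.inl this.2⟩
  · intro e
    have e' : α = -1 := by linear_combination e
    subst e'
    have e1 : D.ρ (j', c) = D.ρ (j, b + 1) := by rw [ρ_shift]; linear_combination h1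
    have e2 : D.ζ (j', c) = D.ζ (j, b + 1) := by
      apply mul_left_cancel₀ D.hq
      rw [ζ_shift]; linear_combination -h2
    have := D.val_inj e1 e2 (fun e => by have := hs1 e.symm; simp only; omega)
      (fun e => by have := hs2 (Ne.symm e); simp only; omega)
    rw [Prod.mk.injEq] at this
    exact hadj ⟨this.1.symm, Or.inr this.2⟩

lemma ρζ (b : Lab m) : D.ρ b ≠ 0 ∨ D.ζ b ≠ 0 := by
  simp only [rho, zeta]
  by_cases h : D.v b.1 = 0
  · right; simp only [h, if_true]; exact zpow_ne_zero _ D.hq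
  · left; exact mul_ne_zero h (zpow_ne_zero _ D.hq)

lemma al_adj1 {j : Fin m} {c : ℤ} {α : K} (h : D.IsAl (j, c + 1) (j, c) α) : α = D.q := by
  obtain ⟨h1, h2⟩ := h
  have hp : D.q - 1 ≠ 0 := sub_ne_zero.2 D.q1
  rw [ρ_shift] at h1
  rcases D.ρζ (j, c) with h | h
  · have : (D.q - 1) * D.ρ (j, c) * (α - D.q) = 0 := by linear_combination h1
    exact sub_eq_zero.1 ((mul_eq_zero.1 this).resolve_left (mul_ne_zero hp h))
  · have h3 := D.ζ_shift j c
    have : (D.q - 1) * D.ζ (j, c) * (α - D.q) = 0 := by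
      linear_combination D.q * h2 + α * h3
    exact sub_eq_zero.1 ((mul_eq_zero.1 this).resolve_left (mul_ne_zero hp h))

lemma al_adj2 {j : Fin m} {c : ℤ} {α : K} (h : D.IsAl (j, c) (j, c + 1) α) : α = -1 := by
  obtain ⟨h1, h2⟩ := h
  have hp : D.q - 1 ≠ 0 := sub_ne_zero.2 D.q1
  rw [ρ_shift] at h1
  rcases D.ρζ (j, c) with h | h
  · have : (D.q - 1) * D.ρ (j, c) * (α + 1) = 0 := by linear_combination -h1
    exact eq_neg_of_add_eq_zero_left ((mul_eq_zero.1 this).resolve_left (mul_ne_zero hp h))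
  · have h3 := D.ζ_shift j c
    have : (D.q - 1) * D.ζ (j, c) * (α + 1) = 0 := by
      linear_combination -D.q * h2 + (α - D.q + 1) * h3
    exact eq_neg_of_add_eq_zero_left ((mul_eq_zero.1 this).resolve_left (mul_ne_zero hp h))

end Dat
end CycloProof


namespace CycloProof
open Finset
namespace Dat
variable {K A : Type} [Field K] [Ring A] [Algebra K A] {m n : ℕ} (D : Dat K A m n)

/-- Weight spaces -/
noncomputable def W (N : Submodule K A) : List (Lab m) → Submodule K A
  | [] => N
  | b :: s => W N s ⊓
      (LinearMap.ker (LinearMap.mulLeft K (D.L s.length) - D.ρ b • LinearMap.id) ⊓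
       LinearMap.ker (LinearMap.mulLeft K (D.Z s.length) - D.ζ b • LinearMap.id))

lemma mem_W_cons {N : Submodule K A} {b : Lab m} {s : List (Lab m)} {x : A} :
    x ∈ D.W N (b :: s) ↔ x ∈ D.W N s ∧ D.L s.length * x = D.ρ b • x ∧
      D.Z s.length * x = D.ζ b • x := by
  simp [W, sub_eq_zero]

lemma W_le (N : Submodule K A) (s : List (Lab m)) : D.W N s ≤ N := by
  induction s with
  | nil => exact le_rfl
  | cons b s ih => exact inf_le_left.trans ih

lemma W_mono {N N' : Submodule K A} (h : N ≤ N') (s : List (Lab m)) : D.W N s ≤ D.W N' s := by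
  induction s with
  | nil => exact h
  | cons b s ih => exact inf_le_inf_right _ ih

lemma W_right {s : List (Lab m)} {x : A} (hx : x ∈ D.W ⊤ s) (y : A) : x * y ∈ D.W ⊤ s := by
  induction s with
  | nil => trivial
  | cons b s ih =>
    rw [mem_W_cons] at hx ⊢
    refine ⟨ih hx.1, ?_, ?_⟩
    · rw [← mul_assoc, hx.2.1, smul_mul_assoc]
    · rw [← mul_assoc, hx.2.2, smul_mul_assoc]

lemma W_comm {N : Submodule K A} {s : List (Lab m)} {x h : A} (hN : ∀ y ∈ N, h * y ∈ N)
    (hL : ∀ j < s.length, Commute (D.L j) h) (hZ : ∀ j < s.length, Commute (D.Z j) h)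
    (hx : x ∈ D.W N s) : h * x ∈ D.W N s := by
  induction s with
  | nil => exact hN x hx
  | cons b s ih =>
    rw [mem_W_cons] at hx ⊢
    simp only [List.length_cons] at hL hZ
    refine ⟨ih (fun j hj => hL j (by omega)) (fun j hj => hZ j (by omega)) hx.1, ?_, ?_⟩
    · rw [← mul_assoc, (hL _ (by omega)).eq, mul_assoc, hx.2.1, mul_smul_comm]
    · rw [← mul_assoc, (hZ _ (by omega)).eq, mul_assoc, hx.2.2, mul_smul_comm]

lemma W_T {N : Submodule K A} {s : List (Lab m)} {x : A} {l : ℕ} (hl : s.length ≤ l)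
    (hln : l + 1 < n) (hN : ∀ y ∈ N, D.T l * y ∈ N) (hx : x ∈ D.W N s) : D.T l * x ∈ D.W N s :=
  D.W_comm hN (fun _ hj => D.H.L_high (by omega) hln)
    (fun _ hj => D.H.Z_high D.hq D.hzc (by omega) hln) hx

lemma psi {N : Submodule K A} {u s : List (Lab m)} {b c : Lab m} {x : A} {α : K}
    (hα : D.IsAl b c α) (hl : u.length + s.length + 2 ≤ n)
    (hN : ∀ y ∈ N, D.T s.length * y ∈ N)
    (hx : x ∈ D.W N (u ++ b :: c :: s)) :
    D.T s.length * x - α • x ∈ D.W N (u ++ c :: b :: s) := by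
  induction u with
  | nil =>
    simp only [List.nil_append, List.length_nil] at *
    rw [mem_W_cons, mem_W_cons] at hx
    obtain ⟨⟨h0, h1, h2⟩, h3, h4⟩ := hx
    obtain ⟨a1, a2⟩ := hα
    have l1 := D.H.LT_aux D.hq (i := s.length) (by omega)
    have l2 := D.H.LT_aux2 D.hq (i := s.length) (by omega)
    have z1 := D.H.ZT_aux D.hq (z := D.z) (i := s.length) (by omega)
    have z2 := D.H.ZT_aux2 D.hq (z := D.z) (i := s.length) (by omega)
    simp only [List.length_cons] at h3 h4
    rw [mem_W_cons, mem_W_cons]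
    refine ⟨⟨?_, ?_, ?_⟩, ?_, ?_⟩
    · exact sub_mem (D.W_T le_rfl (by omega) hN h0) (Submodule.smul_mem _ _ h0)
    · rw [mul_sub, ← mul_assoc, l1, sub_mul, mul_assoc, smul_mul_assoc, h3, mul_smul_comm,
        mul_smul_comm, h1]
      linear_combination (norm := module) (1 : K) • congrArg (fun t => t • x) a1
    · rw [mul_sub, ← mul_assoc, z1, add_mul, mul_assoc, smul_mul_assoc, h4, mul_smul_comm,
        mul_smul_comm, h2]
      linear_combination (norm := module) (-1 : K) • congrArg (fun t => t • x) a2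
    · simp only [List.length_cons]
      rw [mul_sub, ← mul_assoc, l2, add_mul, mul_assoc, smul_mul_assoc, h1, h3, mul_smul_comm,
        mul_smul_comm, h3]
      linear_combination (norm := module) (-1 : K) • congrArg (fun t => t • x) a1
    · simp only [List.length_cons]
      rw [mul_sub, ← mul_assoc, z2, sub_mul, mul_assoc, smul_mul_assoc, h2, mul_smul_comm,
        mul_smul_comm, h4]
      linear_combination (norm := module) (1 : K) • congrArg (fun t => t • x) a2
  | cons d u ih =>
    simp only [List.cons_append, List.length_cons] at *
    rw [mem_W_cons] at hx ⊢
    have e : (u ++ c :: b :: s).length = (u ++ b :: c :: s).length := by simp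
    have e' : (u ++ b :: c :: s).length = u.length + s.length + 2 := by simp; omega
    refine ⟨ih (by omega) hx.1, ?_, ?_⟩
    · have := D.H.L_low D.hq (i := (u ++ b :: c :: s).length) (j := s.length) (by omega) (by omega)
      rw [e, mul_sub, ← mul_assoc, this.eq, mul_assoc, mul_smul_comm, hx.2.1, mul_smul_comm,
        smul_sub, smul_comm α]
    · have := D.H.Z_low D.hq D.hzc (i := (u ++ b :: c :: s).length) (j := s.length)
        (by omega) (by omega)
      rw [e, mul_sub, ← mul_assoc, this.eq, mul_assoc, mul_smul_comm, hx.2.2, mul_smul_comm,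
        smul_sub, smul_comm α]

lemma quad' {l : ℕ} (hl : l + 1 < n) (x : A) :
    D.T l * (D.T l * x) = (D.q - 1) • (D.T l * x) + D.q • x := by
  rw [← mul_assoc, D.H.quad l hl, add_mul, smul_mul_assoc, smul_mul_assoc, one_mul]

lemma psi_inj {u s : List (Lab m)} {b c : Lab m} {α : K}
    (hα : D.IsAl b c α) (hk : (D.q - α) * (1 + α) ≠ 0) (hl : u.length + s.length + 2 ≤ n)
    (h : D.W ⊤ (u ++ c :: b :: s) = ⊥) : D.W ⊤ (u ++ b :: c :: s) = ⊥ := by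
  rw [eq_bot_iff]
  intro x hx
  have h1 := D.psi hα hl (N := ⊤) (fun _ _ => Submodule.mem_top) hx
  rw [h, Submodule.mem_bot, sub_eq_zero] at h1
  have h2 := D.quad' (l := s.length) (by omega) x
  rw [h1, mul_smul_comm, h1] at h2
  have : ((D.q - α) * (1 + α)) • x = 0 := by
    linear_combination (norm := module) (-1 : K) • h2
  exact (smul_eq_zero.1 this).resolve_left hk

lemma move {b : Lab m} {rest : List (Lab m)} (seg u : List (Lab m))
    (hl : (u ++ seg ++ b :: rest).length ≤ n)
    (hseg : ∀ d ∈ seg, ∃ α, D.IsAl d b α ∧ (D.q - α) * (1 + α) ≠ 0)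
    (h : D.W ⊤ (u ++ b :: (seg ++ rest)) = ⊥) : D.W ⊤ (u ++ seg ++ b :: rest) = ⊥ := by
  induction seg generalizing u with
  | nil => simpa using h
  | cons d seg ih =>
    have h2 := ih (u ++ [d]) (by simpa using hl) (fun d' hd' => hseg d' (by simp [hd'])) ?_
    · simpa using h2
    · obtain ⟨α, h3, h4⟩ := hseg d (by simp)
      simp only [List.append_assoc, List.cons_append, List.nil_append]
      refine D.psi_inj h3 h4 ?_ h
      simp at hl ⊢; omega

/-- no nontrivial Jordan blocks -/
def Diag (K : Type) {A : Type} [Field K] [Ring A] [Algebra K A] (X : A) : Prop :=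
  ∀ (r : K) (y w : A), X * y = r • y + w → X * w = r • w → w = 0

lemma diag_of {ι : Type} [DecidableEq ι] {X : A} (F : Finset ι) (V : ι → Submodule K A) (f : ι → K)
    (h : ∀ y : A, y ∈ ⨆ t ∈ F, V t) (hf : ∀ t ∈ F, ∀ x ∈ V t, X * x = f t • x) : Diag K X := by
  intro r y w h1 h2
  obtain ⟨y', h3⟩ := (Submodule.mem_iSup_finset_iff_exists_sum _ _).1 (h y)
  classical
  have e : w + ∑ t ∈ F.filter (fun t => f t ≠ r), (r - f t) • (y' t : A) = 0 := by
    rw [sum_filter_of_ne]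
    · have : X * y - r • y = w := by rw [h1]; abel
      rw [← this, ← h3, mul_sum, smul_sum, ← sum_sub_distrib, ← sum_add_distrib]
      apply sum_eq_zero
      intro t ht
      rw [hf t ht _ (y' t).2]
      module
    · intro t ht h4 e
      rw [e] at h4; simp at h4
  refine indep _ w _ e (fun t ht => ⟨X, f, r, h2, fun u hu => ?_, (mem_filter.1 ht).2⟩)
  rw [mul_smul_comm, hf u (mem_filter.1 hu).1 _ (y' u).2, smul_comm]

lemma rep {b : Lab m} {s : List (Lab m)} (hL : Diag K (D.L s.length))
    (hZ : Diag K (D.Z s.length)) (hl : s.length + 2 ≤ n) (u : List (Lab m)) :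
    D.W ⊤ (u ++ b :: b :: s) = ⊥ := by
  induction u with
  | cons d u ih =>
    rw [List.cons_append, eq_bot_iff]
    intro x hx
    rw [← ih]
    exact (D.mem_W_cons.1 hx).1
  | nil =>
    rw [eq_bot_iff]
    intro x hx
    rw [List.nil_append, mem_W_cons, mem_W_cons] at hx
    obtain ⟨⟨h0, h1, h2⟩, h3, h4⟩ := hx
    have l1 := D.H.LT_aux D.hq (i := s.length) (by omega)
    have z1 := D.H.ZT_aux D.hq (z := D.z) (i := s.length) (by omega)
    simp only [List.length_cons] at h3 h4
    have hp : D.q - 1 ≠ 0 := sub_ne_zero.2 D.q1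
    have e1 : ((D.q - 1) * D.ρ b) • x = 0 := by
      have := hL (D.ρ b) (D.T s.length * x) (-(((D.q - 1) * D.ρ b) • x)) ?_ ?_
      · simpa using this
      · rw [← mul_assoc, l1, sub_mul, mul_assoc, smul_mul_assoc, h3, mul_smul_comm]
        module
      · rw [mul_neg, mul_smul_comm, h1]; module
    have e2 : ((D.q - 1) * D.ζ b) • x = 0 := by
      have := hZ (D.ζ b) (D.T s.length * x) ((((D.q - 1) * D.ζ b) • x)) ?_ ?_
      · simpa using this
      · rw [← mul_assoc, z1, add_mul, mul_assoc, smul_mul_assoc, h4, h2, mul_smul_comm]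
        module
      · rw [mul_smul_comm, h2]; module
    rcases D.ρζ b with h | h
    · exact (smul_eq_zero.1 e1).resolve_left (mul_ne_zero hp h)
    · exact (smul_eq_zero.1 e2).resolve_left (mul_ne_zero hp h)

lemma bcb {b c : Lab m} {s : List (Lab m)} (hbc : Adj b c)
    (hd : ∀ i ≤ s.length + 1, Diag K (D.L i) ∧ Diag K (D.Z i))
    (hl : s.length + 3 ≤ n) : D.W ⊤ (b :: c :: b :: s) = ⊥ := by
  rw [eq_bot_iff]
  intro x hx
  obtain ⟨α, hα⟩ := D.al_exists (D.sep_adj hbc.symm)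
  obtain ⟨β, hβ⟩ := D.al_exists (D.sep_adj hbc)
  have h1 := D.psi (u := [b]) hα (by simp; omega) (N := ⊤) (fun _ _ => Submodule.mem_top) hx
  have r1 := D.rep (b := b) (s := c :: s) (hd _ (by simp)).1 (hd _ (by simp)).2 (by simpa using hl) []
  simp only [List.cons_append, List.nil_append] at h1 r1
  rw [r1, Submodule.mem_bot, sub_eq_zero] at h1
  have h2 := D.psi (u := []) hβ (by simp; omega) (N := ⊤) (fun _ _ => Submodule.mem_top) hx
  have r2 := D.rep (b := b) (s := s) (hd _ (by omega)).1 (hd _ (by omega)).2 (by omega) [c]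
  simp only [List.cons_append, List.nil_append, List.length_cons] at h2 r2
  rw [r2, Submodule.mem_bot, sub_eq_zero] at h2
  have br := congrArg (· * x) (D.H.braid s.length (by omega))
  simp only [mul_assoc] at br
  simp only [h1, h2, mul_smul_comm, smul_smul] at br
  have h3 : (α * β * (β - α)) • x = 0 := by
    linear_combination (norm := module) br
  have q2 := D.q2 (by omega)
  have hq := D.hq
  refine (smul_eq_zero.1 h3).resolve_left ?_
  obtain ⟨j, b⟩ := b
  obtain ⟨j', c⟩ := c
  obtain ⟨e1, e2⟩ := hbc
  simp only at e1 e2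
  subst e1
  rcases e2 with rfl | rfl
  · rw [D.al_adj2 hα, D.al_adj1 hβ]
    simpa [hq, add_comm] using q2
  · rw [D.al_adj1 hα, D.al_adj2 hβ]
    have : -1 - D.q ≠ 0 := fun e => q2 (by linear_combination -e)
    simpa [hq] using this

end Dat
end CycloProof


namespace CycloProof
open Finset
open Classical in
/-- The finite set of addable labels. -/
noncomputable def AF {m : ℕ} (n : ℕ) (s : List (Lab m)) : Finset (Lab m) :=
  ((univ : Finset (Fin m)) ×ˢ Finset.Icc (-(n : ℤ)) n).filter (Alw s)

lemma mem_AF {m n : ℕ} {s : List (Lab m)} (hs : Vld s) (hl : s.length ≤ n) {x : Lab m} :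
    x ∈ AF n s ↔ Alw s x := by
  simp only [AF, mem_filter, mem_product, mem_univ, true_and, Finset.mem_Icc, and_iff_right_iff_imp]
  intro h
  have := InR_abs hs (Or.inr h)
  omega

open Classical in
/-- The finite set of valid sequences of given length. -/
noncomputable def VL {m : ℕ} (n : ℕ) : ℕ → Finset (List (Lab m))
  | 0 => {[]}
  | i + 1 => (VL n i).biUnion fun s => (AF n s).image (· :: s)

lemma mem_VL {m n i : ℕ} (hi : i ≤ n) {t : List (Lab m)} :
    t ∈ VL n i ↔ Vld t ∧ t.length = i := by
  induction i generalizing t with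
  | zero =>
    simp only [VL, mem_singleton, List.length_eq_zero_iff]
    constructor
    · rintro rfl; exact ⟨trivial, rfl⟩
    · exact fun h => h.2
  | succ i ih =>
    simp only [VL, mem_biUnion, mem_image]
    constructor
    · rintro ⟨s, hs, d, hd, rfl⟩
      rw [ih (by omega)] at hs
      rw [mem_AF hs.1 (by omega)] at hd
      exact ⟨⟨hd, hs.1⟩, by simp [hs.2]⟩
    · rintro ⟨h1, h2⟩
      match t, h1, h2 with
      | d :: s, h1, h2 =>
        simp only [List.length_cons, add_left_inj] at h2
        exact ⟨s, (ih (by omega)).2 ⟨h1.2, h2⟩, d, (mem_AF h1.2 (by omega)).2 h1.1, rfl⟩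

namespace Dat
variable {K A : Type} [Field K] [Ring A] [Algebra K A] {m n : ℕ} (D : Dat K A m n)

/-- stability -/
def Stab (i : ℕ) (N : Submodule K A) : Prop := ∀ h ∈ D.Hs i, ∀ x ∈ N, h * x ∈ N

lemma Stab.mono {D : Dat K A m n} {i j : ℕ} {N : Submodule K A} (h : D.Stab j N) (hij : i ≤ j) :
    D.Stab i N := fun x hx => h x (Hsub_mono hij hx)

/-- the one-step decomposition property -/
def PP (l : ℕ) : Prop := ∀ s : List (Lab m), s.length = l → Vld s → l + 1 ≤ n → ∀ N, D.Stab (l + 1) N →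
  D.W N s ≤ ⨆ d ∈ AF n s, D.W N (d :: s)

lemma decAll {i : ℕ} (hP : ∀ l < i, D.PP l) (hi : i ≤ n) {N : Submodule K A} (hN : D.Stab i N) :
    N ≤ ⨆ t ∈ VL n i, D.W N t := by
  induction i with
  | zero => simp [VL, W]
  | succ i ih =>
    refine (ih (fun l hl => hP l (by omega)) (by omega) (hN.mono (by omega))).trans ?_
    refine iSup₂_le fun s hs => ?_
    rw [mem_VL (by omega)] at hs
    refine (hP i (by omega) s hs.2 hs.1 hi N hN).trans ?_
    refine iSup₂_le fun d hd => ?_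
    refine le_iSup₂_of_le (d :: s) ?_ le_rfl
    rw [mem_VL hi]
    exact ⟨⟨(mem_AF hs.1 (by omega)).1 hd, hs.1⟩, by simp [hs.2]⟩

lemma stab_top (i : ℕ) : D.Stab i ⊤ := fun _ _ _ _ => Submodule.mem_top

lemma diags {i : ℕ} (hP : ∀ l < i + 1, D.PP l) (hi : i + 1 ≤ n) :
    Diag K (D.L i) ∧ Diag K (D.Z i) := by
  classical
  have h := D.decAll hP hi (D.stab_top _)
  have key : ∀ t ∈ VL (m := m) n (i + 1), ∃ b b' : K, ∀ x ∈ D.W ⊤ t,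
      D.L i * x = b • x ∧ D.Z i * x = b' • x := by
    intro t ht
    rw [mem_VL hi] at ht
    match t, ht with
    | d :: s, ht =>
      have : s.length = i := by simpa using ht.2
      refine ⟨D.ρ d, D.ζ d, fun x hx => ?_⟩
      rw [mem_W_cons, this] at hx
      exact hx.2
  choose! f g hf using key
  exact ⟨diag_of (VL n (i + 1)) (fun t => D.W ⊤ t) f
      (fun y => h (Submodule.mem_top)) (fun t ht x hx => (hf t ht x hx).1),
    diag_of (VL n (i + 1)) (fun t => D.W ⊤ t) g
      (fun y => h (Submodule.mem_top)) (fun t ht x hx => (hf t ht x hx).2)⟩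

lemma PP_zero : D.PP 0 := by
  intro s hs hv hn N hN x hx
  rw [List.length_eq_zero_iff] at hs
  subst hs
  obtain ⟨r, h1, h2⟩ := D.dec0 x
  rw [← h1]
  refine Submodule.sum_mem _ fun j _ => ?_
  obtain ⟨h3, h4, h5⟩ := h2 j
  refine Submodule.mem_iSup_of_mem (j, 0) (Submodule.mem_iSup_of_mem ?_ ?_)
  · rw [mem_AF hv (by simp)]
    simp [Alw]
  · rw [mem_W_cons]
    refine ⟨hN _ (D.adj_le le_rfl h3) _ hx, ?_, h5⟩
    simpa [rho, JM] using h4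

/-- vanishing of non-standard weight spaces -/
lemma vanish {l : ℕ} (hP : ∀ l' ≤ l, D.PP l') {c b : Lab m} {s : List (Lab m)} (hs : s.length = l)
    (hv : Vld s) (hc : Alw s c) (hbc : Adj b c) (hb : ¬ Alw (c :: s) b) (hl : l + 2 ≤ n) :
    D.W ⊤ (b :: c :: s) = ⊥ := by
  obtain ⟨seg, rest, h1, h2⟩ := notAlw_split hv hc hbc hb
  subst h1
  have hlen : seg.length + rest.length + 1 = l := by rw [← hs]; simp; omega
  have := D.move (b := b) (rest := rest) seg [b, c] (by simp; omega) ?_ ?_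
  · simpa using this
  · intro d hd
    have hdR : InR (seg ++ b :: rest) d := Or.inl (by simp [hd])
    have hbR : InR (seg ++ b :: rest) b := Or.inl (by simp)
    obtain ⟨α, hα⟩ := D.al_exists (D.sep hv (by omega) hdR hbR (h2 d hd).1)
    exact ⟨α, hα, D.kappa_ne hv (by omega) hdR hbR (h2 d hd).1 (h2 d hd).2 hα⟩
  · refine D.bcb hbc (fun i hi => D.diags (fun l' hl' => hP l' ?_) ?_) ?_
    · simp at hi; omega
    · simp at hi; omega
    · simp; omega

/-- eigenspaces of `L_{l+1}` in terms of `T`. -/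
lemma end_step {N : Submodule K A} {c : Lab m} {s : List (Lab m)} {x : A}
    (hl : s.length + 2 ≤ n) (hx : x ∈ D.W N (c :: s)) (hTx : D.T s.length * x ∈ D.W N (c :: s)) :
    D.T s.length * x + x ∈ D.W N ((c.1, c.2 + 1) :: c :: s) ∧
    D.q • x - D.T s.length * x ∈ D.W N ((c.1, c.2 - 1) :: c :: s) := by
  have h1 := (D.mem_W_cons.1 hx).2
  have h2 := (D.mem_W_cons.1 hTx).2
  have qd := D.quad' (l := s.length) (by omega) x
  have l2 := D.H.LT_aux2 D.hq (i := s.length) (by omega)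
  have z2 := D.H.ZT_aux2 D.hq (z := D.z) (i := s.length) (by omega)
  have hTS := D.H.Si_T D.hq (i := s.length) (by omega)
  have hq := D.hq
  -- action of L_{l+1} on x
  have a1 : D.q • (D.L (s.length + 1) * x) =
      D.ρ c • ((D.q - 1) • (D.T s.length * x) + D.q • x) := by
    have : D.L (s.length + 1) = D.q⁻¹ • (D.T s.length * D.L s.length * D.T s.length) := rfl
    rw [this, smul_mul_assoc, smul_smul, mul_inv_cancel₀ hq, one_smul, mul_assoc, mul_assoc, h2.1,
      mul_smul_comm, qd]
  have a2 : D.L (s.length + 1) * (D.T s.length * x) =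
      D.ρ c • (D.T s.length * x) + (D.q - 1) • (D.L (s.length + 1) * x) := by
    rw [← mul_assoc, l2, add_mul, mul_assoc, h1.1, mul_smul_comm, smul_mul_assoc]
  have b2 : D.Z (s.length + 1) * (D.T s.length * x) =
      D.ζ c • (D.T s.length * x) - ((D.q - 1) * D.ζ c) • x := by
    rw [← mul_assoc, z2, sub_mul, mul_assoc, h1.2, mul_smul_comm, smul_mul_assoc, h1.2, smul_smul]
  have b3 : D.q • (D.Z (s.length + 1) * x) = D.ζ c • (D.T s.length * (D.T s.length * x)) -
      ((D.q - 1) * D.ζ c) • (D.T s.length * x) - (D.q - 1) • (D.Z (s.length + 1) * (D.T s.length * x)) := by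
    have e : D.Z (s.length + 1) * (D.T s.length * (D.T s.length * x)) =
      D.ζ c • (D.T s.length * (D.T s.length * x)) - ((D.q - 1) * D.ζ c) • (D.T s.length * x) := by
      rw [← mul_assoc, z2, sub_mul, mul_assoc, h2.2, mul_smul_comm, smul_mul_assoc, h2.2, smul_smul]
    rw [← e]
    conv_rhs => rw [qd, mul_add, mul_smul_comm, mul_smul_comm]
    abel
  rw [b2, qd] at b3
  refine ⟨D.mem_W_cons.2 ⟨add_mem hTx hx, ?_, ?_⟩,
    D.mem_W_cons.2 ⟨sub_mem (Submodule.smul_mem _ _ hx) hTx, ?_, ?_⟩⟩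
  · rw [D.ρ_shift, List.length_cons, mul_add, a2]
    linear_combination (norm := module) (1 : K) • a1
  · rw [D.ζ_shift', List.length_cons, mul_add, b2]
    apply smul_right_injective A hq
    simp only
    linear_combination (norm := (simp only [smul_smul, smul_add, smul_sub, mul_inv_cancel₀ hq]; match_scalars <;> field_simp <;> ring)) (1 : K) • b3
  · have e := D.ρ_shift c.1 (c.2 - 1)
    rw [sub_add_cancel] at e
    apply smul_right_injective A hq
    simp only
    rw [smul_smul, ← e, List.length_cons, mul_sub, a2, mul_smul_comm]
    linear_combination (norm := module) (1 : K) • a1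
  · have e := D.ζ_shift c.1 (c.2 - 1)
    rw [sub_add_cancel] at e
    rw [← e, List.length_cons, mul_sub, b2, mul_smul_comm, b3]
    module

lemma PP_succ {l : ℕ} (hP : ∀ l' ≤ l, D.PP l') : D.PP (l + 1) := by
  classical
  intro s hs hv hn N hN x hx
  match s, hs, hv with
  | c :: s, hs, hv =>
  have hsl : s.length = l := by simpa using hs
  subst hsl
  obtain ⟨hc, hv⟩ := hv
  set l := s.length with hl
  have hTN : ∀ y ∈ N, D.T l * y ∈ N := hN _ (T_mem (by omega))
  have hcAF : c ∈ AF n s := (mem_AF hv (by omega)).2 hc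
  have hxc := D.mem_W_cons.1 hx
  have hx0 := hxc.1
  have hx1 : D.L l * x = D.ρ c • x := hxc.2.1
  have hx2 : D.Z l * x = D.ζ c • x := hxc.2.2
  have hTx : D.T l * x ∈ D.W N s := D.W_T le_rfl (by omega) hTN hx0
  have hdec := hP l le_rfl s rfl hv (by omega) N (hN.mono (by omega)) hTx
  obtain ⟨y, hy⟩ := (Submodule.mem_iSup_finset_iff_exists_sum _ _).1 hdec
  have hyW : ∀ d, (y d : A) ∈ D.W N (d :: s) := fun d => (y d).2
  have hyL : ∀ d, D.L l * (y d : A) = D.ρ d • (y d : A) := fun d => (D.mem_W_cons.1 (hyW d)).2.1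
  have hyZ : ∀ d, D.Z l * (y d : A) = D.ζ d • (y d : A) := fun d => (D.mem_W_cons.1 (hyW d)).2.2
  have sepAF : ∀ d ∈ AF n s, ∀ d' ∈ AF n s, d ≠ d' → D.ρ d ≠ D.ρ d' ∨ D.ζ d ≠ D.ζ d' := by
    intro d hd d' hd' hne
    exact D.sep hv (by omega) (Or.inr ((mem_AF hv (by omega)).1 hd))
      (Or.inr ((mem_AF hv (by omega)).1 hd')) hne
  -- independence inside
  have ind : ∀ w : Lab m → A, (∀ d ∈ AF n s, D.L l * w d = D.ρ d • w d ∧ D.Z l * w d = D.ζ d • w d) →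
      ∑ d ∈ AF n s, w d = 0 → ∀ d ∈ AF n s, w d = 0 := by
    intro w hw hsum d hd
    refine indep (K := K) ((AF n s).erase d) (w d) w ?_ ?_
    · rw [← hsum, add_sum_erase _ _ hd]
    · intro t ht
      rw [mem_erase] at ht
      rcases sepAF t ht.2 d hd ht.1 with h | h
      · exact ⟨D.L l, D.ρ, D.ρ d, (hw d hd).1, fun u hu => (hw u (mem_of_mem_erase hu)).1, h⟩
      · exact ⟨D.Z l, D.ζ, D.ζ d, (hw d hd).2, fun u hu => (hw u (mem_of_mem_erase hu)).2, h⟩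
  have cLL := D.L_comm (i := l + 1) (by omega) (D.L_mem l)
  have cLZ := D.L_comm (i := l + 1) (by omega) (D.Z_mem l)
  have cZL := D.Z_comm (i := l + 1) (by omega) (D.L_mem l)
  have cZZ := D.Z_comm (i := l + 1) (by omega) (D.Z_mem l)
  have push : ∀ {P Q w : A} {r : K}, Commute P Q → Q * w = r • w → Q * (P * w) = r • (P * w) := by
    intro P Q w r h1 h2
    rw [← mul_assoc, ← h1.eq, mul_assoc, h2, mul_smul_comm]
  have l2 := D.H.LT_aux2 D.hq (i := l) (by omega)
  have z2 := D.H.ZT_aux2 D.hq (z := D.z) (i := l) (by omega)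
  have yL : ∀ d ∈ AF n s, d ≠ c → D.L (l + 1) * (y d : A) = D.ρ c • (y d : A) := by
    intro d hd hne
    have := ind (fun d => D.L (l + 1) * (y d : A) - D.ρ c • (y d : A) -
      if d = c then (D.q - 1) • (D.L (l + 1) * x) else 0) ?_ ?_ d hd
    · simpa [hne, sub_eq_zero] using this
    · intro d hd
      by_cases e : d = c
      · subst e
        simp only [if_true, mul_sub, mul_smul_comm, push cLL (hyL d), push cLL hx1,
          push cLZ (hyZ d), push cLZ hx2, hyL d, hyZ d]
        exact ⟨by module, by module⟩
      · simp only [e, if_false, sub_zero, mul_sub, mul_smul_comm, push cLL (hyL d),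
          push cLZ (hyZ d), hyL d, hyZ d]
        exact ⟨by module, by module⟩
    · rw [sum_sub_distrib, sum_sub_distrib, ← mul_sum, ← smul_sum, hy, sum_ite_eq' ,
        if_pos hcAF, ← mul_assoc, l2, add_mul, mul_assoc, hx1, mul_smul_comm, smul_mul_assoc]
      abel
  have yZ : ∀ d ∈ AF n s, d ≠ c → D.Z (l + 1) * (y d : A) = D.ζ c • (y d : A) := by
    intro d hd hne
    have := ind (fun d => D.Z (l + 1) * (y d : A) - D.ζ c • (y d : A) +
      if d = c then (D.q - 1) • (D.ζ c • x) else 0) ?_ ?_ d hd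
    · simpa [hne, sub_eq_zero] using this
    · intro d hd
      by_cases e : d = c
      · subst e
        simp only [if_true, mul_sub, mul_add, Algebra.mul_smul_comm, push cZL (hyL d),
          push cZZ (hyZ d), hyL d, hyZ d, hx1, hx2]
        exact ⟨by module, by module⟩
      · simp only [e, if_false, add_zero, mul_sub, mul_smul_comm, push cZL (hyL d),
          push cZZ (hyZ d), hyL d, hyZ d]
        exact ⟨by module, by module⟩
    · rw [sum_add_distrib, sum_sub_distrib, ← mul_sum, ← smul_sum, hy, sum_ite_eq' ,
        if_pos hcAF, ← mul_assoc, z2, sub_mul, mul_assoc, hx2, mul_smul_comm, smul_mul_assoc, hx2]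
      abel
  have key : ∀ d, ∃ (α : K), d ∈ AF n s → d ≠ c → D.IsAl c d α ∧ (D.q - α) * (1 + α) ≠ 0 := by
    intro d
    by_cases hd : d ∈ AF n s ∧ d ≠ c
    · obtain ⟨α, hα⟩ := D.al_exists (sepAF c hcAF d hd.1 (Ne.symm hd.2))
      have hd' := (mem_AF hv (by omega)).1 hd.1
      exact ⟨α, fun _ _ => ⟨hα, D.kappa_ne hv (by omega) (Or.inr hc) (Or.inr hd') (Ne.symm hd.2)
        (not_adj hc hd') hα⟩⟩
    · exact ⟨0, fun h h' => absurd ⟨h, h'⟩ hd⟩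
  choose α hα using key
  set z : Lab m → A := fun d => D.T l * (y d : A) - α d • (y d : A) with hz
  have hzW : ∀ d ∈ AF n s, d ≠ c → z d ∈ D.W N (d :: c :: s) := by
    intro d hd hne
    refine D.psi (u := []) (hα d hd hne).1 (by simp; omega) hTN ?_
    exact D.mem_W_cons.2 ⟨hyW d, yL d hd hne, yZ d hd hne⟩
  have hTz : ∀ d, D.T l * z d = (D.q - 1 - α d) • z d + ((D.q - α d) * (1 + α d)) • (y d : A) := by
    intro d
    simp only [hz]
    rw [mul_sub, mul_smul_comm, D.quad' (by omega)]
    module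
  set κ : Lab m → K := fun d => (D.q - α d) * (1 + α d) with hκ
  set F := (AF n s).erase c with hF
  set x' := x - ∑ d ∈ F, (κ d)⁻¹ • z d with hx'
  have hsub : ∀ d, D.W N (d :: c :: s) ≤ D.W N (c :: s) := fun d w hw => (D.mem_W_cons.1 hw).1
  have hx'W : x' ∈ D.W N (c :: s) := by
    refine sub_mem hx (Submodule.sum_mem _ fun d hd => Submodule.smul_mem _ _ ?_)
    rw [hF, mem_erase] at hd
    exact hsub d (hzW d hd.2 hd.1)
  have hTx' : D.T l * x' ∈ D.W N (c :: s) := by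
    have e : D.T l * x' = (y c : A) - ∑ d ∈ F, ((κ d)⁻¹ * (D.q - 1 - α d)) • z d := by
      rw [hx', mul_sub, ← hy, ← add_sum_erase _ _ hcAF, ← hF, mul_sum, add_sub_assoc,
        sub_eq_add_neg (y c : A), ← sum_neg_distrib, ← sum_sub_distrib]
      congr 1
      apply sum_congr rfl
      intro d hd
      rw [mem_erase] at hd
      rw [mul_smul_comm, hTz, smul_add, smul_smul, smul_smul, inv_mul_cancel₀ (hα d hd.2 hd.1).2]
      module
    rw [e]
    refine sub_mem (hyW c) (Submodule.sum_mem _ fun d hd => Submodule.smul_mem _ _ ?_)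
    rw [hF, mem_erase] at hd
    exact hsub d (hzW d hd.2 hd.1)
  obtain ⟨w1, w2⟩ := D.end_step (by omega) hx'W hTx'
  have hvc : Vld (c :: s) := ⟨hc, hv⟩
  have fin : ∀ b, Adj b c → ∀ w ∈ D.W N (b :: c :: s), w ∈ ⨆ d ∈ AF n (c :: s), D.W N (d :: c :: s) := by
    intro b hb w hw
    by_cases hA : Alw (c :: s) b
    · exact Submodule.mem_iSup_of_mem b (Submodule.mem_iSup_of_mem
        ((mem_AF hvc (by simp; omega)).2 hA) hw)
    · have h1 := D.vanish hP rfl hv hc hb hA (by omega)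
      have h2 := D.W_mono le_top _ hw
      rw [h1, Submodule.mem_bot] at h2
      rw [h2]; exact zero_mem _
  have q2 := D.q2 (by omega)
  have ex : x = ∑ d ∈ F, (κ d)⁻¹ • z d + ((1 + D.q)⁻¹ • (D.T l * x' + x') +
      (1 + D.q)⁻¹ • (D.q • x' - D.T l * x')) := by
    have : (1 + D.q)⁻¹ • (D.T l * x' + x') + (1 + D.q)⁻¹ • (D.q • x' - D.T l * x') = x' := by
      match_scalars <;> field_simp <;> ring
    rw [this, hx']; abel
  rw [ex]
  refine add_mem (Submodule.sum_mem _ fun d hd => Submodule.smul_mem _ _ ?_)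
    (add_mem (Submodule.smul_mem _ _ (fin (c.1, c.2 + 1) ⟨rfl, Or.inl rfl⟩ _ w1))
      (Submodule.smul_mem _ _ (fin (c.1, c.2 - 1) ⟨rfl, Or.inr (by simp)⟩ _ w2)))
  rw [hF, mem_erase] at hd
  refine Submodule.mem_iSup_of_mem d (Submodule.mem_iSup_of_mem ?_ (hzW d hd.2 hd.1))
  exact (mem_AF hvc (by simp; omega)).2
    (Alw_cons hc ((mem_AF hv (by omega)).1 hd.2) (Ne.symm hd.1))

lemma PP_all (l : ℕ) : D.PP l := by
  induction l using Nat.strong_induction_on with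
  | _ l ih =>
    cases l with
    | zero => exact D.PP_zero
    | succ l => exact D.PP_succ (fun l' hl' => ih l' (by omega))

end Dat
end CycloProof


namespace CycloProof
open Finset
lemma Alw_perm {m : ℕ} {s t : List (Lab m)} (h : s.Perm t) {x : Lab m} (hx : Alw s x) : Alw t x := by
  unfold Alw at *
  simpa only [h.count_eq] using hx

namespace Dat
variable {K A : Type} [Field K] [Ring A] [Algebra K A] {m n : ℕ} (D : Dat K A m n)

/-- separation of valid sequences -/
lemma sepList {t s : List (Lab m)} (ht : Vld t) (hs : Vld s) (hl : t.length = s.length)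
    (hn : t.length ≤ n) (hne : t ≠ s) : ∃ (X : A) (f : List (Lab m) → K),
      (∀ u : List (Lab m), u.length = t.length → ∀ x ∈ D.W ⊤ u, X * x = f u • x) ∧ f t ≠ f s := by
  induction t generalizing s with
  | nil => simp at hl; exact absurd hl.symm (by simpa [eq_comm] using hne)
  | cons b t ih =>
    match s, hl, hs, hne with
    | c :: s, hl, hs, hne =>
    simp only [List.length_cons, add_left_inj] at hl hn
    by_cases e : t = s
    · subst e
      have hbc : b ≠ c := fun h => hne (by rw [h])
      have key : ∀ u : List (Lab m), u.length = (b :: t).length → ∀ x ∈ D.W ⊤ u,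
          D.L t.length * x = D.ρ (u.headD b) • x ∧ D.Z t.length * x = D.ζ (u.headD b) • x := by
        intro u hu x hx
        match u, hu, hx with
        | d :: u, hu, hx =>
          have hu' : u.length = t.length := by simpa using hu
          rw [mem_W_cons, hu'] at hx
          exact hx.2
      rcases D.sep ht.2 (by omega) (Or.inr ht.1) (Or.inr hs.1) hbc with h | h
      · exact ⟨D.L t.length, fun u => D.ρ (u.headD b), fun u hu x hx => (key u hu x hx).1, by simpa using h⟩
      · exact ⟨D.Z t.length, fun u => D.ζ (u.headD b), fun u hu x hx => (key u hu x hx).2, by simpa using h⟩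
    · obtain ⟨X, f, h1, h2⟩ := ih ht.2 hs.2 hl (by omega) e
      refine ⟨X, fun u => f u.tail, ?_, by simpa using h2⟩
      intro u hu x hx
      match u, hu, hx with
      | d :: u, hu, hx =>
        exact h1 u (by simpa using hu) x (D.mem_W_cons.1 hx).1

lemma proj {i : ℕ} (hi : i ≤ n) (F : Finset (List (Lab m))) (hF : F ⊆ VL n i)
    (G : List (Lab m) → Submodule K A) (hG : ∀ r ∈ F, G r ≤ D.W ⊤ r) {y : A} {r : List (Lab m)}
    (hr : r ∈ VL n i) (hy : y ∈ D.W ⊤ r) (hyG : y ∈ ⨆ r ∈ F, G r) (h0 : y ≠ 0) :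
    r ∈ F ∧ y ∈ G r := by
  classical
  obtain ⟨w, hw⟩ := (Submodule.mem_iSup_finset_iff_exists_sum _ _).1 hyG
  have hrl := (mem_VL hi).1 hr
  have key : ∀ (F' : Finset (List (Lab m))) (y' : A), F' ⊆ F → r ∉ F' → y' ∈ D.W ⊤ r →
      y' + ∑ t ∈ F', -(w t : A) = 0 → y' = 0 := by
    intro F' y' hF' hrF hy' he
    refine indep (K := K) F' y' (fun t => -(w t : A)) he ?_
    intro t ht
    have htl := (mem_VL hi).1 (hF (hF' ht))
    obtain ⟨X, f, h1, h2⟩ := D.sepList htl.1 hrl.1 (htl.2.trans hrl.2.symm) (by omega)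
      (fun e => hrF (e ▸ ht))
    refine ⟨X, f, f r, h1 r (by omega) y' hy', fun u hu => ?_, h2⟩
    have hul := (mem_VL hi).1 (hF (hF' hu))
    rw [mul_neg, h1 u (by omega) _ (hG u (hF' hu) (w u).2), smul_neg]
  by_cases hrF : r ∈ F
  · refine ⟨hrF, ?_⟩
    have : y - w r = 0 := by
      refine key (F.erase r) _ (erase_subset _ _) (by simp) (sub_mem hy (hG r hrF (w r).2)) ?_
      rw [← hw, ← add_sum_erase _ _ hrF, sum_neg_distrib]
      abel
    rw [sub_eq_zero.1 this]
    exact (w r).2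
  · exact absurd (key F y le_rfl hrF hy (by rw [← hw, sum_neg_distrib]; abel)) h0

/-- orbit -/
def Orb (i : ℕ) (x : A) : Submodule K A := (Subalgebra.toSubmodule (D.Hs i)).map (LinearMap.mulRight K x)

lemma mem_Orb {i : ℕ} {x y : A} : y ∈ D.Orb i x ↔ ∃ h ∈ D.Hs i, h * x = y := by
  simp [Orb]

lemma self_Orb (i : ℕ) (x : A) : x ∈ D.Orb i x := D.mem_Orb.2 ⟨1, one_mem _, one_mul _⟩

lemma Orb_stab (i : ℕ) (x : A) : D.Stab i (D.Orb i x) := by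
  intro h hh y hy
  obtain ⟨g, hg, rfl⟩ := D.mem_Orb.1 hy
  exact D.mem_Orb.2 ⟨h * g, mul_mem hh hg, mul_assoc _ _ _⟩

lemma Orb_trans {i : ℕ} {x y z : A} (h1 : y ∈ D.Orb i x) (h2 : z ∈ D.Orb i y) : z ∈ D.Orb i x := by
  obtain ⟨g, hg, rfl⟩ := D.mem_Orb.1 h2
  exact D.Orb_stab i x g hg y h1

lemma Orb_mono {i j : ℕ} (h : i ≤ j) (x : A) : D.Orb i x ≤ D.Orb j x := by
  intro y hy
  obtain ⟨g, hg, rfl⟩ := D.mem_Orb.1 hy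
  exact D.mem_Orb.2 ⟨g, Hsub_mono h hg, rfl⟩

lemma Orb_le {i : ℕ} {x : A} {N : Submodule K A} (hN : D.Stab i N) (hx : x ∈ N) : D.Orb i x ≤ N := by
  intro y hy
  obtain ⟨g, hg, rfl⟩ := D.mem_Orb.1 hy
  exact hN g hg x hx

lemma decTop {i : ℕ} (hi : i ≤ n) {N : Submodule K A} (hN : D.Stab i N) :
    N ≤ ⨆ t ∈ VL n i, D.W N t := D.decAll (fun l _ => D.PP_all l) hi hN

/-- lifting a weight along the orbit -/
lemma lift_W {b : Lab m} {t s : List (Lab m)} (hl : s.length = t.length) (hn : t.length < n) {x z : A}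
    (hx : x ∈ D.W ⊤ (b :: t)) (hz : z ∈ D.W (D.Orb t.length x) s) : z ∈ D.W ⊤ (b :: s) := by
  have h1 := D.W_le _ _ hz
  obtain ⟨g, hg, rfl⟩ := D.mem_Orb.1 h1
  have hx' := D.mem_W_cons.1 hx
  rw [mem_W_cons, hl]
  refine ⟨D.W_mono le_top _ hz, ?_, ?_⟩
  · rw [← mul_assoc, (D.L_comm hn hg).eq, mul_assoc, hx'.2.1, mul_smul_comm]
  · rw [← mul_assoc, (D.Z_comm hn hg).eq, mul_assoc, hx'.2.2, mul_smul_comm]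

open Classical in
/-- the scalar -/
noncomputable def al (b c : Lab m) : K := if h : ∃ α, D.IsAl b c α then h.choose else 0

lemma al_spec {b c : Lab m} (h : D.ρ b ≠ D.ρ c ∨ D.ζ b ≠ D.ζ c) : D.IsAl b c (D.al b c) := by
  have h' := D.al_exists h
  unfold al
  rw [dif_pos h']
  exact h'.choose_spec

lemma Alw_ne {s : List (Lab m)} {b c : Lab m} (h1 : Alw s c) (h2 : Alw (c :: s) b) : b ≠ c := by
  rintro rfl
  obtain ⟨j, b⟩ := b
  have h1 := h1.1
  have h2 := h2.1
  simp only [cnt_cons, true_and] at h1 h2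
  rw [if_pos trivial, if_neg (by omega)] at h2
  split_ifs at * <;> omega

lemma flip {b c : Lab m} {u : List (Lab m)} (hv : Vld (b :: c :: u)) (hl : u.length + 2 ≤ n) {x : A}
    (hx : x ∈ D.W ⊤ (b :: c :: u)) :
    D.T u.length * x - D.al b c • x ∈ D.W ⊤ (c :: b :: u) ∧
    (D.T u.length * x - D.al b c • x = 0 ∨ (Vld (c :: b :: u) ∧ b ≠ c ∧
      ∃ g ∈ D.Hs (u.length + 2), g * (D.T u.length * x - D.al b c • x) = x)) := by
  have hbc : b ≠ c := Alw_ne hv.2.1 hv.1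
  have hα := D.al_spec (D.sep hv.2 (by simp; omega) (Or.inr hv.1) (Or.inl (by simp)) hbc)
  have hw := D.psi (u := []) hα (by simpa using hl) (N := ⊤) (fun _ _ => Submodule.mem_top) hx
  refine ⟨hw, ?_⟩
  by_cases h0 : D.T u.length * x - D.al b c • x = 0
  · exact Or.inl h0
  right
  have hb : Alw u b := by
    by_contra hb
    apply h0
    set w := D.T u.length * x - D.al b c • x
    have hw1 := (D.mem_W_cons.1 hw).1
    obtain ⟨h2, h3, h4⟩ := D.mem_W_cons.1 hw1
    have h5 := D.PP_all u.length u rfl hv.2.2 (by omega) ⊤ (D.stab_top _) h2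
    obtain ⟨y, hy⟩ := (Submodule.mem_iSup_finset_iff_exists_sum _ _).1 h5
    classical
    refine indep (K := K) (AF n u) w (fun t => -(y t : A)) (by rw [← hy, sum_neg_distrib]; abel) ?_
    intro d hd
    have hd' := (mem_AF hv.2.2 (by omega)).1 hd
    have hy' : ∀ u' ∈ AF n u, _ := fun u' _ => (D.mem_W_cons.1 (y u').2).2
    have hdb : d ≠ b := fun e => hb (e ▸ hd')
    have hdR : InR (c :: u) d := by
      by_cases e : d = c
      · exact Or.inl (by simp [e])
      · exact Or.inr (Alw_cons hv.2.1 hd' (Ne.symm e))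
    rcases D.sep hv.2 (by simp; omega) hdR (Or.inr hv.1) hdb with h | h
    · exact ⟨D.L u.length, D.ρ, D.ρ b, h3, fun t ht => by rw [mul_neg, (hy' t ht).1, smul_neg], h⟩
    · exact ⟨D.Z u.length, D.ζ, D.ζ b, h4, fun t ht => by rw [mul_neg, (hy' t ht).2, smul_neg], h⟩
  have hk := D.kappa_ne hv.2.2 hl (Or.inr hb) (Or.inr hv.2.1) hbc (not_adj hb hv.2.1) hα
  refine ⟨⟨Alw_cons hb hv.2.1 hbc, hb, hv.2.2⟩, hbc,
    ((D.q - D.al b c) * (1 + D.al b c))⁻¹ • (D.T u.length - algebraMap K A (D.q - 1 - D.al b c)), ?_, ?_⟩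
  · exact Subalgebra.smul_mem _ (sub_mem (T_mem (by omega)) (Subalgebra.algebraMap_mem _ _)) _
  · rw [smul_mul_assoc, inv_smul_eq_iff₀ hk, sub_mul (D.T u.length), ← Algebra.smul_def, mul_sub,
      D.quad' (by omega), mul_smul_comm]
    module

end Dat
end CycloProof


namespace CycloProof
open Finset
namespace Dat
variable {K A : Type} [Field K] [Ring A] [Algebra K A] {m n : ℕ} (D : Dat K A m n)

/-- the Mackey submodule -/
def Mk (i : ℕ) (x : A) : Submodule K A :=
  Submodule.span K {y | (∃ h ∈ D.Hs i, y = h * x) ∨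
    ∃ j h h', j + 1 = i ∧ h ∈ D.Hs i ∧ h' ∈ D.Hs i ∧ y = h * (D.T j * (h' * x))}

lemma Mk1 {i : ℕ} {x h : A} (hh : h ∈ D.Hs i) : h * x ∈ D.Mk i x :=
  Submodule.subset_span (Or.inl ⟨h, hh, rfl⟩)

lemma Mk2 {j : ℕ} {x h h' : A} (hh : h ∈ D.Hs (j + 1)) (hh' : h' ∈ D.Hs (j + 1)) :
    h * (D.T j * (h' * x)) ∈ D.Mk (j + 1) x :=
  Submodule.subset_span (Or.inr ⟨j, h, h', rfl, hh, hh', rfl⟩)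

lemma Mk_le {i : ℕ} {x : A} {N : Submodule K A} (h1 : ∀ h ∈ D.Hs i, h * x ∈ N)
    (h2 : ∀ j, j + 1 = i → ∀ h ∈ D.Hs i, ∀ h' ∈ D.Hs i, h * (D.T j * (h' * x)) ∈ N) : D.Mk i x ≤ N := by
  rw [Mk, Submodule.span_le]
  rintro y (⟨h, hh, rfl⟩ | ⟨j, h, h', hj, hh, hh', rfl⟩)
  · exact h1 h hh
  · exact h2 j hj h hh h' hh'

lemma Mk_stab (i : ℕ) (x : A) : D.Stab i (D.Mk i x) := by
  intro g hg
  have : D.Mk i x ≤ (D.Mk i x).comap (LinearMap.mulLeft K g) := by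
    refine D.Mk_le (fun h hh => ?_) (fun j hj h hh h' hh' => ?_)
    · rw [Submodule.mem_comap, LinearMap.mulLeft_apply, ← mul_assoc]
      exact D.Mk1 (mul_mem hg hh)
    · subst hj
      rw [Submodule.mem_comap, LinearMap.mulLeft_apply, ← mul_assoc]
      exact D.Mk2 (mul_mem hg hh) hh'
  exact fun y hy => this hy

lemma stab_of_gen {i : ℕ} {N : Submodule K A} (ha : 1 ≤ i → ∀ y ∈ N, D.a * y ∈ N)
    (hT : ∀ j, j + 1 < i → ∀ y ∈ N, D.T j * y ∈ N) : D.Stab i N := by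
  intro h hh
  have hh' : h ∈ Hsub K D.a D.T i := hh
  unfold Hsub at hh'
  induction hh' using Algebra.adjoin_induction with
  | mem y hy =>
    rcases hy with ⟨h1, rfl⟩ | ⟨l, hl, rfl⟩
    · exact ha h1
    · exact hT _ hl
  | algebraMap r =>
    intro y hy
    rw [← Algebra.smul_def]
    exact N.smul_mem _ hy
  | add y z h3 h4 h1 h2 => intro x hx; rw [add_mul]; exact add_mem (h1 h3 x hx) (h2 h4 x hx)
  | mul y z h3 h4 h1 h2 => intro x hx; rw [mul_assoc]; exact h1 h3 _ (h2 h4 x hx)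

lemma T_comm_Hs {j : ℕ} (hj : j + 1 < n) {h : A} (hh : h ∈ D.Hs j) : Commute (D.T j) h :=
  commute_Hsub (fun h1 => (D.H.commA j h1 hj).symm) (fun l hl => (D.H.comm l j (by omega) hj).symm) hh

/-- Mackey property -/
def Mac (i : ℕ) : Prop := ∀ (b : Lab m) (t : List (Lab m)), t.length = i → Vld (b :: t) → i + 1 ≤ n →
    ∀ x ∈ D.W ⊤ (b :: t), D.Orb (i + 1) x ≤ D.Mk i x

/-- The structure of cyclic modules generated by weight vectors. -/
structure KK (i : ℕ) : Prop where
  k1 : ∀ t : List (Lab m), t ∈ VL n i → ∀ x ∈ D.W ⊤ t, ∀ y ∈ D.Orb i x, y ∈ D.W ⊤ t → ∃ c : K, y = c • x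
  k2 : ∀ t : List (Lab m), t ∈ VL n i → ∀ x ∈ D.W ⊤ t, ∀ y ∈ D.Orb i x, ∀ s ∈ VL n i, y ∈ D.W ⊤ s →
    y ≠ 0 → x ∈ D.Orb i y
  k4 : ∀ (b : Lab m) (t : List (Lab m)), b :: t ∈ VL n i → ∀ x ∈ D.W ⊤ (b :: t), ∀ y ∈ D.Orb i x,
    ∀ s, b :: s ∈ VL n i → y ∈ D.W ⊤ (b :: s) → y ∈ D.Orb (i - 1) x
  k5 : ∀ t : List (Lab m), t ∈ VL n i → ∀ x ∈ D.W ⊤ t, ∀ y ∈ D.Orb i x, ∀ s ∈ VL n i, y ∈ D.W ⊤ s →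
    y ≠ 0 → s.Perm t

lemma mac_zero : D.Mac 0 := by
  intro b t ht hv hn x hx
  have h0 := D.mem_W_cons.1 hx
  rw [ht] at h0
  refine D.Orb_le (D.stab_of_gen (fun _ => ?_) (fun j hj => by omega)) (by simpa using D.Mk1 (x := x) (one_mem (D.Hs 0)))
  have : D.Mk 0 x ≤ (D.Mk 0 x).comap (LinearMap.mulLeft K D.a) := by
    refine D.Mk_le (fun h hh => ?_) (fun j hj h hh h' hh' => by omega)
    have hh' := hh
    simp only [Hsub] at hh'
    have hc : Commute D.a h := by
      refine commute_Hsub (K := K) (a := D.a) (T := D.T) (i := 0) ?_ ?_ hh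
      · omega
      · omega
    rw [Submodule.mem_comap, LinearMap.mulLeft_apply, ← mul_assoc, hc.eq, mul_assoc]
    have e : D.a * x = D.ρ b • x := h0.2.1
    rw [e, mul_smul_comm]
    exact Submodule.smul_mem _ _ (D.Mk1 hh)
  exact fun y hy => this hy

lemma mac_succ {i : ℕ} (ih : D.Mac i) (hK : D.KK (i + 1)) : D.Mac (i + 1) := by
  intro b t ht hv hn x hx
  refine D.Orb_le (D.stab_of_gen (fun _ => ?_) (fun j hj => ?_))
    (by simpa using D.Mk1 (x := x) (one_mem (D.Hs (i + 1))))
  · exact D.Mk_stab _ _ _ (a_mem (by omega))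
  by_cases hj' : j + 1 < i + 1
  · exact D.Mk_stab _ _ _ (T_mem (by omega))
  have hji : j = i := by omega
  subst hji
  have : D.Mk (j + 1) x ≤ (D.Mk (j + 1) x).comap (LinearMap.mulLeft K (D.T j)) := by
    refine D.Mk_le (fun h hh => ?_) (fun l hl h hh h2 hh2 => ?_)
    · rw [Submodule.mem_comap, LinearMap.mulLeft_apply]
      simpa using D.Mk2 (x := x) (one_mem _) hh
    have hl' : l = j := by omega
    subst hl'
    -- reduce to weight vectors
    have key : ∀ y ∈ D.Orb (l + 1) x, D.T l * (h * (D.T l * y)) ∈ D.Mk (l + 1) x := by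
      have : D.Orb (l + 1) x ≤ (D.Mk (l + 1) x).comap (LinearMap.mulLeft K (D.T l) ∘ₗ
          LinearMap.mulLeft K h ∘ₗ LinearMap.mulLeft K (D.T l)) := by
        refine (D.decTop (by omega) (D.Orb_stab (l + 1) x)).trans (iSup₂_le fun s hs => ?_)
        intro z hz
        rw [Submodule.mem_comap]
        simp only [LinearMap.comp_apply, LinearMap.mulLeft_apply]
        have hs' := (mem_VL (by omega)).1 hs
        match s, hs', hz with
        | c :: u, hs', hz =>
        have hul : u.length = l := by simpa using hs'.2
        have hzO := D.W_le _ _ hz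
        obtain ⟨g0, hg0, hgz⟩ := D.mem_Orb.1 hzO
        rw [← ht] at hz
        by_cases hz0 : z = 0
        · rw [hz0]; simp
        have hzW := D.lift_W (by simp [hul, ht]) (by omega) hx hz
        have hperm := hK.k5 t ((mem_VL (by omega)).2 ⟨hv.2, ht⟩) x (D.mem_W_cons.1 hx).1 z hzO _ hs
            (D.mem_W_cons.1 hzW).1 hz0
        have hvz : Vld (b :: c :: u) := ⟨Alw_perm hperm.symm hv.1, hs'.1⟩
        obtain ⟨f1, f2⟩ := D.flip hvz (by omega) hzW
        rw [hul] at f1 f2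
        set w := D.T l * z - D.al b c • z with hw
        have eT : D.T l * z = w + D.al b c • z := by rw [hw]; abel
        rw [eT, mul_add, mul_add, mul_smul_comm, mul_smul_comm]
        have hb2 : ∀ g g', g ∈ D.Hs (l + 1) → g' ∈ D.Hs (l + 1) →
            g * (D.T l * (g' * z)) ∈ D.Mk (l + 1) x := by
          intro g g' hg hg'
          rw [← hgz, ← mul_assoc g']
          exact D.Mk2 hg (mul_mem hg' hg0)
        have hb1 : ∀ g, g ∈ D.Hs (l + 1) → g * z ∈ D.Mk (l + 1) x := by
          intro g hg
          rw [← hgz, ← mul_assoc]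
          exact D.Mk1 (mul_mem hg hg0)
        refine add_mem ?_ (Submodule.smul_mem _ _ ?_)
        swap
        · simpa using hb2 1 h (one_mem _) hh
        rcases f2 with f2 | ⟨f2, -, -⟩
        · rw [f2]; simp
        have hm := ih b u hul f2.2 (by omega) w (D.mem_W_cons.1 f1).1 (D.mem_Orb.2 ⟨h, hh, rfl⟩)
        have hlast : D.Mk l w ≤ (D.Mk (l + 1) x).comap (LinearMap.mulLeft K (D.T l)) := by
          have tw : ∀ g ∈ D.Hs l, g * w = D.T l * (g * z) - D.al b c • (g * z) := by
            intro g hg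
            rw [hw, mul_sub, ← mul_assoc, ← (D.T_comm_Hs (by omega) hg).eq, mul_assoc, mul_smul_comm]
          have up : ∀ {g}, g ∈ D.Hs l → g ∈ D.Hs (l + 1) := fun hg => Hsub_mono (by omega) hg
          refine D.Mk_le (fun g hg => ?_) (fun p hp g hg g' hg' => ?_)
          · rw [Submodule.mem_comap, LinearMap.mulLeft_apply, tw g hg, mul_sub, D.quad' (by omega),
              mul_smul_comm]
            have e1 : D.T l * (g * z) ∈ D.Mk (l + 1) x := by
              simpa using hb2 1 g (one_mem _) (up hg)
            exact sub_mem (add_mem (Submodule.smul_mem _ _ e1) (Submodule.smul_mem _ _ (hb1 g (up hg))))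
              (Submodule.smul_mem _ _ e1)
          · subst hp
            have hTp : D.T p ∈ D.Hs (p + 1 + 1) := T_mem (by omega)
            rw [Submodule.mem_comap, LinearMap.mulLeft_apply, tw g' hg', ← mul_assoc,
              (D.T_comm_Hs (by omega) hg).eq, mul_assoc, mul_sub, mul_sub, mul_sub]
            refine sub_mem ?_ ?_
            · have br := D.H.braid p (by omega)
              have e : D.T (p + 1) * (D.T p * (D.T (p + 1) * (g' * z))) =
                  D.T p * (D.T (p + 1) * ((D.T p * g') * z)) := by
                simp only [← mul_assoc, br]
              rw [e, ← mul_assoc g]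
              exact hb2 _ _ (mul_mem (up hg) hTp) (mul_mem hTp (up hg'))
            · rw [mul_smul_comm, mul_smul_comm, mul_smul_comm, ← mul_assoc (D.T p)]
              exact Submodule.smul_mem _ _ (hb2 _ _ (up hg) (mul_mem hTp (up hg')))
        exact hlast hm
      exact fun y hy => this hy
    exact key _ (D.mem_Orb.2 ⟨h2, hh2, rfl⟩)
  exact fun y hy => this hy

end Dat
end CycloProof


namespace CycloProof
open Finset
namespace Dat
variable {K A : Type} [Field K] [Ring A] [Algebra K A] {m n : ℕ} (D : Dat K A m n)

lemma KK_zero : D.KK 0 := by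
  have h0 : ∀ t : List (Lab m), t ∈ VL n 0 → t = [] := by simp [VL]
  have hO : ∀ x y, y ∈ D.Orb 0 x → ∃ c : K, y = c • x := by
    intro x y hy
    obtain ⟨h, hh, rfl⟩ := D.mem_Orb.1 hy
    have : D.Hs 0 = ⊥ := by
      show Algebra.adjoin K _ = ⊥
      rw [← Algebra.adjoin_empty]
      congr 1
      ext x; simp
    rw [this] at hh
    obtain ⟨c, rfl⟩ := Algebra.mem_bot.1 hh
    exact ⟨c, by rw [Algebra.smul_def]⟩
  refine ⟨?_, ?_, ?_, ?_⟩
  · intro t ht x hx y hy _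
    exact hO x y hy
  · intro t ht x hx y hy s hs hys hy0
    obtain ⟨c, rfl⟩ := hO x y hy
    have hc : c ≠ 0 := by rintro rfl; simp at hy0
    have := (D.Orb 0 (c • x)).smul_mem c⁻¹ (D.self_Orb 0 (c • x))
    rwa [inv_smul_smul₀ hc] at this
  · intro b t ht x hx y hy s hs _
    exact hy
  · intro t ht x hx y hy s hs _ _
    rw [h0 t ht, h0 s hs]

lemma KK_succ {i : ℕ} (hi : i + 1 ≤ n) (hK : D.KK i) (hM : D.Mac i) : D.KK (i + 1) := by
  classical
  -- main structural claim
  have main : ∀ (b : Lab m) (t : List (Lab m)), b :: t ∈ VL n (i + 1) → ∀ x ∈ D.W ⊤ (b :: t),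
      ∃ w X : Lab m → A, (∀ d, d ≠ b → w d ≠ 0 → ∃ u, b :: u ∈ VL n i ∧ w d ∈ D.W ⊤ (b :: u) ∧
        X d ∈ D.Orb (i + 1) (w d) ∧ x ∈ D.Orb i (X d)) ∧
      ∀ y ∈ D.Orb (i + 1) x, ∀ d s, d :: s ∈ VL n (i + 1) → y ∈ D.W ⊤ (d :: s) → y ≠ 0 →
        (d :: s).Perm (b :: t) ∧ (d = b → y ∈ D.Orb i x) ∧ (d ≠ b → y ∈ D.Orb i (w d)) := by
    intro b t ht x hx
    have ht' := (mem_VL hi).1 ht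
    have htl : t.length = i := by simpa using ht'.2
    have htV : t ∈ VL n i := (mem_VL (by omega)).2 ⟨ht'.1.2, htl⟩
    have hxt := (D.mem_W_cons.1 hx).1
    by_cases hx0 : x = 0
    · refine ⟨fun _ => 0, fun _ => 0, fun d _ h => absurd rfl h, ?_⟩
      intro y hy d s _ _ hy0
      obtain ⟨h, _, rfl⟩ := D.mem_Orb.1 hy
      simp [hx0] at hy0
    -- choice of X
    have hch : ∀ d : Lab m, ∃ (X : A) (u : List (Lab m)), X ∈ D.Orb i x ∧ ((∃ (z : A) (u' : List (Lab m)), d :: u' ∈ VL n i ∧ z ∈ D.W (D.Orb i x) (d :: u') ∧ z ≠ 0) →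
        d :: u ∈ VL n i ∧ X ∈ D.W (D.Orb i x) (d :: u) ∧ X ≠ 0) ∧
        ((¬ ∃ (z : A) (u' : List (Lab m)), d :: u' ∈ VL n i ∧ z ∈ D.W (D.Orb i x) (d :: u') ∧ z ≠ 0) → X = 0) := by
      intro d
      by_cases h : ∃ (z : A) (u' : List (Lab m)), d :: u' ∈ VL n i ∧ z ∈ D.W (D.Orb i x) (d :: u') ∧ z ≠ 0
      · obtain ⟨z, u, h1, h2, h3⟩ := h
        exact ⟨z, u, D.W_le _ _ h2, fun _ => ⟨h1, h2, h3⟩, fun h' => absurd ⟨z, u, h1, h2, h3⟩ h'⟩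
      · exact ⟨0, [], zero_mem _, fun h' => absurd h' h, fun _ => rfl⟩
    choose X u hXO hX1 hX2 using hch
    set w : Lab m → A := fun d => D.T (i - 1) * X d - D.al b d • X d with hwdef
    -- facts on w
    have hw : ∀ d, w d ≠ 0 → d :: u d ∈ VL n i ∧ X d ≠ 0 ∧ X d ∈ D.W ⊤ (d :: u d) ∧ X d ∈ D.Orb i x ∧
        (d :: u d).Perm t ∧ Vld (d :: b :: u d) ∧ w d ∈ D.W ⊤ (d :: b :: u d) ∧
        X d ∈ D.Orb (i + 1) (w d) ∧ b ≠ d := by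
      intro d hwd
      have hex : ∃ (z : A) (u' : List (Lab m)), d :: u' ∈ VL n i ∧ z ∈ D.W (D.Orb i x) (d :: u') ∧ z ≠ 0 := by
        by_contra hno
        apply hwd
        simp [hwdef, hX2 d hno]
      obtain ⟨h1, h2, h3⟩ := hX1 d hex
      have h4 := D.W_mono le_top _ h2
      have hp := hK.k5 t htV x hxt _ (hXO d) _ h1 h4 h3
      have h1' := (mem_VL (by omega)).1 h1
      have hul : (u d).length + 1 = i := by simpa using h1'.2
      have hul' : i - 1 = (u d).length := by omega
      have hl := D.lift_W (b := b) (t := t) (s := d :: u d) (by simp; omega) (by omega) hx (z := X d)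
        (by rw [htl]; exact h2)
      have hvz : Vld (b :: d :: u d) := ⟨Alw_perm hp.symm ht'.1.1, h1'.1⟩
      obtain ⟨f1, f2⟩ := D.flip hvz (by omega) hl
      rw [← hul'] at f1 f2
      rcases f2 with f2 | ⟨f2, f3, g, hg, f4⟩
      · exact absurd f2 hwd
      · refine ⟨h1, h3, h4, hXO d, hp, f2, f1, D.mem_Orb.2 ⟨g, ?_, f4⟩, f3⟩
        have : i - 1 + 2 = i + 1 := by omega
        rwa [this] at hg
    refine ⟨w, X, ?_, ?_⟩
    · intro d hdb hwd
      obtain ⟨h1, h2, h3, h4, h5, h6, h7, h8, h9⟩ := hw d hwd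
      have h1' := (mem_VL (by omega)).1 h1
      exact ⟨u d, (mem_VL (by omega)).2 ⟨h6.2, by simpa using h1'.2⟩, (D.mem_W_cons.1 h7).1, h8,
        hK.k2 t htV x hxt _ h4 _ h1 h3 h2⟩
    -- images of weight vectors
    have hzw : ∀ d u', d :: u' ∈ VL n i → ∀ z ∈ D.W (D.Orb i x) (d :: u'),
        D.T (i - 1) * z - D.al b d • z ∈ D.Orb i (w d) := by
      intro d u' hdu z hz
      by_cases hz0 : z = 0
      · rw [hz0]; simp
      obtain ⟨h1, h2, h3⟩ := hX1 d ⟨z, u', hdu, hz, hz0⟩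
      have h4 := D.W_mono le_top _ h2
      have h5 := hK.k2 t htV x hxt _ (hXO d) _ h1 h4 h3
      have h6 := D.Orb_trans h5 (D.W_le _ _ hz)
      have h7 := hK.k4 d (u d) h1 _ h4 z h6 u' hdu (D.W_mono le_top _ hz)
      obtain ⟨g, hg, rfl⟩ := D.mem_Orb.1 h7
      have h1' := (mem_VL (by omega)).1 h1
      have hul : (u d).length + 1 = i := by simpa using h1'.2
      refine D.mem_Orb.2 ⟨g, Hsub_mono (by omega) hg, ?_⟩
      simp only [hwdef]
      rw [mul_sub, ← mul_assoc, ← (D.T_comm_Hs (by omega) hg).eq, mul_assoc, mul_smul_comm]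
    -- the decomposition
    set F := (VL n (i + 1)).filter (fun r => r.Perm (b :: t)) with hF
    set G : List (Lab m) → Submodule K A := fun r =>
      (if r.headD b = b then D.Orb i x else D.Orb i (w (r.headD b))) ⊓ D.W ⊤ r with hG
    have o1 : D.Orb i x ≤ ⨆ r ∈ F, G r := by
      refine (D.decTop (by omega) (D.Orb_stab i x)).trans (iSup₂_le fun s hs => ?_)
      intro z hz
      by_cases hz0 : z = 0
      · rw [hz0]; exact zero_mem _
      have hs' := (mem_VL (by omega)).1 hs
      have hz1 := D.W_mono le_top _ hz
      have hp := hK.k5 t htV x hxt z (D.W_le _ _ hz) s hs hz1 hz0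
      have hl := D.lift_W (b := b) (t := t) (s := s) (by omega) (by omega) hx (z := z)
        (by rw [htl]; exact hz)
      refine Submodule.mem_iSup_of_mem (b :: s) (Submodule.mem_iSup_of_mem ?_ ?_)
      · rw [hF, mem_filter, mem_VL hi]
        exact ⟨⟨⟨Alw_perm hp.symm ht'.1.1, hs'.1⟩, by simp [hs'.2]⟩, hp.cons b⟩
      · simp only [hG, List.headD_cons, if_true]
        exact ⟨D.W_le _ _ hz, hl⟩
    have o2 : ∀ d, D.Orb i (w d) ≤ ⨆ r ∈ F, G r := by
      intro d
      by_cases hwd : w d = 0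
      · intro y hy
        obtain ⟨h, _, rfl⟩ := D.mem_Orb.1 hy
        rw [hwd, mul_zero]; exact zero_mem _
      obtain ⟨h1, h2, h3, h4, h5, h6, h7, h8, h9⟩ := hw d hwd
      have h1' := (mem_VL (by omega)).1 h1
      have hul : (u d).length + 1 = i := by simpa using h1'.2
      refine (D.decTop (by omega) (D.Orb_stab i (w d))).trans (iSup₂_le fun s hs => ?_)
      intro z hz
      by_cases hz0 : z = 0
      · rw [hz0]; exact zero_mem _
      have hs' := (mem_VL (by omega)).1 hs
      have hz1 := D.W_mono le_top _ hz
      have hp := hK.k5 (b :: u d) ((mem_VL (by omega)).2 ⟨h6.2, by simpa using hul⟩) (w d)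
        (D.mem_W_cons.1 h7).1 z (D.W_le _ _ hz) s hs hz1 hz0
      have hl := D.lift_W (b := d) (t := b :: u d) (s := s) (by simp; omega) (by simp; omega) h7 (z := z)
        (by rw [List.length_cons, hul]; exact hz)
      refine Submodule.mem_iSup_of_mem (d :: s) (Submodule.mem_iSup_of_mem ?_ ?_)
      · rw [hF, mem_filter, mem_VL hi]
        refine ⟨⟨⟨Alw_perm hp.symm h6.1, hs'.1⟩, by simp [hs'.2]⟩, ?_⟩
        exact (hp.cons d).trans ((List.Perm.swap _ _ _).trans (h5.cons b))
      · have hdb : d ≠ b := Ne.symm h9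
        simp only [hG, List.headD_cons, hdb, if_false]
        exact ⟨D.W_le _ _ hz, hl⟩
    have o3 : D.Orb (i + 1) x ≤ ⨆ r ∈ F, G r := by
      refine (hM b t htl ht'.1 hi x hx).trans (D.Mk_le (fun h hh => ?_) (fun j hj h hh h' hh' => ?_))
      · exact o1 (D.mem_Orb.2 ⟨h, hh, rfl⟩)
      have hji : j = i - 1 := by omega
      have : D.Orb i x ≤ (⨆ r ∈ F, G r).comap (LinearMap.mulLeft K h ∘ₗ LinearMap.mulLeft K (D.T j)) := by
        refine (D.decTop (by omega) (D.Orb_stab i x)).trans (iSup₂_le fun s hs => ?_)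
        intro z hz
        rw [Submodule.mem_comap]
        simp only [LinearMap.comp_apply, LinearMap.mulLeft_apply]
        have hs' := (mem_VL (by omega)).1 hs
        match s, hs', hz, hs with
        | [], hs', hz, hs => exfalso; have := hs'.2; simp at this; omega
        | d :: u', hs', hz, hs =>
          have e1 := hzw d u' hs z hz
          rw [← hji] at e1
          have e2 : h * (D.T j * z) = h * (D.T j * z - D.al b d • z) + D.al b d • (h * z) := by
            rw [mul_sub, mul_smul_comm]; abel
          rw [e2]
          exact add_mem (o2 d (D.Orb_stab _ _ h hh _ e1)) (Submodule.smul_mem _ _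
            (o1 (D.Orb_stab _ _ h hh _ (D.W_le _ _ hz))))
      exact this (D.mem_Orb.2 ⟨h', hh', rfl⟩)
    intro y hy d s hds hys hy0
    obtain ⟨p1, p2⟩ := D.proj hi F (filter_subset _ _) G (fun r _ => inf_le_right) hds hys (o3 hy) hy0
    refine ⟨(mem_filter.1 p1).2, fun e => ?_, fun e => ?_⟩
    · have := p2.1
      rw [List.headD_cons, if_pos e] at this
      exact this
    · have := p2.1
      rw [List.headD_cons, if_neg e] at this
      exact this
  -- conclusions
  have k2 : ∀ t : List (Lab m), t ∈ VL n (i + 1) → ∀ x ∈ D.W ⊤ t, ∀ y ∈ D.Orb (i + 1) x,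
      ∀ s ∈ VL n (i + 1), y ∈ D.W ⊤ s → y ≠ 0 → x ∈ D.Orb (i + 1) y := by
    intro t ht x hx y hy s hs hys hy0
    match t, ht, hx, s, hs, hys with
    | [], ht, _, _, _, _ => have := ((mem_VL hi).1 ht).2; simp at this
    | b :: t, _, _, [], hs, _ => have := ((mem_VL hi).1 hs).2; simp at this
    | b :: t, ht, hx, d :: s, hs, hys =>
      obtain ⟨w, X, h1, h2⟩ := main b t ht x hx
      obtain ⟨-, h3, h4⟩ := h2 y hy d s hs hys hy0
      have ht' := (mem_VL hi).1 ht
      have hs' := (mem_VL hi).1 hs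
      have htV : t ∈ VL n i := (mem_VL (by omega)).2 ⟨ht'.1.2, by simpa using ht'.2⟩
      have hsV : s ∈ VL n i := (mem_VL (by omega)).2 ⟨hs'.1.2, by simpa using hs'.2⟩
      have hys' := (D.mem_W_cons.1 hys).1
      by_cases e : d = b
      · exact D.Orb_mono (by omega) _ (hK.k2 t htV x (D.mem_W_cons.1 hx).1 y (h3 e) s hsV hys' hy0)
      · have h5 := h4 e
        have hw0 : w d ≠ 0 := by
          intro h0
          obtain ⟨h, _, rfl⟩ := D.mem_Orb.1 h5
          simp [h0] at hy0
        obtain ⟨u, h6, h7, h8, h9⟩ := h1 d e hw0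
        have h10 := hK.k2 (b :: u) h6 (w d) h7 y h5 s hsV hys' hy0
        exact D.Orb_trans (D.Orb_trans (D.Orb_mono (by omega) _ h10) h8) (D.Orb_mono (by omega) _ h9)
  have k4 : ∀ (b : Lab m) (t : List (Lab m)), b :: t ∈ VL n (i + 1) → ∀ x ∈ D.W ⊤ (b :: t),
      ∀ y ∈ D.Orb (i + 1) x, ∀ s, b :: s ∈ VL n (i + 1) → y ∈ D.W ⊤ (b :: s) → y ∈ D.Orb i x := by
    intro b t ht x hx y hy s hs hys
    by_cases hy0 : y = 0
    · rw [hy0]; exact zero_mem _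
    obtain ⟨w, X, h1, h2⟩ := main b t ht x hx
    exact (h2 y hy b s hs hys hy0).2.1 rfl
  refine ⟨?_, k2, k4, ?_⟩
  · intro t ht x hx y hy hyt
    match t, ht, hx, hyt with
    | [], ht, _, _ => have := ((mem_VL hi).1 ht).2; simp at this
    | b :: t, ht, hx, hyt =>
      have ht' := (mem_VL hi).1 ht
      have htV : t ∈ VL n i := (mem_VL (by omega)).2 ⟨ht'.1.2, by simpa using ht'.2⟩
      exact hK.k1 t htV x (D.mem_W_cons.1 hx).1 y (k4 b t ht x hx y hy t ht hyt) (D.mem_W_cons.1 hyt).1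
  · intro t ht x hx y hy s hs hys hy0
    match t, ht, hx, s, hs, hys with
    | [], ht, _, _, _, _ => have := ((mem_VL hi).1 ht).2; simp at this
    | b :: t, _, _, [], hs, _ => have := ((mem_VL hi).1 hs).2; simp at this
    | b :: t, ht, hx, d :: s, hs, hys =>
      obtain ⟨w, X, h1, h2⟩ := main b t ht x hx
      exact (h2 y hy d s hs hys hy0).1

lemma KK_all (i : ℕ) (hi : i + 1 ≤ n) : D.KK i ∧ D.Mac i := by
  induction i with
  | zero => exact ⟨D.KK_zero, D.mac_zero⟩
  | succ i ih =>
    obtain ⟨h1, h2⟩ := ih (by omega)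
    have h3 := D.KK_succ (by omega) h1 h2
    exact ⟨h3, D.mac_succ h2 h3⟩

lemma KK_n : D.KK n := by
  have := D.hn
  obtain ⟨k, rfl⟩ : ∃ k, n = k + 1 := ⟨n - 1, by omega⟩
  obtain ⟨h1, h2⟩ := D.KK_all k le_rfl
  exact D.KK_succ le_rfl h1 h2

lemma orb_simple (hgen : D.Hs n = ⊤) {t : List (Lab m)} (ht : t ∈ VL n n) {x : A} (hx : x ∈ D.W ⊤ t)
    (h0 : x ≠ 0) : IsSimpleModule A (Submodule.span A {x}) := by
  rw [isSimpleModule_iff_isAtom]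
  refine ⟨?_, ?_⟩
  · rw [Ne, Submodule.span_singleton_eq_bot]; exact h0
  · intro N hN
    by_contra hne
    apply hN.not_ge
    obtain ⟨y, hy, hy0⟩ := Submodule.exists_mem_ne_zero_of_ne_bot hne
    rw [Submodule.span_singleton_le_iff_mem]
    have hst : D.Stab n (N.restrictScalars K) := fun h _ z hz => N.smul_mem h hz
    have hdec := D.decTop le_rfl hst (show y ∈ N.restrictScalars K from hy)
    obtain ⟨z, hz⟩ := (Submodule.mem_iSup_finset_iff_exists_sum _ _).1 hdec
    have hex : ∃ s ∈ VL n n, (z s : A) ≠ 0 := by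
      by_contra hcon
      push Not at hcon
      exact hy0 (by rw [← hz]; exact sum_eq_zero hcon)
    obtain ⟨s, hs, hzs⟩ := hex
    have hzN : (z s : A) ∈ N := D.W_le _ _ (z s).2
    obtain ⟨g, hg⟩ := Submodule.mem_span_singleton.1 (hN.le hzN)
    have := D.KK_n.k2 t ht x hx (z s) (D.mem_Orb.2 ⟨g, by rw [hgen]; trivial, hg⟩) s hs
      (D.W_mono le_top _ (z s).2) hzs
    obtain ⟨g', -, hg'⟩ := D.mem_Orb.1 this
    rw [← hg']
    exact N.smul_mem g' hzN

theorem semisimple (hgen : D.Hs n = ⊤) : IsSemisimpleRing A := by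
  have hdec := D.decTop le_rfl (D.stab_top n) (Submodule.mem_top (x := (1 : A)))
  obtain ⟨e, he⟩ := (Submodule.mem_iSup_finset_iff_exists_sum _ _).1 hdec
  show IsSemisimpleModule A A
  refine IsSemisimpleModule.of_sSup_simples_eq_top ?_
  rw [eq_top_iff]
  intro y _
  have : y = ∑ t ∈ VL n n, y • (e t : A) := by
    rw [← smul_sum, he, smul_eq_mul, mul_one]
  rw [this]
  refine Submodule.sum_mem _ fun t ht => Submodule.smul_mem _ _ ?_
  by_cases h0 : (e t : A) = 0
  · rw [h0]; exact zero_mem _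
  · have hs := D.orb_simple hgen ht (e t).2 h0
    exact (le_sSup (a := Submodule.span A {(e t : A)}) hs) (Submodule.mem_span_singleton_self _)

end Dat
end CycloProof


namespace CycloProof
open Finset

/-- spectral idempotents -/
lemma idem {K A : Type} [Field K] [Ring A] [Algebra K A] {m : ℕ} (hm : m ≠ 0) (v : Fin m → K)
    (hv : ∀ j j', j ≠ j' → v j ≠ v j') (x : A)
    (hx : Polynomial.aeval x (∏ j, (Polynomial.X - Polynomial.C (v j))) = 0) :
    ∃ E : Fin m → A, (∀ j, E j ∈ Algebra.adjoin K {x}) ∧ ∑ j, E j = 1 ∧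
      (∀ j, x * E j = v j • E j) ∧ (∀ j, E j * x = v j • E j) ∧ (∀ j, E j * E j = E j) ∧
      (∀ j k, j ≠ k → E j * E k = 0) := by
  have hinj : Set.InjOn v (univ : Finset (Fin m)) := by
    intro a _ b _ h
    by_contra hne
    exact hv a b hne h
  set E : Fin m → A := fun j => Polynomial.aeval x (Lagrange.basis univ v j) with hE
  have h1 : ∀ j, x * E j = v j • E j := by
    intro j
    have : (Polynomial.X - Polynomial.C (v j)) * Lagrange.basis univ v j =
        Polynomial.C (∏ k ∈ univ.erase j, (v j - v k)⁻¹) * ∏ j, (Polynomial.X - Polynomial.C (v j)) := by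
      rw [Lagrange.basis, map_prod, ← mul_prod_erase univ (fun j => Polynomial.X - Polynomial.C (v j)) (mem_univ j)]
      simp only [Lagrange.basisDivisor, prod_mul_distrib]
      ring
    have h2 := congrArg (Polynomial.aeval x) this
    rw [map_mul, map_mul, hx, mul_zero, map_sub, Polynomial.aeval_X, Polynomial.aeval_C, sub_mul,
      sub_eq_zero, ← Algebra.smul_def] at h2
    exact h2
  have hp : ∀ (p : Polynomial K) j, Polynomial.aeval x p * E j = p.eval (v j) • E j := by
    intro p j
    induction p using Polynomial.induction_on' with
    | add p q h1 h2 => rw [map_add, add_mul, h1, h2, Polynomial.eval_add, add_smul]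
    | monomial k c =>
      rw [Polynomial.aeval_monomial, Polynomial.eval_monomial, mul_assoc, ← Algebra.smul_def, mul_smul]
      congr 1
      induction k with
      | zero => simp
      | succ k ih => rw [pow_succ, mul_assoc, h1, mul_smul_comm, ih, smul_smul, pow_succ, mul_comm]
  have hb : ∀ j k, E j * E k = (Lagrange.basis univ v j).eval (v k) • E k := fun j k => hp _ _
  refine ⟨E, fun j => ?_, ?_, h1, fun j => ?_, fun j => ?_, fun j k hjk => ?_⟩
  · exact Polynomial.aeval_mem_adjoin_singleton _ _
  · rw [hE, ← map_sum, Lagrange.sum_basis hinj ⟨⟨0, by omega⟩, mem_univ _⟩, map_one]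
  · rw [← h1]
    have := (Polynomial.aeval_X (R := K) x)
    conv_lhs => rw [← this]
    conv_rhs => rw [← this]
    rw [hE, ← map_mul, ← map_mul, mul_comm]
  · rw [hb, Lagrange.eval_basis_self hinj (mem_univ _), one_smul]
  · rw [hb, Lagrange.eval_basis_of_ne hjk (mem_univ _), zero_smul]

section one
variable {K A : Type} [Field K] [Ring A] [Algebra K A] {n : ℕ} {a : A} {T : ℕ → A}

/-- the coset representatives -/
def cr (T : ℕ → A) (r : ℕ) : ℕ → A
  | 0 => 1
  | k + 1 => cr T r k * T (r + k)

/-- inverse -/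
def cri (T : ℕ → A) (r : ℕ) : ℕ → A
  | 0 => 1
  | k + 1 => T (r + k) * cri T r k

lemma T_sq (H : HD (1 : K) n a T) {i : ℕ} (hi : i + 1 < n) : T i * T i = 1 := by
  rw [H.quad i hi]; simp

lemma cr_cri (H : HD (1 : K) n a T) (r k : ℕ) (h : r + k < n) : cr T r k * cri T r k = 1 ∧
    cri T r k * cr T r k = 1 := by
  induction k with
  | zero => simp [cr, cri]
  | succ k ih =>
    have h1 := T_sq H (i := r + k) (by omega)
    obtain ⟨h2, h3⟩ := ih (by omega)
    constructor
    · rw [cr, cri, mul_assoc, ← mul_assoc (T (r + k)), h1, one_mul, h2]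
    · rw [cr, cri, mul_assoc, ← mul_assoc (cri T r k), h3, one_mul, h1]

lemma cr_succ (T : ℕ → A) (r k : ℕ) : T r * cr T (r + 1) k = cr T r (k + 1) := by
  induction k with
  | zero => simp [cr]
  | succ k ih =>
    show T r * (cr T (r + 1) k * T (r + 1 + k)) = cr T r (k + 1) * T (r + (k + 1))
    rw [← mul_assoc, ih, show r + 1 + k = r + (k + 1) by omega]

lemma cr_comm {x : A} {r : ℕ} (k : ℕ) (h : ∀ l, l < k → Commute x (T (r + l))) : Commute x (cr T r k) := by
  induction k with
  | zero => exact Commute.one_right x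
  | succ k ih => exact (ih (fun l hl => h l (by omega))).mul_right (h k (by omega))

lemma cr_high (H : HD (1 : K) n a T) (r k l : ℕ) (hl : l + 2 ≤ k) (h : r + k < n) :
    T (r + l + 1) * cr T r k = cr T r k * T (r + l) := by
  induction k with
  | zero => omega
  | succ k ih =>
    by_cases e : l + 2 ≤ k
    · rw [cr, ← mul_assoc, ih e (by omega), mul_assoc, (H.comm (r + l) (r + k) (by omega) (by omega)).eq,
        mul_assoc]
    · have hk : k = l + 1 := by omega
      subst hk
      rw [cr, cr]
      have c1 : Commute (T (r + l + 1)) (cr T r l) :=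
        cr_comm l (fun p hp => (H.comm (r + p) (r + l + 1) (by omega) (by omega)).symm)
      have br := H.braid (r + l) (by omega)
      rw [show r + (l + 1) = r + l + 1 by omega]
      calc T (r + l + 1) * (cr T r l * T (r + l) * T (r + l + 1))
          = (T (r + l + 1) * cr T r l) * (T (r + l) * T (r + l + 1)) := by simp only [mul_assoc]
        _ = cr T r l * (T (r + l + 1) * T (r + l) * T (r + l + 1)) := by rw [c1.eq]; simp only [mul_assoc]
        _ = _ := by rw [br]; simp only [mul_assoc]

lemma L_cr (k : ℕ) (H : HD (1 : K) n a T) (h : k < n) : a * cr T 0 k = cr T 0 k * LL (1 : K) a T k := by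
  induction k with
  | zero => simp [cr, LL, JM]
  | succ k ih =>
    have e : LL (1 : K) a T (k + 1) = T k * LL (1 : K) a T k * T k := by
      simp [LL, JM]
    rw [e, cr, ← mul_assoc, ih (by omega), zero_add]
    simp only [mul_assoc]
    rw [← mul_assoc (T k) (T k), T_sq H (by omega), one_mul]

lemma L_root (H : HD (1 : K) n a T) (P : Polynomial K) (hP : Polynomial.aeval a P = 0) (i : ℕ) (hi : i < n) :
    Polynomial.aeval (LL (1 : K) a T i) P = 0 := by
  have key : ∀ p : Polynomial K, cr T 0 i * Polynomial.aeval (LL (1 : K) a T i) p =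
      Polynomial.aeval a p * cr T 0 i := by
    intro p
    induction p using Polynomial.induction_on' with
    | add p q h1 h2 => rw [map_add, map_add, add_mul, mul_add, h1, h2]
    | monomial k c =>
      rw [Polynomial.aeval_monomial, Polynomial.aeval_monomial, ← Algebra.smul_def, ← Algebra.smul_def,
        mul_smul_comm, smul_mul_assoc]
      congr 1
      induction k with
      | zero => simp
      | succ k ih => rw [pow_succ, ← mul_assoc, ih, mul_assoc, ← L_cr i H hi, pow_succ, mul_assoc]
  have h1 := key P
  rw [hP, zero_mul] at h1
  have h2 := (cr_cri H 0 i (by omega)).2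
  rw [← one_mul (Polynomial.aeval _ P), ← h2, mul_assoc, h1, mul_zero]

lemma sum_swap (i j : ℕ) (hj : j < i) {M : Type} [AddCommMonoid M] (f g : ℕ → M)
    (h1 : f j = g (j + 1)) (h2 : f (j + 1) = g j) (h3 : ∀ r, r ≤ i → r ≠ j → r ≠ j + 1 → f r = g r) :
    ∑ r ∈ range (i + 1), f r = ∑ r ∈ range (i + 1), g r := by
  refine sum_bij (fun r _ => Equiv.swap j (j + 1) r) ?_ ?_ ?_ ?_
  · intro r hr
    rw [mem_range] at *
    rw [Equiv.swap_apply_def]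
    split_ifs <;> omega
  · intro r _ s _ h
    exact (Equiv.swap j (j + 1)).injective h
  · intro r hr
    refine ⟨Equiv.swap j (j + 1) r, ?_, Equiv.swap_apply_self _ _ _⟩
    rw [mem_range] at *
    rw [Equiv.swap_apply_def]
    split_ifs <;> omega
  · intro r hr
    rw [mem_range] at hr
    by_cases e1 : r = j
    · subst e1; rw [Equiv.swap_apply_left]; exact h1
    by_cases e2 : r = j + 1
    · subst e2; rw [Equiv.swap_apply_right]; exact h2
    rw [Equiv.swap_apply_of_ne_of_ne e1 e2]
    exact h3 r (by omega) e1 e2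

lemma average {m : ℕ} (hm : m ≠ 0) (H : HD (1 : K) n a T) (v : Fin m → K)
    (hv : ∀ j j', j ≠ j' → v j ≠ v j')
    (ha : Polynomial.aeval a (∏ j, (Polynomial.X - Polynomial.C (v j))) = 0)
    (hchar : ∀ i : ℕ, 1 ≤ i → i ≤ n → (i : K) ≠ 0) (U : Submodule A A) (i : ℕ) (hi : i ≤ n) :
    ∃ p : A →ₗ[K] A, (∀ x, p x ∈ U) ∧ (∀ x ∈ U, p x = x) ∧ ∀ h ∈ Hsub K a T i, ∀ x, p (h * x) = h * p x := by
  induction i with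
  | zero =>
    obtain ⟨V, hV⟩ := Submodule.exists_isCompl (U.restrictScalars K)
    refine ⟨(U.restrictScalars K).subtype ∘ₗ (U.restrictScalars K).projectionOnto V hV, ?_, ?_, ?_⟩
    · intro x; exact ((U.restrictScalars K).projectionOnto V hV x).2
    · intro x hx
      have := Submodule.projectionOnto_apply_left hV ⟨x, hx⟩
      simp only [LinearMap.comp_apply] at *
      rw [this]; rfl
    · intro h hh x
      have : Hsub K a T 0 = ⊥ := by
        rw [Hsub, ← Algebra.adjoin_empty]
        congr 1
        ext x; simp
      rw [this] at hh
      obtain ⟨c, rfl⟩ := Algebra.mem_bot.1 hh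
      rw [← Algebra.smul_def, ← Algebra.smul_def, map_smul]
  | succ i ih =>
    obtain ⟨p, hp1, hp2, hp3⟩ := ih (by omega)
    obtain ⟨E, e1, e2, e3, e4, e5, e6⟩ := idem hm v hv (LL (1 : K) a T i) (L_root H _ ha i (by omega))
    have Lc : ∀ h ∈ Hsub K a T i, Commute (LL (1 : K) a T i) h := fun h hh =>
      commute_Hsub (fun _ => H.L_a (by omega)) (fun j hj => H.L_low one_ne_zero (by omega) (by omega)) hh
    have Ec : ∀ j, ∀ h ∈ Hsub K a T i, Commute (E j) h := by
      intro j h hh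
      have := e1 j
      generalize E j = y at this ⊢
      induction this using Algebra.adjoin_induction with
      | mem x hx => rw [Set.mem_singleton_iff.1 hx]; exact Lc h hh
      | algebraMap r => exact Algebra.commutes r h
      | add x y _ _ h1 h2 => exact h1.add_left h2
      | mul x y _ _ h1 h2 => exact h1.mul_left h2
    -- first average
    set p1 : A →ₗ[K] A := ∑ j, LinearMap.mulLeft K (E j) ∘ₗ p ∘ₗ LinearMap.mulLeft K (E j) with hp1d
    have p1a : ∀ x, p1 x = ∑ j, E j * p (E j * x) := by
      intro x; simp [hp1d, LinearMap.sum_apply]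
    have q1 : ∀ x, p1 x ∈ U := fun x => by
      rw [p1a]; exact Submodule.sum_mem _ fun j _ => U.smul_mem (E j) (hp1 _)
    have q2 : ∀ x ∈ U, p1 x = x := by
      intro x hx
      rw [p1a]
      have : ∀ j, E j * p (E j * x) = E j * x := by
        intro j
        rw [hp2 _ (show E j * x ∈ U from U.smul_mem (E j) hx), ← mul_assoc, e5]
      simp only [this]
      rw [← sum_mul, e2, one_mul]
    have q3 : ∀ h ∈ Hsub K a T i, ∀ x, p1 (h * x) = h * p1 x := by
      intro h hh x
      rw [p1a, p1a, mul_sum]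
      refine sum_congr rfl fun j _ => ?_
      rw [← mul_assoc, (Ec j h hh).eq, mul_assoc, hp3 h hh, ← mul_assoc, (Ec j h hh).eq, mul_assoc]
    have q4 : ∀ x, p1 (LL (1 : K) a T i * x) = LL (1 : K) a T i * p1 x := by
      intro x
      rw [p1a, p1a, mul_sum]
      refine sum_congr rfl fun j _ => ?_
      rw [← mul_assoc, e4, smul_mul_assoc, map_smul, mul_smul_comm, ← mul_assoc, e3, smul_mul_assoc]
    -- second average
    set f : ℕ → A →ₗ[K] A := fun r => LinearMap.mulLeft K (cr T r (i - r)) ∘ₗ p1 ∘ₗ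
      LinearMap.mulLeft K (cri T r (i - r)) with hf
    have fa : ∀ r x, f r x = cr T r (i - r) * p1 (cri T r (i - r) * x) := fun r x => rfl
    have hne : ((i + 1 : ℕ) : K) ≠ 0 := hchar _ (by omega) hi
    -- conj : if g c_r = c_s h with h commuting with p1, then g f_r = f_s g
    have conj : ∀ (g h : A) (r s : ℕ), r ≤ i → s ≤ i → g * cr T r (i - r) = cr T s (i - s) * h →
        (∀ x, p1 (h * x) = h * p1 x) → ∀ x, f s (g * x) = g * f r x := by
      intro g h r s hr hs hg hh x
      have i1 := cr_cri H r (i - r) (by omega)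
      have i2 := cr_cri H s (i - s) (by omega)
      have hg' : cri T s (i - s) * g = h * cri T r (i - r) := by
        calc cri T s (i - s) * g = cri T s (i - s) * (g * cr T r (i - r)) * cri T r (i - r) := by
              simp only [mul_assoc, i1.1, mul_one]
          _ = (cri T s (i - s) * cr T s (i - s)) * h * cri T r (i - r) := by
              rw [hg]; simp only [mul_assoc]
          _ = _ := by rw [i2.2, one_mul]
      rw [fa, fa, ← mul_assoc, hg', mul_assoc, hh, ← mul_assoc, ← hg, mul_assoc]
    have stay : ∀ (g h : A) (r : ℕ), r ≤ i → g * cr T r (i - r) = cr T r (i - r) * h →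
        h ∈ Hsub K a T i → ∀ x, f r (g * x) = g * f r x := fun g h r hr hg hh =>
      conj g h r r hr hr hg (q3 h hh)
    set P : A →ₗ[K] A := ((i + 1 : ℕ) : K)⁻¹ • ∑ r ∈ range (i + 1), f r with hP
    have Pa : ∀ x, P x = ((i + 1 : ℕ) : K)⁻¹ • ∑ r ∈ range (i + 1), f r x := by
      intro x; simp [hP, LinearMap.sum_apply]
    refine ⟨P, ?_, ?_, ?_⟩
    · intro x
      rw [Pa]
      refine (U.restrictScalars K).smul_mem _ (Submodule.sum_mem _ fun r _ => ?_)
      exact U.smul_mem (cr T r (i - r)) (q1 _)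
    · intro x hx
      rw [Pa]
      have : ∀ r ∈ range (i + 1), f r x = x := by
        intro r hr
        rw [mem_range] at hr
        rw [fa, q2 _ (show cri T r (i - r) * x ∈ U from U.smul_mem (cri T r (i - r)) hx), ← mul_assoc, (cr_cri H r (i - r) (by omega)).1,
          one_mul]
      rw [sum_congr rfl this, sum_const, card_range, ← Nat.cast_smul_eq_nsmul K, smul_smul,
        inv_mul_cancel₀ hne, one_smul]
    · intro h hh
      unfold Hsub at hh
      induction hh using Algebra.adjoin_induction with
      | mem y hy =>
        intro x
        rw [Pa, Pa, mul_smul_comm, mul_sum]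
        congr 1
        rcases hy with ⟨h1, rfl⟩ | ⟨j, hj, rfl⟩
        · refine sum_congr rfl fun r hr => ?_
          rw [mem_range] at hr
          by_cases hr0 : r = 0
          · subst hr0
            exact conj _ _ 0 0 (by omega) (by omega) (L_cr _ H (by omega)) q4 x
          · refine stay _ _ r (by omega) (cr_comm _ fun l hl => H.commA _ (by omega) (by omega)).eq
              (a_mem (by omega)) x
        · have hj' : j < i := by omega
          refine sum_swap i j hj' _ _ ?_ ?_ ?_
          · -- f j (T j x) = T j f (j+1) x
            refine conj (T j) 1 (j + 1) j (by omega) (by omega) ?_ (by simp) x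
            rw [cr_succ, mul_one, show i - (j + 1) + 1 = i - j by omega]
          · refine conj (T j) 1 j (j + 1) (by omega) (by omega) ?_ (by simp) x
            rw [show i - j = i - (j + 1) + 1 by omega, ← cr_succ, ← mul_assoc, T_sq H (by omega), one_mul,
              mul_one]
          · intro r hr h1 h2
            by_cases hjr : r < j
            · obtain ⟨l, rfl⟩ : ∃ l, j = r + l + 1 := ⟨j - r - 1, by omega⟩
              exact stay _ _ r hr (cr_high H r (i - r) l (by omega) (by omega)) (T_mem (by omega)) x
            · refine stay _ _ r hr (cr_comm _ fun l hl => H.comm _ _ (by omega) (by omega)).eq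
                (T_mem (by omega)) x
      | algebraMap r => intro x; rw [← Algebra.smul_def, ← Algebra.smul_def, map_smul]
      | add y z _ _ h1 h2 => intro x; rw [add_mul, map_add, h1, h2, add_mul]
      | mul y z _ _ h1 h2 => intro x; rw [mul_assoc, h1, h2, mul_assoc]

theorem semisimple_one {m : ℕ} (hm : m ≠ 0) (H : HD (1 : K) n a T) (v : Fin m → K)
    (hv : ∀ j j', j ≠ j' → v j ≠ v j')
    (ha : Polynomial.aeval a (∏ j, (Polynomial.X - Polynomial.C (v j))) = 0)
    (hchar : ∀ i : ℕ, 1 ≤ i → i ≤ n → (i : K) ≠ 0) (hgen : Hsub K a T n = ⊤) : IsSemisimpleRing A := by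
  show IsSemisimpleModule A A
  rw [isSemisimpleModule_iff]
  refine ⟨fun U => ?_⟩
  obtain ⟨p, h1, h2, h3⟩ := average hm H v hv ha hchar U n le_rfl
  have hsm : ∀ (h x : A), p (h • x) = h • p x := fun h x => h3 h (by rw [hgen]; trivial) x
  let p' : A →ₗ[A] A := { toFun := p, map_add' := p.map_add, map_smul' := hsm }
  refine ⟨LinearMap.ker p', ?_⟩
  rw [isCompl_iff]
  constructor
  · rw [Submodule.disjoint_def]
    intro x hx hx'
    have : p x = 0 := hx'
    rw [← h2 x hx, this]
  · rw [codisjoint_iff, eq_top_iff]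
    intro x _
    refine Submodule.mem_sup.2 ⟨p x, h1 x, x - p x, ?_, by abel⟩
    show p (x - p x) = 0
    rw [map_sub, h2 _ (h1 x), sub_self]

end one
end CycloProof


namespace CycloProof
open Finset

lemma char_elt {K A : Type} [Field K] [Ring A] [Algebra K A] [IsSemisimpleRing A] (χ : A →ₐ[K] K) :
    ∃ E : A, (∀ h, h * E = χ h • E) ∧ χ E = 1 := by
  let I : Submodule A A := RingHom.ker χ.toRingHom
  have hI : ∀ x, x ∈ I ↔ χ x = 0 := fun x => RingHom.mem_ker
  obtain ⟨J, hJ⟩ := exists_isCompl I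
  have h1 : (1 : A) ∈ I ⊔ J := by rw [hJ.sup_eq_top]; trivial
  obtain ⟨i, hi, e, he, hie⟩ := Submodule.mem_sup.1 h1
  have he1 : χ e = 1 := by
    have := congrArg χ hie
    rw [map_add, (hI i).1 hi, zero_add, map_one] at this
    exact this
  refine ⟨e, fun h => ?_, he1⟩
  have h2 : h * e - χ h • e ∈ J := by
    refine J.sub_mem (J.smul_mem h he) ?_
    rw [Algebra.smul_def]
    exact J.smul_mem (algebraMap K A (χ h)) he
  have h3 : h * e - χ h • e ∈ I := by
    rw [hI, map_sub, map_mul, map_smul, he1]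
    simp
  have h4 : h * e - χ h • e ∈ I ⊓ J := ⟨h3, h2⟩
  rw [hJ.inf_eq_bot, Submodule.mem_bot] at h4
  exact sub_eq_zero.1 h4

lemma obstruct {K A M : Type} [Field K] [Ring A] [Algebra K A] [AddCommGroup M] [Module K M]
    [IsSemisimpleRing A] (χ : A →ₐ[K] K) (Φ : A →ₐ[K] Module.End K M) (S : Set A)
    (hS : Algebra.adjoin K S = ⊤) (l : M →ₗ[K] K) (hl : ∀ s ∈ S, ∀ x, l (Φ s x) = χ s * l x)
    (he : ∀ f, (∀ s ∈ S, Φ s f = χ s • f) → l f = 0) (x : M) : l x = 0 := by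
  obtain ⟨E, h1, h2⟩ := char_elt χ
  have hl' : ∀ h : A, ∀ x, l (Φ h x) = χ h * l x := by
    intro h
    have hh : h ∈ Algebra.adjoin K S := by rw [hS]; trivial
    induction hh using Algebra.adjoin_induction with
    | mem s hs => exact hl s hs
    | algebraMap r => intro x; simp [Algebra.algebraMap_eq_smul_one]
    | add a b _ _ h1 h2 => intro x; simp [h1, h2, add_mul]
    | mul a b _ _ h1 h2 => intro x; simp [h1, h2, mul_assoc]
  have h3 := he (Φ E x) (fun s _ => by
    rw [← Module.End.mul_apply, ← map_mul, h1, map_smul]; rfl)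
  rw [hl', h2, one_mul] at h3
  exact h3

section words
set_option linter.unusedSectionVars false
set_option linter.unusedSimpArgs false
variable {K : Type} [Field K] {n : ℕ} {α : Type} [LinearOrder α]

/-- swap positions -/
def sw (i j : Fin n) (w : Fin n → α) : Fin n → α := fun p => w (Equiv.swap i j p)

lemma sw_l (i j : Fin n) (w : Fin n → α) : sw i j w i = w j := by simp [sw]
lemma sw_r (i j : Fin n) (w : Fin n → α) : sw i j w j = w i := by simp [sw]
lemma sw_o {i j l : Fin n} (h1 : l ≠ i) (h2 : l ≠ j) (w : Fin n → α) : sw i j w l = w l := by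
  simp [sw, Equiv.swap_apply_of_ne_of_ne h1 h2]
lemma sw_sw (i j : Fin n) (w : Fin n → α) : sw i j (sw i j w) = w := by
  funext p; simp [sw]
lemma sw_eq {i j : Fin n} {w : Fin n → α} (h : w i = w j) : sw i j w = w := by
  funext p
  by_cases h1 : p = i
  · subst h1; rw [sw_l, h]
  by_cases h2 : p = j
  · subst h2; rw [sw_r, h]
  exact sw_o h1 h2 w

lemma sw_braid {i j l : Fin n} (h1 : i ≠ j) (h2 : j ≠ l) (h3 : i ≠ l) (w : Fin n → α) :
    sw j l (sw i j (sw j l w)) = sw i j (sw j l (sw i j w)) := by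
  funext p
  by_cases e1 : p = i
  · subst e1; simp [sw_l, sw_r, sw_o, h1, h2, h3, h1.symm, h2.symm, h3.symm]
  by_cases e2 : p = j
  · subst e2; simp [sw_l, sw_r, sw_o, h1, h2, h3, h1.symm, h2.symm, h3.symm]
  by_cases e3 : p = l
  · subst e3; simp [sw_l, sw_r, sw_o, h1, h2, h3, h1.symm, h2.symm, h3.symm]
  simp [sw_o, e1, e2, e3]

lemma sw_comm {i j k l : Fin n} (h1 : i ≠ k) (h2 : i ≠ l) (h3 : j ≠ k) (h4 : j ≠ l) (w : Fin n → α) :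
    sw i j (sw k l w) = sw k l (sw i j w) := by
  funext p
  by_cases e1 : p = i
  · subst e1; simp [sw_l, sw_r, sw_o, h1, h2, h3, h4, h1.symm, h2.symm, h3.symm, h4.symm]
  by_cases e2 : p = j
  · subst e2; simp [sw_l, sw_r, sw_o, h1, h2, h3, h4, h1.symm, h2.symm, h3.symm, h4.symm]
  by_cases e3 : p = k
  · subst e3; simp [sw_l, sw_r, sw_o, h1, h2, h3, h4, h1.symm, h2.symm, h3.symm, h4.symm]
  by_cases e4 : p = l
  · subst e4; simp [sw_l, sw_r, sw_o, h1, h2, h3, h4, h1.symm, h2.symm, h3.symm, h4.symm]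
  simp [sw_o, e1, e2, e3, e4]

/-- Hecke operators on functions of words -/
def TT (q : K) (i j : Fin n) : Module.End K ((Fin n → α) → K) where
  toFun f w := if w i = w j then q * f w else
    if w i < w j then f (sw i j w) + (q - 1) * f w else q * f (sw i j w)
  map_add' f g := by
    funext w
    simp only [Pi.add_apply]
    split_ifs <;> ring
  map_smul' c f := by
    funext w
    simp only [Pi.smul_apply, smul_eq_mul, RingHom.id_apply]
    split_ifs <;> ring

lemma TT_eq (q : K) {i j : Fin n} (f : (Fin n → α) → K) {w : Fin n → α} (h : w i = w j) :
    TT q i j f w = q * f w := by simp [TT, h]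
lemma TT_lt (q : K) {i j : Fin n} (f : (Fin n → α) → K) {w : Fin n → α} (h : w i < w j) :
    TT q i j f w = f (sw i j w) + (q - 1) * f w := by simp [TT, h, h.ne]
lemma TT_gt (q : K) {i j : Fin n} (f : (Fin n → α) → K) {w : Fin n → α} (h : w j < w i) :
    TT q i j f w = q * f (sw i j w) := by simp [TT, h.ne', h.not_gt]

lemma TT_quad (q : K) (i j : Fin n) :
    TT q i j * TT q i j = (q - 1) • TT q i j + q • (1 : Module.End K ((Fin n → α) → K)) := by
  refine LinearMap.ext fun f => funext fun w => ?_
  show TT q i j (TT q i j f) w = (q - 1) * TT q i j f w + q * f w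
  rcases lt_trichotomy (w i) (w j) with h | h | h
  · have h' : sw i j w j < sw i j w i := by rw [sw_l, sw_r]; exact h
    rw [TT_lt q _ h, TT_gt q _ h', TT_lt q _ h, sw_sw]; ring
  · rw [TT_eq q _ h, TT_eq q _ h]; ring
  · have h' : sw i j w i < sw i j w j := by rw [sw_l, sw_r]; exact h
    rw [TT_gt q _ h, TT_gt q _ h, TT_lt q _ h', sw_sw]; ring

lemma TT_comm (q : K) {i j k l : Fin n} (h1 : i ≠ k) (h2 : i ≠ l) (h3 : j ≠ k) (h4 : j ≠ l) :
    Commute (TT (α := α) q i j) (TT q k l) := by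
  refine LinearMap.ext fun f => funext fun w => ?_
  show TT q i j (TT q k l f) w = TT q k l (TT q i j f) w
  simp only [TT, LinearMap.coe_mk, AddHom.coe_mk, sw_o h1 h2, sw_o h3 h4, sw_o h1.symm h3.symm,
    sw_o h2.symm h4.symm, sw_comm h1 h2 h3 h4]
  split_ifs <;> ring

lemma TT_braid (q : K) {i j l : Fin n} (h1 : i ≠ j) (h2 : j ≠ l) (h3 : i ≠ l) :
    TT (α := α) q j l * TT q i j * TT q j l = TT q i j * TT q j l * TT q i j := by
  refine LinearMap.ext fun f => funext fun w => ?_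
  show TT q j l (TT q i j (TT q j l f)) w = TT q i j (TT q j l (TT q i j f)) w
  simp only [TT, LinearMap.coe_mk, AddHom.coe_mk, sw_l, sw_r, sw_o h1 h3, sw_o h3.symm h2.symm,
    sw_sw, sw_braid h1 h2 h3]
  have tri : ∀ x y : α, (x < y ∧ x ≠ y ∧ y ≠ x ∧ ¬ y < x) ∨ (x = y) ∨ (y < x ∧ x ≠ y ∧ y ≠ x ∧ ¬ x < y) := by
    intro x y
    rcases lt_trichotomy x y with h | h | h
    · exact Or.inl ⟨h, h.ne, h.ne', h.not_gt⟩
    · exact Or.inr (Or.inl h)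
    · exact Or.inr (Or.inr ⟨h, h.ne', h.ne, h.not_gt⟩)
  have br := sw_braid h1 h2 h3 w
  rcases tri (w i) (w j) with ⟨a1, b1, c1, d1⟩ | a1 | ⟨a1, b1, c1, d1⟩ <;>
  rcases tri (w j) (w l) with ⟨a2, b2, c2, d2⟩ | a2 | ⟨a2, b2, c2, d2⟩
  · have a3 := a1.trans a2
    simp [a1, a2, b1, b2, c1, c2, d1, d2, a3, a3.ne, a3.ne', a3.not_gt]; ring
  · rw [sw_eq a2] at *
    have a3 : w i < w l := by order
    simp [← a2, a1, b1, c1, d1, ← br]; ring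
  · rcases tri (w i) (w l) with ⟨a3, b3, c3, d3⟩ | a3 | ⟨a3, b3, c3, d3⟩
    · simp [a1, a2, b1, b2, c1, c2, d1, d2, a3, b3, c3, d3]; ring
    · simp [← a3, a1, b1, c1, d1]; ring
    · simp [a1, a2, b1, b2, c1, c2, d1, d2, a3, b3, c3, d3]; ring
  · rw [sw_eq a1] at *
    simp [a1, a2, b2, c2, d2, br]; ring
  · simp [a1, a2]
  · rw [sw_eq a1] at *
    simp [a1, a2, b2, c2, d2, br]
  · rcases tri (w i) (w l) with ⟨a3, b3, c3, d3⟩ | a3 | ⟨a3, b3, c3, d3⟩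
    · simp [a1, a2, b1, b2, c1, c2, d1, d2, a3, b3, c3, d3]; ring
    · simp [← a3, a1, b1, c1, d1]; ring
    · simp [a1, a2, b1, b2, c1, c2, d1, d2, a3, b3, c3, d3]; ring
  · rw [sw_eq a2] at *
    simp [← a2, a1, b1, c1, d1, ← br]
  · have a3 := a2.trans a1
    simp [a1, a2, b1, b2, c1, c2, d1, d2, a3, a3.ne, a3.ne', a3.not_gt]

/-- Hecke operators indexed by naturals -/
def TO (α : Type) [LinearOrder α] (n : ℕ) (q : K) (t : ℕ) : Module.End K ((Fin n → α) → K) :=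
  if h : t + 1 < n then TT q ⟨t, by omega⟩ ⟨t + 1, h⟩ else 0

lemma TO_eq (q : K) {t : ℕ} (h : t + 1 < n) : TO α n q t = TT q ⟨t, by omega⟩ ⟨t + 1, h⟩ := dif_pos h

lemma TO_HD (q : K) (a : Module.End K ((Fin n → α) → K))
    (hb : ∀ h : 1 < n, a * TT q ⟨0, by omega⟩ ⟨1, h⟩ * a * TT q ⟨0, by omega⟩ ⟨1, h⟩ =
      TT q ⟨0, by omega⟩ ⟨1, h⟩ * a * TT q ⟨0, by omega⟩ ⟨1, h⟩ * a)
    (hc : ∀ i j : Fin n, 1 ≤ i.1 → 1 ≤ j.1 → Commute a (TT q i j)) : HD q n a (TO α n q) where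
  quad i h := by rw [TO_eq q h]; exact TT_quad _ _ _
  braid0 h := by rw [TO_eq q (by omega)]; exact hb h
  commA i h1 h2 := by rw [TO_eq q h2]; exact hc _ _ h1 (by simp)
  comm i j h1 h2 := by
    rw [TO_eq q h2, TO_eq q (by omega)]
    apply TT_comm <;> simp only [ne_eq, Fin.mk.injEq] <;> omega
  braid i h := by
    rw [TO_eq q (by omega), TO_eq q (by omega)]
    apply TT_braid <;> simp only [ne_eq, Fin.mk.injEq] <;> omega

/-- the functionals -/
def fl {I : Type} [Fintype I] (C : I → K) (W : I → Fin n → α) : ((Fin n → α) → K) →ₗ[K] K where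
  toFun f := ∑ x, C x * f (W x)
  map_add' f g := by simp only [Pi.add_apply, mul_add, sum_add_distrib]
  map_smul' c f := by
    simp only [Pi.smul_apply, smul_eq_mul, RingHom.id_apply, mul_sum]
    exact sum_congr rfl fun _ _ => by ring

lemma fl_T {I : Type} [Fintype I] (C : I → K) (W : I → Fin n → α) (q : K) (i j : Fin n) (t : I → I)
    (ht : ∀ x, t (t x) = x) (hW : ∀ x, W (t x) = sw i j (W x))
    (hC : ∀ x, W x i < W x j → C x = q * C (t x)) (f : (Fin n → α) → K) :
    fl C W (TT q i j f) = q * fl C W f := by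
  rw [← sub_eq_zero]
  show ∑ x, C x * TT q i j f (W x) - q * ∑ x, C x * f (W x) = 0
  rw [mul_sum, ← sum_sub_distrib]
  have key : ∀ x, W x i < W x j → C x * TT q i j f (W x) - q * (C x * f (W x)) +
      (C (t x) * TT q i j f (W (t x)) - q * (C (t x) * f (W (t x)))) = 0 := by
    intro x h
    have h' : W (t x) j < W (t x) i := by rw [hW, sw_l, sw_r]; exact h
    rw [TT_lt q _ h, TT_gt q _ h', hW, sw_sw, hC x h]
    ring
  have key0 : ∀ x, W x i = W x j → C x * TT q i j f (W x) - q * (C x * f (W x)) = 0 := by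
    intro x h
    rw [TT_eq q _ h]; ring
  refine sum_involution (fun x _ => t x) ?_ ?_ (fun _ _ => mem_univ _) (fun x _ => ht x)
  · intro x _
    rcases lt_trichotomy (W x i) (W x j) with h | h | h
    · exact key x h
    · rw [key0 x h, key0 (t x) (by rw [hW, sw_l, sw_r, h]), add_zero]
    · have := key (t x) (by rw [hW, sw_l, sw_r]; exact h)
      rw [ht] at this
      rw [add_comm]; exact this
  · intro x _ h1 h2
    refine h1 (key0 x ?_)
    have := hW x
    rw [h2] at this
    rw [this, sw_l, ← this]

lemma TT_sym (q : K) (hq : q ≠ 0) (i j : Fin n) (f : (Fin n → α) → K) (h : TT q i j f = q • f)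
    (w : Fin n → α) : f (sw i j w) = f w := by
  have h1 := congrFun h
  rcases lt_trichotomy (w i) (w j) with h' | h' | h'
  · have := h1 (sw i j w)
    rw [TT_gt q _ (by rw [sw_l, sw_r]; exact h'), sw_sw] at this
    exact (mul_left_cancel₀ hq this).symm
  · rw [sw_eq h']
  · have := h1 w
    rw [TT_gt q _ h'] at this
    exact mul_left_cancel₀ hq this

end words
end CycloProof


namespace CycloProof
open Finset

section caseB
set_option linter.unusedSimpArgs false
variable {K : Type} [Field K] {n : ℕ}

/-- flip a letter -/
def fb (i : Fin n) (w : Fin n → Bool) : Fin n → Bool := fun p => if p = i then !w p else w p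

lemma fb_s (i : Fin n) (w : Fin n → Bool) : fb i w i = !w i := by simp [fb]
lemma fb_o {i p : Fin n} (h : p ≠ i) (w : Fin n → Bool) : fb i w p = w p := by simp [fb, h]
lemma fb_fb (i : Fin n) (w : Fin n → Bool) : fb i (fb i w) = w := by
  funext p; by_cases h : p = i <;> simp [fb, h]
lemma fb_sw {l i j : Fin n} (h1 : l ≠ i) (h2 : l ≠ j) (w : Fin n → Bool) :
    fb l (sw i j w) = sw i j (fb l w) := by
  funext p
  by_cases h : p = l
  · subst h; rw [fb_s, sw_o h1 h2, sw_o h1 h2, fb_s]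
  · rw [fb_o h]
    unfold sw
    rw [fb_o]
    intro h3
    apply h
    rw [Equiv.swap_apply_eq_iff, Equiv.swap_apply_of_ne_of_ne h1 h2] at h3
    exact h3
lemma fb_sw_l {i j : Fin n} (w : Fin n → Bool) : fb j (sw i j w) = sw i j (fb i w) := by
  funext p
  by_cases h : p = j
  · subst h; rw [fb_s, sw_r, sw_r, fb_s]
  · rw [fb_o h]
    unfold sw
    rw [fb_o]
    intro h3
    apply h
    rw [Equiv.swap_apply_eq_iff, Equiv.swap_apply_left] at h3
    exact h3

/-- operator for the first generator -/
def AA (x y : K) (i : Fin n) : Module.End K ((Fin n → Bool) → K) where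
  toFun f w := if w i = true then f (fb i w) + (x + y) * f w else -(x * y) * f (fb i w)
  map_add' f g := by
    funext w
    simp only [Pi.add_apply]
    split_ifs <;> ring
  map_smul' c f := by
    funext w
    simp only [Pi.smul_apply, smul_eq_mul, RingHom.id_apply]
    split_ifs <;> ring

lemma AA_t (x y : K) {i : Fin n} (f : (Fin n → Bool) → K) {w : Fin n → Bool} (h : w i = true) :
    AA x y i f w = f (fb i w) + (x + y) * f w := by simp [AA, h]
lemma AA_f (x y : K) {i : Fin n} (f : (Fin n → Bool) → K) {w : Fin n → Bool} (h : w i = false) :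
    AA x y i f w = -(x * y) * f (fb i w) := by simp [AA, h]

lemma AA_root (x y : K) (i : Fin n) (P : Polynomial K)
    (hP : (Polynomial.X - Polynomial.C x) * (Polynomial.X - Polynomial.C y) ∣ P) :
    Polynomial.aeval (AA x y i) P = 0 := by
  obtain ⟨Q, rfl⟩ := hP
  rw [map_mul]
  have : Polynomial.aeval (AA x y i) ((Polynomial.X - Polynomial.C x) * (Polynomial.X - Polynomial.C y)) = 0 := by
    rw [map_mul, map_sub, map_sub, Polynomial.aeval_X, Polynomial.aeval_C, Polynomial.aeval_C]
    refine LinearMap.ext fun f => funext fun w => ?_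
    have e : AA x y i (AA x y i f) w = (x + y) * AA x y i f w - x * y * f w := by
      rcases Bool.eq_false_or_eq_true (w i) with h | h
      · have h' : fb i w i = false := by rw [fb_s, h]; rfl
        rw [AA_t x y _ h, AA_f x y _ h', fb_fb]; ring
      · have h' : fb i w i = true := by rw [fb_s, h]; rfl
        rw [AA_f x y _ h, AA_t x y _ h', AA_f x y _ h, fb_fb]; ring
    have e2 : ∀ c : K, ∀ g : (Fin n → Bool) → K,
        (AA x y i - algebraMap K (Module.End K ((Fin n → Bool) → K)) c) g = AA x y i g - c • g := by
      intro c g; simp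
    rw [Module.End.mul_apply, e2, e2, map_sub, map_smul]
    simp only [Pi.sub_apply, Pi.smul_apply, smul_eq_mul, LinearMap.zero_apply, Pi.zero_apply, e]
    ring
  rw [this, zero_mul]

lemma AA_comm (q x y : K) {l i j : Fin n} (h1 : l ≠ i) (h2 : l ≠ j) : Commute (AA x y l) (TT q i j) := by
  refine LinearMap.ext fun f => funext fun w => ?_
  show AA x y l (TT q i j f) w = TT q i j (AA x y l f) w
  simp only [TT, AA, LinearMap.coe_mk, AddHom.coe_mk, fb_sw h1 h2, sw_o h1 h2, fb_o h1.symm, fb_o h2.symm]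
  split_ifs <;> ring

lemma AA_braid (q x y : K) {i j : Fin n} (h : i ≠ j) :
    AA x y i * TT q i j * AA x y i * TT q i j = TT q i j * AA x y i * TT q i j * AA x y i := by
  refine LinearMap.ext fun f => funext fun w => ?_
  show AA x y i (TT q i j (AA x y i (TT q i j f))) w = TT q i j (AA x y i (TT q i j (AA x y i f))) w
  simp only [TT, AA, LinearMap.coe_mk, AddHom.coe_mk, sw_l, sw_r, fb_s, fb_o h.symm, sw_sw, fb_fb]
  have tf : ¬ (true < false) := by decide
  rcases Bool.eq_false_or_eq_true (w i) with h1 | h1 <;> rcases Bool.eq_false_or_eq_true (w j) with h2 | h2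
  · have e1 : sw i j w = w := sw_eq (by rw [h1, h2])
    have e2 : sw i j (fb i (sw i j (fb i w))) = fb i (sw i j (fb i w)) :=
      sw_eq (by rw [fb_s, sw_l, fb_o h.symm, fb_o h.symm, sw_r, fb_s, h1, h2])
    simp [tf, h1, h2, e1, e2]; ring
  · have e1 : sw i j (fb i w) = fb i w := sw_eq (by rw [fb_s, fb_o h.symm, h1, h2]; rfl)
    have e2 : sw i j (fb i (sw i j w)) = fb i (sw i j w) :=
      sw_eq (by rw [fb_s, sw_l, fb_o h.symm, sw_r, h1, h2]; rfl)
    simp [tf, h1, h2, e1, e2, sw_sw, fb_fb]; ring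
  · have e1 : sw i j (fb i w) = fb i w := sw_eq (by rw [fb_s, fb_o h.symm, h1, h2]; rfl)
    have e2 : sw i j (fb i (sw i j w)) = fb i (sw i j w) :=
      sw_eq (by rw [fb_s, sw_l, fb_o h.symm, sw_r, h1, h2]; rfl)
    simp [tf, h1, h2, e1, e2, sw_sw, fb_fb]; ring
  · have e1 : sw i j w = w := sw_eq (by rw [h1, h2])
    have e2 : sw i j (fb i (sw i j (fb i w))) = fb i (sw i j (fb i w)) :=
      sw_eq (by rw [fb_s, sw_l, fb_o h.symm, fb_o h.symm, sw_r, fb_s, h1, h2])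
    simp [tf, h1, h2, e1, e2]; ring

/-- weights -/
def cB (q x : K) (w : Fin n → Bool) : K := ∏ p : Fin n, if w p = true then x * q ^ p.1 else 1

lemma cB_sw (q x : K) (i j : Fin n) (hij : j.1 = i.1 + 1) (w : Fin n → Bool) (h : w i < w j) :
    cB q x w = q * cB q x (sw i j w) := by
  have hi : w i = false := by revert h; cases w i <;> cases w j <;> simp
  have hj : w j = true := by revert h; cases w i <;> cases w j <;> simp
  have hne : i ≠ j := by intro h; rw [h] at hij; omega
  have e1 : cB q x (sw i j w) = ∏ p : Fin n, if w p = true then x * q ^ (Equiv.swap i j p).1 else 1 := by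
    unfold cB sw
    rw [← Equiv.prod_comp (Equiv.swap i j)]
    simp
  have e2 : q = ∏ p : Fin n, if p = j then q else 1 := by simp
  conv_rhs => rw [e1]
  conv_rhs => arg 1; rw [e2]
  rw [← prod_mul_distrib, cB]
  refine prod_congr rfl fun p _ => ?_
  by_cases h1 : p = j
  · subst h1
    simp [hj, hij, pow_succ]; ring
  by_cases h2 : p = i
  · subst h2; simp [hi, h1]
  simp [h1, Equiv.swap_apply_of_ne_of_ne h2 h1]

lemma cB_fb (q x : K) (i : Fin n) (w : Fin n → Bool) (h : w i = true) :
    cB q x w = x * q ^ i.1 * cB q x (fb i w) := by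
  unfold cB
  rw [← mul_prod_erase univ _ (mem_univ i), ← mul_prod_erase univ (fun p => if fb i w p = true then _ else _) (mem_univ i)]
  simp only [h, if_true, fb_s, Bool.not_true, Bool.false_eq_true, if_false, one_mul]
  congr 1
  refine prod_congr rfl fun p hp => ?_
  rw [fb_o (mem_erase.1 hp).1]

end caseB

section
variable {K A : Type} [Field K] [Ring A] [Algebra K A] {n : ℕ} {a : A} {T : ℕ → A} {q : K}

/-- universal property -/
def Univ (q : K) (n : ℕ) (P : Polynomial K) (a : A) (T : ℕ → A) : Prop :=
  ∀ (B : Type) [Ring B] [Algebra K B] (b : B) (S : ℕ → B), HD q n b S → Polynomial.aeval b P = 0 →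
    ∃ Φ : A →ₐ[K] B, Φ a = b ∧ ∀ i, i + 1 < n → Φ (T i) = S i

lemma get_chi {P : Polynomial K} (hU : Univ q n P a T) (x : K) (hx : P.eval x = 0) :
    ∃ χ : A →ₐ[K] K, χ a = x ∧ ∀ i, i + 1 < n → χ (T i) = q := by
  refine hU K x (fun _ => q) ⟨?_, ?_, ?_, ?_, ?_⟩ (by simpa using hx)
  · intro i _; simp; ring
  · intro _; ring
  · intro i _ _; exact Commute.all _ _
  · intro i _ _ _; exact Commute.all _ _
  · intro i _; ring

lemma caseB [IsSemisimpleRing A] {P : Polynomial K} (hU : Univ q n P a T) (hgen : Hsub K a T n = ⊤)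
    (hq : q ≠ 0) (x y : K) (i : ℕ) (hi : i < n) (hxy : x * q ^ i = y)
    (hP : (Polynomial.X - Polynomial.C x) * (Polynomial.X - Polynomial.C y) ∣ P) : False := by
  have hx : P.eval x = 0 := by
    obtain ⟨Q, rfl⟩ := hP
    simp
  have hn : 0 < n := by omega
  obtain ⟨χ, c1, c2⟩ := get_chi hU x hx
  have HH : HD q n (AA x y (⟨0, hn⟩ : Fin n)) (TO Bool n q) := by
    refine TO_HD q _ ?_ ?_
    · intro h; exact AA_braid q x y (by simp)
    · intro i j h1 h2
      refine AA_comm q x y ?_ ?_ <;> (rw [Ne, Fin.ext_iff]; simp; omega)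
  obtain ⟨Φ, f1, f2⟩ := hU _ _ _ HH (AA_root x y _ P hP)
  have := obstruct χ Φ _ hgen (fl (cB q x) (id : (Fin n → Bool) → _)) ?_ ?_ (fun w => if w = fun _ => false then 1 else 0)
  · have e : fl (cB q x) (id : (Fin n → Bool) → _) (fun w => if w = fun _ => false then 1 else 0) = 1 := by
      show ∑ w, cB q x w * (if w = fun _ => false then 1 else 0) = 1
      simp [cB]
    rw [e] at this
    exact one_ne_zero this
  · rintro s (⟨_, rfl⟩ | ⟨j, hj, rfl⟩) f
    · rw [f1, c1]
      show ∑ w, cB q x w * AA x y ⟨0, hn⟩ f w = x * ∑ w, cB q x w * f w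
      rw [← sub_eq_zero, mul_sum, ← sum_sub_distrib]
      have key : ∀ w : Fin n → Bool, w ⟨0, hn⟩ = true →
          cB q x w * AA x y ⟨0, hn⟩ f w - x * (cB q x w * f w) + (cB q x (fb ⟨0, hn⟩ w) * AA x y ⟨0, hn⟩ f (fb ⟨0, hn⟩ w)
            - x * (cB q x (fb ⟨0, hn⟩ w) * f (fb ⟨0, hn⟩ w))) = 0 := by
        intro w h
        rw [AA_t x y _ h, AA_f x y _ (by rw [fb_s, h]; rfl), fb_fb, cB_fb q x _ w h]
        simp only [pow_zero]; ring
      refine sum_involution (fun w _ => fb ⟨0, hn⟩ w) ?_ ?_ (fun _ _ => mem_univ _) (fun w _ => fb_fb _ w)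
      · intro w _
        rcases Bool.eq_false_or_eq_true (w ⟨0, hn⟩) with h | h
        · exact key w h
        · have := key (fb ⟨0, hn⟩ w) (by rw [fb_s, h]; rfl)
          rw [fb_fb] at this
          rw [add_comm]; exact this
      · intro w _ _ h
        have := congrFun h ⟨0, hn⟩
        rw [fb_s] at this
        simp at this
    · rw [f2 j hj, c2 j hj, TO_eq q hj]
      exact fl_T (cB q x) id _ _ _ (sw ⟨j, by omega⟩ ⟨j + 1, hj⟩) (sw_sw _ _) (fun _ => rfl)
        (fun w h => cB_sw q x _ _ rfl w h) f
  · intro f hf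
    have s1 : ∀ j (hj : j + 1 < n) w, f (sw ⟨j, by omega⟩ ⟨j + 1, hj⟩ w) = f w := by
      intro j hj w
      have := hf (T j) (Or.inr ⟨j, hj, rfl⟩)
      rw [f2 j hj, c2 j hj, TO_eq q hj] at this
      exact TT_sym q hq _ _ f this w
    have s2 : ∀ w : Fin n → Bool, w ⟨0, hn⟩ = true → f (fb ⟨0, hn⟩ w) = -y * f w := by
      intro w h
      have := hf a (Or.inl ⟨hn, rfl⟩)
      rw [f1, c1] at this
      have := congrFun this w
      rw [AA_t x y _ h, Pi.smul_apply, smul_eq_mul] at this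
      linear_combination this
    have s3 : ∀ j (hj : j < n) (w : Fin n → Bool), w ⟨j, hj⟩ = true → f (fb ⟨j, hj⟩ w) = -y * f w := by
      intro j
      induction j with
      | zero => intro hj; exact s2
      | succ j ih =>
        intro hj w h
        have := ih (by omega) (sw ⟨j, by omega⟩ ⟨j + 1, hj⟩ w) (by rw [sw_l]; exact h)
        rw [s1 j hj] at this
        rw [← this, ← s1 j hj (fb ⟨j, _⟩ _), ← fb_sw_l, sw_sw]
    show ∑ w, cB q x w * f w = 0
    have key : ∀ w : Fin n → Bool, w ⟨i, hi⟩ = true →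
        cB q x w * f w + cB q x (fb ⟨i, hi⟩ w) * f (fb ⟨i, hi⟩ w) = 0 := by
      intro w h
      rw [s3 i hi w h, cB_fb q x _ w h, hxy]
      ring
    refine sum_involution (fun w _ => fb ⟨i, hi⟩ w) ?_ ?_ (fun _ _ => mem_univ _) (fun w _ => fb_fb _ w)
    · intro w _
      rcases Bool.eq_false_or_eq_true (w ⟨i, hi⟩) with h | h
      · exact key w h
      · have := key (fb ⟨i, hi⟩ w) (by rw [fb_s, h]; rfl)
        rw [fb_fb] at this
        rw [add_comm]; exact this
    · intro w _ _ h
      have := congrFun h ⟨i, hi⟩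
      rw [fb_s] at this
      simp at this

end
end CycloProof


namespace CycloProof
open Finset

section caseA
variable {K : Type} [Field K] {n : ℕ}

/-- marked word -/
def Wd (x : (Fin n → Bool) × Fin n) : Fin n → ℕ :=
  fun r => if r = x.2 then 1 else if x.1 r = true then 2 else 0

/-- unmarked word -/
def W0 (u : Fin n → Bool) : Fin n → ℕ := fun r => if u r = true then 2 else 0

/-- number of non-inversions -/
def Nv (w : Fin n → ℕ) : ℕ := ∑ z : Fin n × Fin n, if z.1 < z.2 ∧ w z.1 < w z.2 then 1 else 0

lemma Nv_sw (i j : Fin n) (hij : j.1 = i.1 + 1) (w : Fin n → ℕ) (h : w i < w j) :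
    Nv w = Nv (sw i j w) + 1 := by
  have e1 : Nv (sw i j w) = ∑ z : Fin n × Fin n,
      if Equiv.swap i j z.1 < Equiv.swap i j z.2 ∧ w z.1 < w z.2 then 1 else 0 := by
    unfold Nv sw
    rw [← Equiv.sum_comp (Equiv.prodCongr (Equiv.swap i j) (Equiv.swap i j))]
    simp
  have e2 : 1 = ∑ z : Fin n × Fin n, if z = (i, j) then 1 else 0 := by simp
  rw [e1]
  conv_rhs => arg 2; rw [e2]
  rw [← sum_add_distrib, Nv]
  refine sum_congr rfl fun z _ => ?_
  obtain ⟨p, r⟩ := z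
  by_cases hw : w p < w r
  · have hne : ¬ (p = j ∧ r = i) := by rintro ⟨rfl, rfl⟩; omega
    have hpr : p ≠ r := by rintro rfl; omega
    simp only [hw, and_true, Prod.mk.injEq, Equiv.swap_apply_def, Fin.ext_iff, Fin.lt_def] at *
    split_ifs <;> omega
  · have hne : ¬ (p = i ∧ r = j) := by rintro ⟨rfl, rfl⟩; exact hw h
    simp [hw, hne]

lemma Wd_sw (i j : Fin n) (u : Fin n → Bool) (p : Fin n) :
    Wd (sw i j u, Equiv.swap i j p) = sw i j (Wd (u, p)) := by
  funext r
  have : r = Equiv.swap i j p ↔ Equiv.swap i j r = p := by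
    constructor
    · rintro rfl; simp
    · rintro rfl; simp
  by_cases hr : Equiv.swap i j r = p
  · simp [Wd, sw, this, hr]
  · simp [Wd, sw, this, hr]; rfl

lemma Nv_W (u : Fin n → Bool) (p : Fin n) (hp : u p = false) :
    Nv (Wd (u, p)) = Nv (W0 u) + #{r ∈ univ.filter (fun r => u r = false) | r < p} := by
  have e : #{r ∈ univ.filter (fun r => u r = false) | r < p} =
      ∑ z : Fin n × Fin n, if z.2 = p ∧ u z.1 = false ∧ z.1 < p then 1 else 0 := by
    rw [Fintype.sum_prod_type, filter_filter, card_filter]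
    refine sum_congr rfl fun r _ => ?_
    by_cases h : u r = false ∧ r < p <;> simp [h]
  rw [e, Nv, Nv, ← sum_add_distrib]
  refine sum_congr rfl fun z _ => ?_
  obtain ⟨r, s⟩ := z
  by_cases hr : r = p
  · subst hr
    by_cases hs : s = r
    · subst hs; simp
    · rcases Bool.eq_false_or_eq_true (u s) with h | h <;> simp [Wd, W0, hs, hp, h]
  · by_cases hs : s = p
    · subst hs
      rcases Bool.eq_false_or_eq_true (u r) with h | h <;> simp [Wd, W0, hr, hp, h]
    · have a1 : Wd (u, p) r = W0 u r := by simp [Wd, W0, hr]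
      have a2 : Wd (u, p) s = W0 u s := by simp [Wd, W0, hs]
      rw [a1, a2, if_neg (c := s = p ∧ _) (fun h => hs h.1), add_zero]

lemma sum_rank (q : K) (Z : Finset (Fin n)) :
    ∑ p ∈ Z, q ^ #{r ∈ Z | r < p} = ∑ j ∈ range #Z, q ^ j := by
  induction Z using Finset.induction_on_max with
  | empty => simp
  | insert a s h ih =>
    have ha : a ∉ s := fun h' => lt_irrefl _ (h a h')
    rw [sum_insert ha, card_insert_of_notMem ha, sum_range_succ, ← ih, add_comm]
    congr 1
    · refine sum_congr rfl fun p hp => ?_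
      rw [filter_insert, if_neg (not_lt.2 (h p hp).le)]
    · rw [filter_insert, if_neg (lt_irrefl _), filter_true_of_mem h]

/-- coefficients -/
def CA (q : K) (e : ℕ) (x : (Fin n → Bool) × Fin n) : K :=
  if #(univ.filter fun r => x.1 r = false) = e ∧ x.1 x.2 = false then q ^ Nv (Wd x) else 0

lemma CA_sw (q : K) (e : ℕ) (i j : Fin n) (hij : j.1 = i.1 + 1) (u : Fin n → Bool) (p : Fin n)
    (h : Wd (u, p) i < Wd (u, p) j) :
    CA q e (u, p) = q * CA q e (sw i j u, Equiv.swap i j p) := by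
  have h1 : #(univ.filter fun r => sw i j u r = false) = #(univ.filter fun r => u r = false) := by
    refine card_bij (fun r _ => Equiv.swap i j r) ?_ ?_ ?_
    · intro r hr; rw [mem_filter] at *; exact ⟨mem_univ _, hr.2⟩
    · intro r _ s _ h; exact (Equiv.swap i j).injective h
    · intro r hr
      exact ⟨Equiv.swap i j r, by
        rw [mem_filter] at *; exact ⟨mem_univ _, by simpa [sw] using hr.2⟩, by simp⟩
  have h2 : sw i j u (Equiv.swap i j p) = u p := by simp [sw]
  unfold CA
  simp only [h1, h2, Wd_sw]
  rw [Nv_sw i j hij _ h]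
  split_ifs
  · rw [pow_succ, mul_comm]
  · simp

lemma sym_all (f : (Fin n → ℕ) → K)
    (h : ∀ j (hj : j + 1 < n) w, f (sw ⟨j, by omega⟩ ⟨j + 1, hj⟩ w) = f w) (i j : Fin n) (w : Fin n → ℕ) :
    f (sw i j w) = f w := by
  -- wlog i < j, induct on the distance
  have key : ∀ d i (hi : i + d + 1 < n) w, f (sw ⟨i, by omega⟩ ⟨i + d + 1, hi⟩ w) = f w := by
    intro d
    induction d with
    | zero => intro i hi w; exact h i hi w
    | succ d ih =>
      intro i hi w
      have h1 : (⟨i, by omega⟩ : Fin n) ≠ ⟨i + d + 1, by omega⟩ := by rw [Ne, Fin.mk.injEq]; omega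
      have h2 : (⟨i + d + 1, by omega⟩ : Fin n) ≠ ⟨i + (d + 1) + 1, by omega⟩ := by rw [Ne, Fin.mk.injEq]; omega
      have h3 : (⟨i, by omega⟩ : Fin n) ≠ ⟨i + (d + 1) + 1, by omega⟩ := by rw [Ne, Fin.mk.injEq]; omega
      have e : sw ⟨i, by omega⟩ ⟨i + (d + 1) + 1, hi⟩ w = sw ⟨i + d + 1, by omega⟩ ⟨i + (d + 1) + 1, by omega⟩
          (sw ⟨i, by omega⟩ ⟨i + d + 1, by omega⟩ (sw ⟨i + d + 1, by omega⟩ ⟨i + (d + 1) + 1, by omega⟩ w)) := by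
        funext p
        by_cases e1 : p = ⟨i, by omega⟩
        · subst e1; simp only [sw_l, sw_r, sw_o h1 h3]
        by_cases e2 : p = ⟨i + d + 1, by omega⟩
        · subst e2; simp only [sw_l, sw_r, sw_o h1.symm h2, sw_o h3.symm h2.symm]
        by_cases e3 : p = ⟨i + (d + 1) + 1, by omega⟩
        · subst e3; simp only [sw_l, sw_r, sw_o h1 h3]
        simp [sw_o, e1, e2, e3]
      rw [e]
      exact (h (i + d + 1) (by omega) _).trans ((ih _ _ _).trans (h (i + d + 1) (by omega) _))
  have key2 : ∀ i j : Fin n, i < j → ∀ w, f (sw i j w) = f w := by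
    intro i j hij w
    have := key (j.1 - i.1 - 1) i.1 (by have := j.2; rw [Fin.lt_def] at hij; omega) w
    have e : (⟨i.1 + (j.1 - i.1 - 1) + 1, by have := j.2; rw [Fin.lt_def] at hij; omega⟩ : Fin n) = j := by
      rw [Fin.lt_def] at hij
      ext; simp; omega
    rw [e] at this
    exact this
  rcases lt_trichotomy i j with h1 | h1 | h1
  · exact key2 i j h1 w
  · subst h1; rw [sw_eq rfl]
  · have : sw i j w = sw j i w := by unfold sw; rw [Equiv.swap_comm]
    rw [this]; exact key2 j i h1 w

lemma caseA {A : Type} [Ring A] [Algebra K A] {a : A} {T : ℕ → A} {q : K} [IsSemisimpleRing A]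
    {P : Polynomial K} (hU : Univ q n P a T) (hgen : Hsub K a T n = ⊤)
    (hq : q ≠ 0) (x : K) (hx : P.eval x = 0) (e : ℕ) (he1 : 1 ≤ e) (hen : e ≤ n)
    (he : ∑ j ∈ range e, q ^ j = 0) : False := by
  have hn : 0 < n := by omega
  obtain ⟨χ, c1, c2⟩ := get_chi hU x hx
  have cc : ∀ y : Module.End K ((Fin n → ℕ) → K), Commute (algebraMap K _ x) y := fun y => Algebra.commutes x y
  have HH : HD q n (algebraMap K (Module.End K ((Fin n → ℕ) → K)) x) (TO ℕ n q) := by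
    refine TO_HD q _ ?_ ?_
    · intro h
      rw [mul_assoc, (cc _).eq]
      simp only [mul_assoc]
    · intro i j h1 h2
      exact cc _
  obtain ⟨Φ, f1, f2⟩ := hU _ _ _ HH (by
    rw [Polynomial.aeval_algebraMap_apply, Polynomial.coe_aeval_eq_eval, hx, map_zero])
  let x0 : (Fin n → Bool) × Fin n := (fun r => decide (e ≤ r.1), ⟨0, hn⟩)
  have hx0 : CA q e x0 ≠ 0 := by
    unfold CA
    rw [if_pos]
    · exact pow_ne_zero _ hq
    · constructor
      · have : (univ.filter fun r : Fin n => x0.1 r = false) = univ.filter fun r : Fin n => r.1 < e := by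
          ext r; simp [x0]
        rw [this]
        rw [Fin.card_filter_val_lt]
        omega
      · simp [x0]; omega
  have := obstruct χ Φ _ hgen (fl (CA q e) Wd) ?_ ?_ (fun w => if w = Wd x0 then 1 else 0)
  · apply hx0
    rw [← this]
    show _ = ∑ y, CA q e y * (if Wd y = Wd x0 then 1 else 0)
    rw [sum_eq_single x0]
    · simp
    · intro y _ hy
      by_cases h1 : Wd y = Wd x0
      · have hy2 : ¬ (#(univ.filter fun r => y.1 r = false) = e ∧ y.1 y.2 = false) := by
          rintro ⟨-, h2⟩
          apply hy
          have h3 : y.2 = x0.2 := by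
            have := congrFun h1 y.2
            by_contra h
            simp only [Wd, if_true, h, if_false] at this
            split_ifs at this <;> omega
          refine Prod.ext (funext fun r => ?_) h3
          by_cases hr : r = x0.2
          · rw [hr, ← h3, h2, h3]
            simp [x0]; omega
          · have := congrFun h1 r
            simp only [Wd, h3, hr, if_false] at this
            rcases Bool.eq_false_or_eq_true (y.1 r) with h | h <;>
            rcases Bool.eq_false_or_eq_true (x0.1 r) with h' | h' <;> simp [h, h'] at this ⊢
        unfold CA
        rw [if_neg hy2, zero_mul]
      · simp [h1]
    · simp
  · rintro s (⟨_, rfl⟩ | ⟨j, hj, rfl⟩) f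
    · rw [f1, c1]; simp
    · rw [f2 j hj, c2 j hj, TO_eq q hj]
      refine fl_T _ _ _ _ _ (fun y => (sw ⟨j, by omega⟩ ⟨j + 1, hj⟩ y.1, Equiv.swap ⟨j, by omega⟩ ⟨j + 1, hj⟩ y.2)) ?_ ?_ ?_ f
      · intro y; simp [sw_sw]
      · intro y; exact Wd_sw _ _ _ _
      · intro y h; exact CA_sw q e _ _ rfl y.1 y.2 h
  · intro f hf
    have s1 : ∀ j (hj : j + 1 < n) w, f (sw ⟨j, by omega⟩ ⟨j + 1, hj⟩ w) = f w := by
      intro j hj w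
      have := hf (T j) (Or.inr ⟨j, hj, rfl⟩)
      rw [f2 j hj, c2 j hj, TO_eq q hj] at this
      exact TT_sym q hq _ _ f this w
    have s2 := sym_all f s1
    show ∑ y, CA q e y * f (Wd y) = 0
    rw [Fintype.sum_prod_type]
    refine sum_eq_zero fun u _ => ?_
    by_cases hu : #(univ.filter fun r => u r = false) = e
    · have hne : (univ.filter fun r => u r = false).Nonempty := by
        rw [← card_pos]; omega
      obtain ⟨p0, hp0⟩ := hne
      rw [mem_filter] at hp0
      have h1 : ∀ p, CA q e (u, p) * f (Wd (u, p)) = if u p = false then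
          q ^ #{r ∈ univ.filter (fun r => u r = false) | r < p} * (q ^ Nv (W0 u) * f (Wd (u, p0))) else 0 := by
        intro p
        by_cases hp : u p = false
        · have e1 : Wd (u, p) = sw p p0 (Wd (u, p0)) := by
            rw [← Wd_sw, Equiv.swap_apply_right, sw_eq]
            rw [hp, hp0.2]
          rw [e1, s2, if_pos hp]
          unfold CA
          rw [if_pos ⟨hu, hp⟩, Nv_W u p hp, pow_add]
          ring
        · simp [CA, hp]
      simp only [h1]
      rw [← sum_filter, ← sum_mul, sum_rank, hu, he, zero_mul]
    · refine sum_eq_zero fun p _ => ?_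
      simp [CA, hu]

end caseA
end CycloProof


namespace CycloProof
open Finset Cyclo

section inst
variable (k : Type) [Field k] (m n : ℕ) (v : Fin m → k) (q : k)

/-- quotient map -/
noncomputable def mkC : FreeAlgebra k (Fin n) →ₐ[k] CH k m n v q := RingQuot.mkAlgHom k (Rel k m n v q)

lemma mkC_rel {x y : FreeAlgebra k (Fin n)} (h : Rel k m n v q x y) : mkC k m n v q x = mkC k m n v q y :=
  RingQuot.mkAlgHom_rel k h

/-- generators -/
noncomputable def gA [NeZero n] : CH k m n v q := mkC k m n v q (FreeAlgebra.ι k 0)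

/-- generators -/
noncomputable def gT (i : ℕ) : CH k m n v q :=
  if h : i + 1 < n then mkC k m n v q (FreeAlgebra.ι k ⟨i + 1, h⟩) else 0

lemma gT_eq {i : ℕ} (h : i + 1 < n) : gT k m n v q i = mkC k m n v q (FreeAlgebra.ι k ⟨i + 1, h⟩) := dif_pos h

/-- the polynomial -/
noncomputable def Pv : Polynomial k := ∏ j, (Polynomial.X - Polynomial.C (v j))

lemma aeval_Pv {B : Type} [Ring B] [Algebra k B] (b : B) :
    Polynomial.aeval b (Pv k m v) = (List.ofFn fun j : Fin m => b - algebraMap k B (v j)).prod := by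
  rw [Pv, ← List.prod_ofFn, map_list_prod, List.map_ofFn]
  congr 2
  funext j
  simp

lemma gA_root [NeZero n] : Polynomial.aeval (gA k m n v q) (Pv k m v) = 0 := by
  rw [aeval_Pv]
  have := mkC_rel k m n v q (Rel.cyclo 0 rfl)
  rw [map_list_prod, List.map_ofFn, map_zero] at this
  rw [← this]
  congr 2
  funext j
  simp [gA]

lemma HDgen [NeZero n] : HD q n (gA k m n v q) (gT k m n v q) where
  quad i h := by
    rw [gT_eq k m n v q h]
    have := mkC_rel k m n v q (Rel.quad ⟨i + 1, h⟩ (by simp))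
    rw [map_mul, map_sub, map_add, map_one, map_zero, AlgHom.commutes, sub_mul, mul_add, mul_add, mul_one,
      mul_one, ← Algebra.smul_def, Algebra.algebraMap_eq_smul_one] at this
    generalize mkC k m n v q (FreeAlgebra.ι k ⟨i + 1, h⟩) = t at *
    rw [sub_smul, one_smul]
    rw [← sub_eq_zero, ← this]
    abel
  braid0 h := by
    rw [gT_eq k m n v q (by omega), gA]
    have := mkC_rel k m n v q (Rel.braid0 0 ⟨1, h⟩ rfl rfl)
    simpa only [map_mul] using this
  commA i h1 h := by
    rw [gT_eq k m n v q h, gA]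
    have := mkC_rel k m n v q (Rel.comm 0 ⟨i + 1, h⟩ (by simp; omega))
    simp only [map_mul] at this
    exact this
  comm i j h1 h := by
    rw [gT_eq k m n v q h, gT_eq k m n v q (by omega)]
    have := mkC_rel k m n v q (Rel.comm ⟨i + 1, by omega⟩ ⟨j + 1, h⟩ (by simp; omega))
    simp only [map_mul] at this
    exact this
  braid i h := by
    rw [gT_eq k m n v q (by omega), gT_eq k m n v q (by omega)]
    have := mkC_rel k m n v q (Rel.braid ⟨i + 1, by omega⟩ ⟨i + 1 + 1, h⟩ (by simp) rfl)
    simpa only [map_mul] using this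

lemma mkC_surj : Function.Surjective (mkC k m n v q) := RingQuot.mkAlgHom_surjective k _

lemma hgen [NeZero n] : Hsub k (gA k m n v q) (gT k m n v q) n = ⊤ := by
  rw [eq_top_iff]
  intro x _
  obtain ⟨y, rfl⟩ := mkC_surj k m n v q x
  induction y using FreeAlgebra.induction with
  | grade0 r => rw [AlgHom.commutes]; exact Subalgebra.algebraMap_mem _ r
  | grade1 i =>
    by_cases hi : i.1 = 0
    · have : i = 0 := Fin.ext hi
      subst this
      exact a_mem (NeZero.one_le)
    · obtain ⟨j, hj⟩ : ∃ j, i.1 = j + 1 := ⟨i.1 - 1, by omega⟩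
      have hj' : j + 1 < n := hj ▸ i.2
      have : i = ⟨j + 1, hj'⟩ := Fin.ext hj
      rw [this, ← gT_eq k m n v q hj']
      exact T_mem hj'
  | mul a b h1 h2 => rw [map_mul]; exact Subalgebra.mul_mem _ (h1 trivial) (h2 trivial)
  | add a b h1 h2 => rw [map_add]; exact Subalgebra.add_mem _ (h1 trivial) (h2 trivial)

lemma huniv [NeZero n] : Univ q n (Pv k m v) (gA k m n v q) (gT k m n v q) := by
  intro B _ _ b S H hb
  let g : Fin n → B := fun i => if i.1 = 0 then b else S (i.1 - 1)
  have g0 : ∀ i : Fin n, i.1 = 0 → g i = b := fun i hi => if_pos hi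
  have g1 : ∀ i : Fin n, 1 ≤ i.1 → g i = S (i.1 - 1) := fun i hi => if_neg (by omega)
  have hr : ∀ ⦃x y⦄, Rel k m n v q x y → FreeAlgebra.lift k g x = FreeAlgebra.lift k g y := by
    intro x y h
    cases h with
    | cyclo i hi =>
      rw [map_list_prod, List.map_ofFn, map_zero, ← hb, aeval_Pv]
      congr 2
      funext j
      simp [g0 i hi]
    | quad i hi =>
      have := H.quad (i.1 - 1) (by have := i.2; omega)
      rw [map_mul, map_sub, map_add, map_one, map_zero, AlgHom.commutes, FreeAlgebra.lift_ι_apply, g1 i hi]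
      rw [sub_mul, mul_add, mul_add, mul_one, mul_one, ← Algebra.smul_def, Algebra.algebraMap_eq_smul_one, this,
        sub_smul, one_smul]
      abel
    | braid0 i j hi hj =>
      have := H.braid0 (by have := j.2; omega)
      simp only [map_mul, FreeAlgebra.lift_ι_apply, g0 i hi, g1 j (by omega), hj, Nat.sub_self]
      exact this
    | comm i j h =>
      simp only [map_mul, FreeAlgebra.lift_ι_apply]
      rw [g1 j (by omega)]
      by_cases hi : i.1 = 0
      · rw [g0 i hi]
        exact H.commA _ (by omega) (by have := j.2; omega)
      · rw [g1 i (by omega)]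
        exact H.comm _ _ (by omega) (by have := j.2; omega)
    | braid i j hi hj =>
      simp only [map_mul, FreeAlgebra.lift_ι_apply]
      rw [g1 i hi, g1 j (by omega), show j.1 - 1 = (i.1 - 1) + 1 by omega]
      exact H.braid _ (by have := j.2; omega)
  let Φ : CH k m n v q →ₐ[k] B := RingQuot.liftAlgHom k ⟨FreeAlgebra.lift k g, hr⟩
  have hΦ : ∀ x, Φ (mkC k m n v q x) = FreeAlgebra.lift k g x := fun x =>
    RingQuot.liftAlgHom_mkAlgHom_apply k _ hr x
  refine ⟨Φ, ?_, fun i hi => ?_⟩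
  · rw [gA, hΦ, FreeAlgebra.lift_ι_apply]; exact g0 _ rfl
  · rw [gT_eq k m n v q hi, hΦ, FreeAlgebra.lift_ι_apply]; exact g1 _ (by simp)

theorem forward [NeZero m] [NeZero n] (hq : q ≠ 0) (hs : IsSemisimpleRing (CH k m n v q)) :
    (∀ i : ℤ, i.natAbs < n → ∀ j j' : Fin m, j ≠ j' → q ^ i * v j - v j' ≠ 0) ∧
        (∀ i : ℕ, 1 ≤ i → i < n → (∑ j ∈ Finset.range (i + 1), q ^ j) ≠ 0) := by
  have hU := huniv k m n v q
  have hg := hgen k m n v q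
  have hdvd : ∀ j j' : Fin m, j ≠ j' →
      (Polynomial.X - Polynomial.C (v j)) * (Polynomial.X - Polynomial.C (v j')) ∣ Pv k m v := by
    intro j j' h
    rw [Pv, ← mul_prod_erase univ _ (mem_univ j), ← mul_prod_erase (univ.erase j) _ (mem_erase.2 ⟨h.symm, mem_univ j'⟩), ← mul_assoc]
    exact dvd_mul_right _ _
  constructor
  · intro i hi j j' hjj h
    rw [sub_eq_zero] at h
    rcases le_total 0 i with h0 | h0
    · obtain ⟨d, rfl⟩ := Int.eq_ofNat_of_zero_le h0
      rw [zpow_natCast] at h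
      exact caseB hU hg hq (v j) (v j') d (by simpa using hi) (by rw [mul_comm]; exact h) (hdvd j j' hjj)
    · obtain ⟨d, hd⟩ := Int.eq_ofNat_of_zero_le (neg_nonneg.2 h0)
      have hid : i = -(d : ℤ) := by omega
      subst hid
      refine caseB hU hg hq (v j') (v j) d (by simpa using hi) ?_ (hdvd j' j hjj.symm)
      rw [← h, zpow_neg, zpow_natCast]
      field_simp
  · intro i h1 hi h
    refine caseA hU hg hq (v 0) ?_ (i + 1) (by omega) (by omega) h
    rw [Pv, Polynomial.eval_prod]
    exact prod_eq_zero (mem_univ 0) (by simp)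

theorem backward [NeZero m] [NeZero n] (hq : q ≠ 0)
    (h1 : ∀ i : ℤ, i.natAbs < n → ∀ j j' : Fin m, j ≠ j' → q ^ i * v j - v j' ≠ 0)
    (h2 : ∀ i : ℕ, 1 ≤ i → i < n → (∑ j ∈ Finset.range (i + 1), q ^ j) ≠ 0) :
    IsSemisimpleRing (CH k m n v q) := by
  classical
  have hn : 1 ≤ n := NeZero.one_le
  have hm : m ≠ 0 := NeZero.ne m
  have hv : ∀ j j' : Fin m, j ≠ j' → v j ≠ v j' := by
    intro j j' h h'
    exact h1 0 (by simp; omega) j j' h (by simp [h'])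
  have H := HDgen k m n v q
  have hr := gA_root k m n v q
  have hg := hgen k m n v q
  by_cases hq1 : q = 1
  · subst hq1
    refine semisimple_one hm H v hv hr ?_ hg
    intro i hi hin
    rcases Nat.lt_or_ge i 2 with h | h
    · have : i = 1 := by omega
      subst this; simp
    · have := h2 (i - 1) (by omega) (by omega)
      rw [show i - 1 + 1 = i by omega] at this
      simpa using this
  · obtain ⟨E, e1, e2, e3, e4, e5, e6⟩ := idem hm v hv _ hr
    let D : Dat k (CH k m n v q) m n :=
      { q := q, v := v, a := gA k m n v q, T := gT k m n v q,
        z := ∑ j, (if v j = 0 then (1 : k) else 0) • E j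
        H := H, hq := hq, hn := hn
        hbr := by
          intro d hd hdn hqd
          have hs : (∑ j ∈ Finset.range d, q ^ j) ≠ 0 := by
            rcases Nat.lt_or_ge d 2 with h | h
            · have : d = 1 := by omega
              subst this; simp
            · have := h2 (d - 1) (by omega) (by omega)
              rwa [show d - 1 + 1 = d by omega] at this
          have := geom_sum_mul q d
          rw [hqd, sub_self] at this
          rcases mul_eq_zero.1 this with h | h
          · exact hs h
          · exact hq1 (sub_eq_zero.1 h)
        hsep := fun i hi j j' hj => sub_ne_zero.1 (h1 i hi j j' hj)
        hz1 := by
          rw [sum_mul]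
          refine sum_eq_zero fun j _ => ?_
          rw [smul_mul_assoc, e4]
          split_ifs with h
          · rw [h]; simp
          · simp
        hz2 := by
          rw [mul_sum]
          refine sum_eq_zero fun j _ => ?_
          rw [mul_smul_comm, e3]
          split_ifs with h
          · rw [h]; simp
          · simp
        hz := Subalgebra.sum_mem _ fun j _ => Subalgebra.smul_mem _ (e1 j) _
        dec0 := by
          intro x
          refine ⟨E, by rw [← sum_mul, e2, one_mul], fun j => ⟨e1 j, ?_, ?_⟩⟩
          · rw [← mul_assoc, e3, smul_mul_assoc]
          · rw [← mul_assoc, sum_mul, sum_eq_single j]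
            · rw [smul_mul_assoc, e5, smul_mul_assoc]
              simp [zeta]
            · intro i _ hi
              rw [smul_mul_assoc, e6 i j hi, smul_zero]
            · simp }
    exact D.semisimple hg

end inst
end CycloProof

namespace Cyclo
variable (k : Type) [Field k] (m n : ℕ) (v : Fin m → k) (q : k)

/-- **Ariki(–Koike).**  `H_n(v_1,…,v_m;q)` is semisimple if and only if the
elements `q^i v_j − v_k` (`|i| < n`, `j ≠ k`) and `1 + q + ⋯ + q^i` (`1 ≤ i < n`) are all
nonzero in `k`. -/
theorem semisimple_iff [NeZero m] [NeZero n] (hq : q ≠ 0) :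
    IsSemisimpleRing (CH k m n v q) ↔
      ((∀ i : ℤ, i.natAbs < n → ∀ j j' : Fin m, j ≠ j' → q ^ i * v j - v j' ≠ 0) ∧
        (∀ i : ℕ, 1 ≤ i → i < n → (∑ j ∈ Finset.range (i + 1), q ^ j) ≠ 0)) := by
  exact ⟨CycloProof.forward k m n v q hq, fun h => CycloProof.backward k m n v q hq h.1 h.2⟩

end Cyclo
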